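/- For every first-order formula φ in the language of rings with m free variables there exists a real constant C > 0 such that for every prime p and k ≥ 1, writing Q = p^k and N for the number of m-tuples over GaloisField p k at which φ is satisfied, either N ≤ C or N ≥ Q/C. -/

import Mathlib

/-!
If no constant works for `φ`, an ultraproduct `K` of finite fields contains an infinite set
defined by `φ` whose cardinality is a vanishing proportion of that of `K`. Embed `K` in the
ultraproduct of the algebraic closures, where it is the fixed field of the ultraproduct of the
Frobenius maps. Isomorphisms between countable algebraically closed Frobenius-stable subfields
form a back-and-forth system, so they preserve the satisfaction of `φ` in `K`. Some solution has a
coordinate outside a given countable subfield, and the extension step may send that coordinate to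
any element of `K` avoiding a negligible set. That set may be taken to contain the projection of
the solution set, which is a contradiction.

The extension step needs, on an absolutely irreducible curve over `𝔽_q` covering the line, many
points with a prescribed Frobenius action. For each element of the covering group, Stepanov's method
bounds the number of such points from above by `q` up to lower order terms. All elements together
account for every point of the curve over `𝔽_q`-rational points of the line, so no class can fall
far short of its share.
-/


open FirstOrder

/-- The number of `k`-tuples of a (finite) ring `K` satisfying the ring-language formula `φ`,
where `K` is viewed as a structure for the language of rings via `compatibleRingOfRing`. -/
noncomputable def ringFormulaCount {k : ℕ} (φ : Language.ring.Formula (Fin k))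
    (K : Type*) [Add K] [Mul K] [Neg K] [One K] [Zero K] : ℕ :=
  letI := Ring.compatibleRingOfRing K
  Nat.card {x : Fin k → K // φ.Realize x}

universe u

namespace Felgner

open Polynomial
open Function (IsPeriodicPt Semiconj periodicPts)
open scoped PowerSeries Polynomial.Bivariate

section Norm

variable {R S : Type*} [CommRing R] [CommRing S] [IsDomain S]

lemma roots_eq_map_univ {ι : Type*} [Fintype ι] {f : S[X]} (hf : f.Monic) {η : ι → S}
    (hinj : Function.Injective η) (hroot : ∀ l, f.IsRoot (η l))
    (hcard : Fintype.card ι = f.natDegree) : f.roots = Finset.univ.val.map η := by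
  refine (Multiset.eq_of_le_of_card_le ?_ ?_).symm
  · rw [Multiset.le_iff_subset (Finset.univ.nodup.map hinj)]
    intro x hx
    obtain ⟨l, -, rfl⟩ := Multiset.mem_map.mp hx
    exact (mem_roots hf.ne_zero).mpr (hroot l)
  · simpa [hcard] using card_roots' f

lemma map_resultant_eq_prod_eval₂ {ι : Type*} [Fintype ι] {f : R[X]} (hf : f.Monic)
    (φ : R →+* S) {η : ι → S} (hinj : Function.Injective η) (hroot : ∀ l, f.eval₂ φ (η l) = 0)
    (hcard : Fintype.card ι = f.natDegree) (g : R[X]) :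
    φ (resultant f g) = ∏ l, g.eval₂ φ (η l) := by
  have hdeg : (f.map φ).natDegree = f.natDegree := hf.natDegree_map φ
  have hroots : (f.map φ).roots = Finset.univ.val.map η :=
    roots_eq_map_univ (hf.map φ) hinj (fun l ↦ by rw [IsRoot, eval_map, hroot])
      (hcard.trans hdeg.symm)
  have hsplits : (f.map φ).Splits := by
    rw [splits_iff_card_roots, hroots]
    simp [hcard, hdeg]
  rw [← resultant_map_map, ← hdeg, resultant_eq_prod_eval _ _ _ natDegree_map_le hsplits, hroots,
    (hf.map φ).leadingCoeff]
  simp [eval_map]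

end Norm

section Weight

variable {k : Type*} [CommRing k]

/-- The bivariate polynomials of weighted degree at most `N`, where `X` has weight `1` and `Y` has
weight `e`. -/
def weightLE (e N : ℕ) : Submodule k k[X][Y] where
  carrier := {G | ∀ m i, N < i + e * m → (G.coeff m).coeff i = 0}
  add_mem' hG hH m i h := by simp [hG m i h, hH m i h]
  zero_mem' := by simp
  smul_mem' c G hG m i h := by simp [hG m i h]

variable {e N N' : ℕ} {G H : k[X][Y]}

lemma mem_weightLE_iff :
    G ∈ weightLE e N ↔ ∀ m i, (G.coeff m).coeff i ≠ 0 → i + e * m ≤ N :=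
  forall₂_congr fun _ _ ↦ by rw [← not_lt, not_imp_not]

lemma weightLE_mono (hN : N ≤ N') : weightLE (k := k) e N ≤ weightLE e N' :=
  fun _ hG m i h ↦ hG m i (hN.trans_lt h)

lemma mul_mem_weightLE (hG : G ∈ weightLE e N) (hH : H ∈ weightLE e N') :
    G * H ∈ weightLE e (N + N') := by
  intro m i h
  rw [coeff_mul, finsetSum_coeff]
  refine Finset.sum_eq_zero fun ⟨m₁, m₂⟩ hm ↦ ?_
  rw [coeff_mul]
  refine Finset.sum_eq_zero fun ⟨i₁, i₂⟩ hi ↦ ?_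
  rw [Finset.HasAntidiagonal.mem_antidiagonal] at hm hi
  dsimp only at hm hi ⊢
  rcases lt_or_ge N (i₁ + e * m₁) with hlt | hge
  · rw [hG _ _ hlt, zero_mul]
  · rw [hH _ _ (by subst hm hi; linarith [mul_add e m₁ m₂]), mul_zero]

lemma C_mem_weightLE {P : k[X]} (hP : P.natDegree ≤ N) : C P ∈ weightLE e N := by
  intro m i h
  obtain rfl | hm := eq_or_ne m 0
  · rw [coeff_C_zero]
    exact coeff_eq_zero_of_natDegree_lt (by omega)
  · rw [coeff_C_of_ne_zero hm, coeff_zero]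

lemma pow_mem_weightLE (hG : G ∈ weightLE e N) (n : ℕ) : G ^ n ∈ weightLE e (n * N) := by
  induction n with
  | zero => simpa using C_mem_weightLE (natDegree_one (R := k)).le
  | succ n ih =>
    rw [pow_succ, add_mul, one_mul]
    exact mul_mem_weightLE ih hG

lemma natDegree_coeff_add_le (hG : G ∈ weightLE e N) {m : ℕ} (hm : G.coeff m ≠ 0) :
    (G.coeff m).natDegree + e * m ≤ N :=
  mem_weightLE_iff.mp hG m _ (by rwa [coeff_natDegree, leadingCoeff_ne_zero])

lemma derivative_mem_weightLE (hG : G ∈ weightLE e N) : derivative G ∈ weightLE e N := by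
  intro m i h
  rw [coeff_derivative, ← Nat.cast_succ, ← C_eq_natCast, coeff_mul_C,
    hG (m + 1) i (by linarith [mul_add e m 1]), zero_mul]

/-- The partial derivative with respect to the inner variable `X`. -/
noncomputable def derivX : Derivation k k[X][Y] k[X][Y] :=
  PolynomialModule.equivPolynomialSelf.toLinearMap.compDer (derivative' (R := k)).mapCoeffs

lemma coeff_derivX (G : k[X][Y]) (m : ℕ) : (derivX G).coeff m = derivative (G.coeff m) := rfl

lemma derivX_monomial (n : ℕ) (P : k[X]) :
    derivX (monomial n P) = monomial n (derivative P) := by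
  ext m : 1
  simp only [coeff_derivX, coeff_monomial, apply_ite (derivative (R := k)), derivative_zero]

lemma derivX_mem_weightLE (hG : G ∈ weightLE e N) : derivX G ∈ weightLE e N := by
  intro m i h
  rw [coeff_derivX, coeff_derivative, hG m (i + 1) (by omega), zero_mul]

lemma natDegree_det_le_of_potential {n : Type*} [Fintype n] [DecidableEq n]
    (A : Matrix n n k[X]) (u v : n → ℕ) (h : ∀ i j, A i j ≠ 0 → (A i j).natDegree + u i ≤ v j) :
    A.det.natDegree ≤ ∑ j, v j - ∑ i, u i := by
  rw [Matrix.det_apply]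
  refine natDegree_sum_le_of_forall_le _ _ fun π _ ↦ (natDegree_smul_le _ _).trans ?_
  by_cases hzero : ∃ j ∈ Finset.univ, A (π j) j = 0
  · obtain ⟨j, hj, hzero⟩ := hzero
    rw [Finset.prod_eq_zero (f := fun i ↦ A (π i) i) hj hzero, natDegree_zero]
    exact Nat.zero_le _
  push Not at hzero
  have hsum := Finset.sum_le_sum fun j hj ↦ h (π j) j (hzero j hj)
  rw [Finset.sum_add_distrib, Equiv.sum_comp π u] at hsum
  exact (natDegree_prod_le _ _).trans (Nat.le_sub_of_add_le hsum)

-- The potential of row `i` is `e * i`; column `j` gets `e * j`, and `N` more if it carries the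
-- coefficients of `G`.
lemma natDegree_resultant_le {f : k[X][Y]} (hf : f ∈ weightLE e (e * f.natDegree))
    (hG : G ∈ weightLE e N) : (resultant f G).natDegree ≤ f.natDegree * N := by
  set d := f.natDegree
  set n := G.natDegree
  let v : Fin (d + n) → ℕ := fun j ↦ j.addCases (fun _ ↦ N) fun _ ↦ 0
  have hentry (i j : Fin (d + n)) (hij : sylvester f G d n i j ≠ 0) :
      (sylvester f G d n i j).natDegree + e * i ≤ v j + e * j := by
    induction j using Fin.addCases with
    | left j =>
      simp only [sylvester, Matrix.of_apply, Fin.addCases_left, v, Fin.val_castAdd] at hij ⊢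
      split_ifs at hij ⊢ with h
      · obtain ⟨t, ht⟩ := Nat.exists_eq_add_of_le h.1
        rw [ht, Nat.add_sub_cancel_left] at hij ⊢
        linarith [natDegree_coeff_add_le hG hij, mul_add e j t]
      · exact absurd rfl hij
    | right j =>
      simp only [sylvester, Matrix.of_apply, Fin.addCases_right, v, Fin.val_natAdd] at hij ⊢
      split_ifs at hij ⊢ with h
      · obtain ⟨t, ht⟩ := Nat.exists_eq_add_of_le h.1
        rw [ht, Nat.add_sub_cancel_left] at hij ⊢
        linarith [natDegree_coeff_add_le hf hij, mul_add e j t, mul_add e d j]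
      · exact absurd rfl hij
  have hv : ∑ j, v j = d * N := by simp [v, Fin.sum_univ_add]
  have hdet := natDegree_det_le_of_potential _ _ _ hentry
  rwa [Finset.sum_add_distrib, Nat.add_sub_cancel_right, hv] at hdet

end Weight

section Branch

variable {k : Type*} [Field k]

/-- The expansion of a polynomial in powers of the uniformizer `X - b`. -/
noncomputable def expandAt (b : k) : k[X] →ₐ[k] k⟦X⟧ :=
  aeval (PowerSeries.C b + PowerSeries.X)

/-- The value of a bivariate polynomial along the parametrized branch `X = b + T`, `Y = η(T)`. -/
noncomputable def alongBranch (b : k) (η : k⟦X⟧) : k[X][Y] →ₐ[k] k⟦X⟧ :=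
  aevalAeval (PowerSeries.C b + PowerSeries.X) η

lemma eval₂_expandAt (b : k) (η : k⟦X⟧) (G : k[X][Y]) :
    G.eval₂ (expandAt b : k[X] →+* k⟦X⟧) η = alongBranch b η G := by
  have : eval₂RingHom (expandAt b : k[X] →+* k⟦X⟧) η = alongBranch b η := by
    ext <;> simp [alongBranch, expandAt]
  exact congr($this G)

lemma expandAt_eq_taylor (b : k) (P : k[X]) : expandAt b P = (taylor b P : k[X]) := by
  have : expandAt b = (coeToPowerSeries.algHom k).comp (taylorAlgHom b) := by
    ext1
    simp [expandAt, add_comm, coeToPowerSeries.algHom_apply]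
  simp [this, coeToPowerSeries.algHom_apply]

lemma expandAt_injective (b : k) : Function.Injective (expandAt b) := by
  intro P Q h
  rw [expandAt_eq_taylor, expandAt_eq_taylor] at h
  exact taylor_injective b (coe_injective k h)

lemma X_sub_C_pow_dvd_of_expandAt {b : k} {P : k[X]} {n : ℕ}
    (h : (PowerSeries.X : k⟦X⟧) ^ n ∣ expandAt b P) : (X - C b) ^ n ∣ P := by
  rw [expandAt_eq_taylor, PowerSeries.X_pow_dvd_iff] at h
  rw [X_sub_C_pow_dvd_iff, ← taylor_apply, Polynomial.X_pow_dvd_iff]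
  exact fun m hm ↦ by simpa only [coeff_coe] using h m hm

lemma constantCoeff_alongBranch (b : k) (η : k⟦X⟧) (G : k[X][Y]) :
    PowerSeries.constantCoeff (alongBranch b η G) =
      G.evalEval b (PowerSeries.constantCoeff η) := by
  have : (PowerSeries.constantCoeff (R := k)).comp (alongBranch b η : k[X][Y] →+* k⟦X⟧) =
      evalEvalRingHom b (PowerSeries.constantCoeff η) := by
    ext <;> simp [alongBranch]
  exact congr($this G)

lemma isUnit_alongBranch_iff {b : k} {η : k⟦X⟧} {G : k[X][Y]} :
    IsUnit (alongBranch b η G) ↔ G.evalEval b (PowerSeries.constantCoeff η) ≠ 0 := by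
  rw [PowerSeries.isUnit_iff_constantCoeff, constantCoeff_alongBranch, isUnit_iff_ne_zero]

-- Hensel's lemma for `k⟦X⟧`, applied to `f(b + T, Y)`.
lemma exists_branch_through {f : k[X][Y]} (hf : f.Monic) {b w : k} (hroot : f.evalEval b w = 0)
    (hsep : (derivative f).evalEval b w ≠ 0) :
    ∃ η : k⟦X⟧, PowerSeries.constantCoeff η = w ∧ alongBranch b η f = 0 := by
  have hensel : HenselianRing k⟦X⟧ (Ideal.span {PowerSeries.X}) := inferInstance
  let φ : k[X] →+* k⟦X⟧ := expandAt b
  have heval (η : k⟦X⟧) (G : k[X][Y]) : (G.map φ).eval η = alongBranch b η G := by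
    rw [eval_map, eval₂_expandAt]
  obtain ⟨η, hη, hηw⟩ := hensel.is_henselian (f.map φ) (hf.map φ) (PowerSeries.C w)
    (by rw [Ideal.mem_span_singleton, PowerSeries.X_dvd_iff, heval, constantCoeff_alongBranch]
        simpa using hroot)
    (by rw [derivative_map, heval]
        exact (isUnit_alongBranch_iff.mpr (by simpa using hsep)).map _)
  rw [Ideal.mem_span_singleton, PowerSeries.X_dvd_iff, map_sub, PowerSeries.constantCoeff_C,
    sub_eq_zero] at hηw
  exact ⟨η, hηw, by rw [← heval]; exact hη⟩

/-- `IsBranchFamily f b η`: the power series `η l` are all the branches of the curve `f = 0` above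
`X = b`, and they pass through distinct points. In particular `f` is unramified above `b`. -/
structure IsBranchFamily {ι : Type*} [Fintype ι] (f : k[X][Y]) (b : k) (η : ι → k⟦X⟧) : Prop where
  root : ∀ l, alongBranch b (η l) f = 0
  injective : Function.Injective fun l ↦ PowerSeries.constantCoeff (η l)
  card_eq : Fintype.card ι = f.natDegree

lemma IsBranchFamily.evalEval_eq_zero {ι : Type*} [Fintype ι] {f : k[X][Y]} {b : k} {η : ι → k⟦X⟧}
    (hη : IsBranchFamily f b η) (l : ι) : f.evalEval b (PowerSeries.constantCoeff (η l)) = 0 := by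
  rw [← constantCoeff_alongBranch, hη.root, map_zero]

/-- The line `X = b` meets the curve `f = 0` transversally: `f(b, Y)` has no multiple root. -/
def IsUnramifiedAt (f : k[X][Y]) (b : k) : Prop :=
  ∀ w, f.evalEval b w = 0 → (derivative f).evalEval b w ≠ 0

lemma nodup_roots_map_evalRingHom {f : k[X][Y]} (hf : f.Monic) {b : k}
    (hsep : IsUnramifiedAt f b) :
    (f.map (evalRingHom b)).roots.Nodup := by
  classical
  refine Multiset.nodup_iff_count_le_one.mpr fun w ↦ ?_
  rw [count_roots]
  by_contra! hlt
  obtain ⟨hw, hw'⟩ := (one_lt_rootMultiplicity_iff_isRoot (hf.map _).ne_zero).mp hlt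
  rw [derivative_map] at hw'
  rw [IsRoot, map_evalRingHom_eval] at hw hw'
  exact hsep w hw hw'

open Classical in
/-- The finite set of `w` such that `(b, w)` lies on the curve `f = 0`, for `f` monic in `Y`. -/
noncomputable def fiber (f : k[X][Y]) (b : k) : Finset k := (f.map (evalRingHom b)).roots.toFinset

lemma mem_fiber {f : k[X][Y]} (hf : f.Monic) {b w : k} : w ∈ fiber f b ↔ f.evalEval b w = 0 := by
  classical
  rw [fiber, Multiset.mem_toFinset, mem_roots (hf.map _).ne_zero, IsRoot, map_evalRingHom_eval]

lemma card_fiber_le {f : k[X][Y]} (b : k) : (fiber f b).card ≤ f.natDegree := by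
  classical
  exact (Multiset.toFinset_card_le _).trans ((card_roots' _).trans natDegree_map_le)

lemma card_fiber [IsAlgClosed k] {f : k[X][Y]} (hf : f.Monic) {b : k} (hsep : IsUnramifiedAt f b) :
    (fiber f b).card = f.natDegree := by
  classical
  rw [fiber, Multiset.toFinset_card_of_nodup (nodup_roots_map_evalRingHom hf hsep),
    splits_iff_card_roots.mp (IsAlgClosed.splits _), hf.natDegree_map]

lemma exists_isBranchFamily [IsAlgClosed k] {f : k[X][Y]} (hf : f.Monic) {b : k}
    (hsep : IsUnramifiedAt f b) :
    ∃ η : Fin f.natDegree → k⟦X⟧, IsBranchFamily f b η ∧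
      ∀ w, f.evalEval b w = 0 → ∃ l, PowerSeries.constantCoeff (η l) = w := by
  let e := (Finset.equivFinOfCardEq (card_fiber hf hsep)).symm
  have hroot (l) : f.evalEval b (e l) = 0 := (mem_fiber hf).mp (e l).2
  choose η hη hηf using fun l ↦ exists_branch_through hf (hroot l) (hsep _ (hroot l))
  refine ⟨η, ⟨hηf, fun l l' h ↦ ?_, Fintype.card_fin _⟩, fun w hw ↦ ?_⟩
  · simp only [hη] at h
    exact e.injective (Subtype.ext h)
  · exact ⟨e.symm ⟨w, (mem_fiber hf).mpr hw⟩, by simp [hη]⟩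

-- `f` is the minimal polynomial of the branch over the integrally closed domain `k[X]`.
lemma dvd_of_alongBranch_eq_zero {f : k[X][Y]} (hf : f.Monic) (hirr : Irreducible f) {b : k}
    {η : k⟦X⟧} (hη : alongBranch b η f = 0) {G : k[X][Y]} (hG : alongBranch b η G = 0) : f ∣ G := by
  let _ := (expandAt b : k[X] →+* k⟦X⟧).toAlgebra
  have : FaithfulSMul k[X] k⟦X⟧ :=
    (faithfulSMul_iff_algebraMap_injective _ _).mpr (expandAt_injective b)
  rw [← eval₂_expandAt] at hη hG
  have hint : IsIntegral k[X] η := ⟨f, hf, hη⟩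
  have hassoc : Associated f (minpoly k[X] η) :=
    (hirr.dvd_iff.mp (minpoly.isIntegrallyClosed_dvd hint hη)).resolve_left (minpoly.not_isUnit _ _)
  exact hassoc.dvd_iff_dvd_left.mpr (minpoly.isIntegrallyClosed_dvd hint hG)

end Branch

section ZeroCount

/-- A plane curve `f = 0` in the shape the counting argument needs: `f` is irreducible, monic in `Y`
of degree `d`, and of weighted degree at most `e * d`. -/
structure IsWeightedCurve {k : Type*} [CommRing k] (e : ℕ) (f : k[X][Y]) : Prop where
  monic : f.Monic
  irreducible : Irreducible f
  mem_weightLE : f ∈ weightLE e (e * f.natDegree)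

lemma IsWeightedCurve.natDegree_pos {k : Type*} [CommRing k] {e : ℕ} {f : k[X][Y]}
    (hf : IsWeightedCurve e f) : 0 < f.natDegree :=
  hf.monic.natDegree_pos.mpr fun h1 ↦ hf.irreducible.not_isUnit (h1 ▸ isUnit_one)

variable {k ι : Type*} [Field k] [Fintype ι] {f : k[X][Y]} {b : k} {η : ι → k⟦X⟧}

lemma IsBranchFamily.expandAt_resultant (hη : IsBranchFamily f b η) (hf : f.Monic) (G : k[X][Y]) :
    expandAt b (resultant f G) = ∏ l, alongBranch b (η l) G := by
  simp_rw [← eval₂_expandAt]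
  exact map_resultant_eq_prod_eval₂ hf (expandAt b : k[X] →+* k⟦X⟧)
    (fun l l' h ↦ hη.injective congr(PowerSeries.constantCoeff $h))
    (fun l ↦ by rw [eval₂_expandAt, hη.root]) hη.card_eq G

lemma IsBranchFamily.resultant_ne_zero (hη : IsBranchFamily f b η) (hf : f.Monic)
    (hirr : Irreducible f) {G : k[X][Y]} (hG : ¬ f ∣ G) : resultant f G ≠ 0 := by
  intro hzero
  have hprod := hη.expandAt_resultant hf G
  rw [hzero, map_zero] at hprod
  obtain ⟨l, -, hl⟩ := Finset.prod_eq_zero_iff.mp hprod.symm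
  exact hG (dvd_of_alongBranch_eq_zero hf hirr (hη.root l) hl)

lemma IsBranchFamily.X_sub_C_pow_dvd_resultant (hη : IsBranchFamily f b η) (hf : f.Monic)
    {G : k[X][Y]} {n : ι → ℕ} (hn : ∀ l, (PowerSeries.X : k⟦X⟧) ^ n l ∣ alongBranch b (η l) G) :
    (X - C b) ^ (∑ l, n l) ∣ resultant f G := by
  refine X_sub_C_pow_dvd_of_expandAt ?_
  rw [hη.expandAt_resultant hf, ← Finset.prod_pow_eq_pow_sum]
  exact Finset.prod_dvd_prod_of_dvd _ _ fun l _ ↦ hn l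

-- The vanishing orders add up to a zero of the resultant of order larger than its degree.
lemma IsWeightedCurve.dvd_of_vanishing {e N : ℕ} (hf : IsWeightedCurve e f)
    (hη : IsBranchFamily f b η) {G : k[X][Y]} (hG : G ∈ weightLE e N) {n : ι → ℕ}
    (hn : ∀ l, (PowerSeries.X : k⟦X⟧) ^ n l ∣ alongBranch b (η l) G)
    (hN : f.natDegree * N < ∑ l, n l) : f ∣ G := by
  by_contra hdvd
  have hle := natDegree_le_of_dvd (hη.X_sub_C_pow_dvd_resultant hf.monic hn)
    (hη.resultant_ne_zero hf.monic hf.irreducible hdvd)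
  rw [natDegree_pow, natDegree_X_sub_C, mul_one] at hle
  exact (hle.trans (natDegree_resultant_le hf.mem_weightLE hG)).not_gt hN

end ZeroCount

section TangentDerivation

variable {k : Type*} [Field k] {f G : k[X][Y]} {b : k} {η : k⟦X⟧}

/-- The derivation `∂f/∂Y · ∂/∂X - ∂f/∂X · ∂/∂Y`, which annihilates `f` and so is tangent to the
curve `f = 0`. -/
noncomputable def tangentDerivation (f : k[X][Y]) : Derivation k k[X][Y] k[X][Y] :=
  derivative f • derivX - derivX f • (derivative' (R := k[X])).restrictScalars k

lemma tangentDerivation_apply (f G : k[X][Y]) :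
    tangentDerivation f G = derivative f * derivX G - derivX f * derivative G := by
  simp [tangentDerivation, derivative'_apply]

lemma derivative_expandAt (b : k) (P : k[X]) :
    PowerSeries.derivative k (expandAt b P) = expandAt b (derivative P) := by
  induction P using Polynomial.induction_on' with
  | add P Q hP hQ => simp only [map_add, hP, hQ]
  | monomial n a =>
    rw [derivative_monomial]
    simp only [expandAt, aeval_monomial, Derivation.leibniz, Derivation.leibniz_pow, map_add,
      PowerSeries.derivative_C, PowerSeries.derivative_X, PowerSeries.algebraMap_apply,
      Algebra.algebraMap_self, RingHom.id_apply, smul_eq_mul, nsmul_eq_mul, map_mul, map_natCast]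
    ring

lemma derivative_alongBranch (b : k) (η : k⟦X⟧) (G : k[X][Y]) :
    PowerSeries.derivative k (alongBranch b η G) = alongBranch b η (derivX G) +
      alongBranch b η (derivative G) * PowerSeries.derivative k η := by
  induction G using Polynomial.induction_on' with
  | add G H hG hH =>
    simp only [map_add, hG, hH]
    ring
  | monomial n P =>
    have hmono (m : ℕ) (Q : k[X]) :
        alongBranch b η (monomial m Q) = expandAt b Q * η ^ m := by
      rw [← eval₂_expandAt, eval₂_monomial, RingHom.coe_coe]
    rw [derivX_monomial, derivative_monomial, hmono, hmono, hmono, Derivation.leibniz,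
      Derivation.leibniz_pow, derivative_expandAt, map_mul, map_natCast]
    simp only [smul_eq_mul, nsmul_eq_mul]
    ring

lemma alongBranch_tangentDerivation (hη : alongBranch b η f = 0) (G : k[X][Y]) :
    alongBranch b η (tangentDerivation f G) =
      alongBranch b η (derivative f) * PowerSeries.derivative k (alongBranch b η G) := by
  have hchain := derivative_alongBranch b η f
  rw [hη, map_zero] at hchain
  rw [tangentDerivation_apply, map_sub, map_mul, map_mul, derivative_alongBranch b η G]
  linear_combination alongBranch b η (derivative G) * hchain

lemma iterate_tangentDerivation_mem_weightLE {e d N : ℕ} (hf : f ∈ weightLE e (e * d))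
    (hG : G ∈ weightLE e N) (n : ℕ) :
    (tangentDerivation f)^[n] G ∈ weightLE e (N + n * (e * d)) := by
  induction n with
  | zero => simpa using hG
  | succ n ih =>
    rw [Function.iterate_succ_apply', tangentDerivation_apply, Nat.succ_mul, ← add_assoc, add_comm]
    exact sub_mem (mul_mem_weightLE (derivative_mem_weightLE hf) (derivX_mem_weightLE ih))
      (mul_mem_weightLE (derivX_mem_weightLE hf) (derivative_mem_weightLE ih))

lemma X_pow_dvd_derivative {g : k⟦X⟧} {n : ℕ} (h : (PowerSeries.X : k⟦X⟧) ^ n ∣ g) :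
    (PowerSeries.X : k⟦X⟧) ^ (n - 1) ∣ PowerSeries.derivative k g := by
  rw [PowerSeries.X_pow_dvd_iff] at h ⊢
  intro m hm
  rw [PowerSeries.coeff_derivative, h (m + 1) (by omega), zero_mul]

lemma X_pow_dvd_iterate_tangentDerivation (hη : alongBranch b η f = 0) {n : ℕ}
    (hG : (PowerSeries.X : k⟦X⟧) ^ n ∣ alongBranch b η G) (j : ℕ) :
    (PowerSeries.X : k⟦X⟧) ^ (n - j) ∣ alongBranch b η ((tangentDerivation f)^[j] G) := by
  induction j with
  | zero => simpa using hG
  | succ j ih =>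
    rw [Function.iterate_succ_apply', alongBranch_tangentDerivation hη]
    exact (X_pow_dvd_derivative ih).mul_left _

lemma X_pow_succ_dvd_of_derivative {p : ℕ} [CharP k p] {g : k⟦X⟧} {n : ℕ} (hn : n < p)
    (hzero : PowerSeries.constantCoeff g = 0)
    (hg : (PowerSeries.X : k⟦X⟧) ^ n ∣ PowerSeries.derivative k g) :
    (PowerSeries.X : k⟦X⟧) ^ (n + 1) ∣ g := by
  rw [PowerSeries.X_pow_dvd_iff] at hg ⊢
  rintro (_ | m) hm
  · rwa [PowerSeries.coeff_zero_eq_constantCoeff_apply]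
  · have hcoeff := hg m (by omega)
    rw [PowerSeries.coeff_derivative] at hcoeff
    refine (mul_eq_zero.mp hcoeff).resolve_right fun hm0 ↦ ?_
    rw [← Nat.cast_succ, CharP.cast_eq_zero_iff k p] at hm0
    exact absurd (Nat.le_of_dvd m.succ_pos hm0) (by omega)

lemma X_pow_dvd_of_iterate_tangentDerivation {p : ℕ} [CharP k p] (hη : alongBranch b η f = 0)
    (hsep : (derivative f).evalEval b (PowerSeries.constantCoeff η) ≠ 0) {n : ℕ} (hn : n ≤ p)
    (hG : ∀ j < n,
      ((tangentDerivation f)^[j] G).evalEval b (PowerSeries.constantCoeff η) = 0) :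
    (PowerSeries.X : k⟦X⟧) ^ n ∣ alongBranch b η G := by
  induction n generalizing G with
  | zero => simp
  | succ n ih =>
    have hderiv := ih (G := tangentDerivation f G) (by omega) fun j hj ↦ hG (j + 1) (by omega)
    rw [alongBranch_tangentDerivation hη, (isUnit_alongBranch_iff.mpr hsep).dvd_mul_left] at hderiv
    refine X_pow_succ_dvd_of_derivative hn ?_ hderiv
    rw [constantCoeff_alongBranch]
    exact hG 0 n.succ_pos

end TangentDerivation

section PointCount

variable {k ι : Type*} [Field k] [Fintype ι] {f : k[X][Y]} {b : k} {η : ι → k⟦X⟧}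

lemma sum_ite_eq_add [DecidableEq ι] (l₀ : ι) (n₀ n₁ : ℕ) :
    ∑ l, (if l = l₀ then n₀ else n₁) = n₀ + (Fintype.card ι - 1) * n₁ := by
  rw [← Finset.add_sum_erase _ _ (Finset.mem_univ l₀), if_pos rfl,
    Finset.sum_congr rfl fun l hl ↦ if_neg (Finset.ne_of_mem_erase hl)]
  simp

lemma X_sub_C_pow_mul_card_dvd_resultant [IsAlgClosed k] (hf : f.Monic) (hsep : IsUnramifiedAt f b)
    {H : k[X][Y]} {M : ℕ} (T : Finset k) (hT : ∀ w ∈ T, f.evalEval b w = 0)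
    (hH : ∀ ξ : k⟦X⟧, PowerSeries.constantCoeff ξ ∈ T → alongBranch b ξ f = 0 →
      (PowerSeries.X : k⟦X⟧) ^ M ∣ alongBranch b ξ H) :
    (X - C b) ^ (M * T.card) ∣ resultant f H := by
  classical
  obtain ⟨ξ, hξ, hξT⟩ := exists_isBranchFamily hf hsep
  set A := Finset.univ.filter fun l ↦ PowerSeries.constantCoeff (ξ l) ∈ T
  have hdvd := hξ.X_sub_C_pow_dvd_resultant hf (G := H) (n := fun l ↦ if l ∈ A then M else 0)
    fun l ↦ by
      split_ifs with hl
      · exact hH _ (Finset.mem_filter.mp hl).2 (hξ.root l)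
      · simp
  refine (pow_dvd_pow _ ?_).trans hdvd
  rw [Finset.sum_ite_mem, Finset.univ_inter, Finset.sum_const, smul_eq_mul, mul_comm]
  refine Nat.mul_le_mul_right M ?_
  have hsub : T ⊆ A.image fun l ↦ PowerSeries.constantCoeff (ξ l) := by
    intro w hw
    obtain ⟨l, rfl⟩ := hξT w (hT w hw)
    exact Finset.mem_image.mpr ⟨l, Finset.mem_filter.mpr ⟨Finset.mem_univ _, hw⟩, rfl⟩
  exact (Finset.card_le_card hsub).trans Finset.card_image_le

lemma sum_le_natDegree_of_X_sub_C_pow_dvd {P : k[X]} (hP : P ≠ 0) (B : Finset k) (n : k → ℕ)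
    (h : ∀ b ∈ B, (X - C b) ^ n b ∣ P) : ∑ b ∈ B, n b ≤ P.natDegree := by
  have hprod : ∏ b ∈ B, (X - C b) ^ n b ∣ P :=
    Finset.prod_dvd_of_coprime (fun b _ b' _ hbb ↦
      (isCoprime_X_sub_C_of_isUnit_sub (sub_ne_zero.mpr hbb).isUnit).pow) h
  have hle := natDegree_le_of_dvd hprod hP
  rw [natDegree_prod_of_monic _ _ fun b _ ↦ (monic_X_sub_C b).pow _] at hle
  simpa only [natDegree_pow, natDegree_X_sub_C, mul_one] using hle

lemma card_eq_sum_card_image_snd {α β : Type*} [DecidableEq α] [DecidableEq β]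
    (S : Finset (α × β)) :
    S.card = ∑ c ∈ S.image Prod.fst, ((S.filter fun z ↦ z.1 = c).image Prod.snd).card := by
  rw [Finset.card_eq_sum_card_image Prod.fst S]
  refine Finset.sum_congr rfl fun c _ ↦ (Finset.card_image_of_injOn ?_).symm
  intro z hz z' hz' h
  simp only [Finset.coe_filter, Set.mem_ofPred_eq] at hz hz'
  exact Prod.ext (hz.2.trans hz'.2.symm) h

-- The zeros of `H` on the other branches above `b` use up all but `N` of the degree of the
-- resultant.
lemma IsWeightedCurve.mul_card_le [IsAlgClosed k] {e N M : ℕ} (hf : IsWeightedCurve e f)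
    (hη : IsBranchFamily f b η) {H : k[X][Y]} (hH : H ∈ weightLE e N) (hndvd : ¬ f ∣ H) (l₀ : ι)
    (hbranch : ∀ l, l ≠ l₀ → (PowerSeries.X : k⟦X⟧) ^ N ∣ alongBranch b (η l) H)
    (S : Finset (k × k)) (hS : ∀ z ∈ S, z.1 ≠ b) (hSf : ∀ z ∈ S, f.evalEval z.1 z.2 = 0)
    (hsep : ∀ z ∈ S, IsUnramifiedAt f z.1)
    (hSH : ∀ z ∈ S, ∀ ξ : k⟦X⟧, PowerSeries.constantCoeff ξ = z.2 → alongBranch z.1 ξ f = 0 →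
      (PowerSeries.X : k⟦X⟧) ^ M ∣ alongBranch z.1 ξ H) :
    M * S.card ≤ N := by
  classical
  set B := S.image Prod.fst
  let T (c : k) : Finset k := (S.filter fun z ↦ z.1 = c).image Prod.snd
  have hT {c w : k} (hw : w ∈ T c) : (c, w) ∈ S := by
    simpa [T] using hw
  have hcard : S.card = ∑ c ∈ B, (T c).card := card_eq_sum_card_image_snd S
  have hfibre : ∀ c ∈ B, (X - C c) ^ (M * (T c).card) ∣ resultant f H := by
    intro c hc
    obtain ⟨z, hz, rfl⟩ := Finset.mem_image.mp hc
    exact X_sub_C_pow_mul_card_dvd_resultant hf.monic (hsep z hz) _ (fun w hw ↦ hSf _ (hT hw))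
      fun ξ hξ ↦ hSH _ (hT hξ) ξ rfl
  have hbase : (X - C b) ^ ((f.natDegree - 1) * N) ∣ resultant f H := by
    have h := hη.X_sub_C_pow_dvd_resultant hf.monic (G := H)
      (n := fun l ↦ if l = l₀ then 0 else N) fun l ↦ by
        split_ifs with hl
        · simp
        · exact hbranch l hl
    rwa [sum_ite_eq_add, zero_add, hη.card_eq] at h
  have hb : b ∉ B := fun h ↦ by
    obtain ⟨z, hz, h⟩ := Finset.mem_image.mp h
    exact hS z hz h
  have hBb : ∀ c ∈ B, c ≠ b := fun c hc h ↦ hb (h ▸ hc)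
  have hle := (sum_le_natDegree_of_X_sub_C_pow_dvd
    (hη.resultant_ne_zero hf.monic hf.irreducible hndvd) (insert b B)
    (fun c ↦ if c = b then (f.natDegree - 1) * N else M * (T c).card) fun c hc ↦ by
      split_ifs with h
      · exact h ▸ hbase
      · exact hfibre c ((Finset.mem_insert.mp hc).resolve_left h)).trans
    (natDegree_resultant_le hf.mem_weightLE hH)
  rw [Finset.sum_insert hb, if_pos rfl, Finset.sum_congr rfl fun c hc ↦ if_neg (hBb c hc),
    ← Finset.mul_sum, ← hcard] at hle
  obtain ⟨d, hd⟩ := Nat.exists_eq_succ_of_ne_zero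
    (hη.card_eq ▸ (Fintype.card_pos_iff.mpr ⟨l₀⟩).ne' : f.natDegree ≠ 0)
  rw [hd, Nat.succ_sub_one, Nat.succ_mul] at hle
  omega

end PointCount

section PoleSpace

variable {k : Type*} [Field k]

lemma exists_mem_span_ne_zero_of_card_lt {V ι κ : Type*} [AddCommGroup V] [Module k V] [Fintype ι]
    [Fintype κ] {v : ι → V} (hv : LinearIndependent k v) (ψ : V →ₗ[k] κ → k)
    (hcard : Fintype.card κ < Fintype.card ι) :
    ∃ x ∈ Submodule.span k (Set.range v), x ≠ 0 ∧ ψ x = 0 := by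
  have : FiniteDimensional k (Submodule.span k (Set.range v)) :=
    FiniteDimensional.span_of_finite k (Set.finite_range v)
  have hker := LinearMap.ker_ne_bot_of_finrank_lt
    (f := ψ.domRestrict (Submodule.span k (Set.range v)))
    (by simpa [finrank_span_eq_card hv] using hcard)
  obtain ⟨x, hx, hx0⟩ := (Submodule.ne_bot_iff _).mp hker
  exact ⟨x, x.2, fun h ↦ hx0 (Subtype.ext h), hx⟩

lemma linearIndependent_monomial_monomial :
    LinearIndependent k fun x : ℕ × ℕ ↦ (monomial x.1 (monomial x.2 1) : k[X][Y]) := by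
  have h := ((basisMonomials k).smulTower (basisMonomials k[X])).linearIndependent
  convert h.comp Prod.swap Prod.swap_injective with x
  simp [smul_monomial]

lemma linearIndependent_of_distinct_orders {ι : Type*} {g : ι → k⟦X⟧} {o : ι → ℕ}
    (ho : ∀ t, (g t).order = o t) (hinj : Function.Injective o) : LinearIndependent k g := by
  classical
  refine linearIndependent_iff'.mpr fun A c hsum ↦ ?_
  by_contra! hc
  obtain ⟨t₀, ht₀, hmin⟩ := (A.filter fun t ↦ c t ≠ 0).exists_min_image o
    (hc.imp fun t ht ↦ Finset.mem_filter.mpr ht)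
  obtain ⟨ht₀, hc₀⟩ := Finset.mem_filter.mp ht₀
  have hcoeff := congrArg (PowerSeries.coeff (o t₀)) hsum
  rw [map_sum, Finset.sum_eq_single_of_mem t₀ ht₀ fun t ht hne ↦ ?_, map_zero, map_smul] at hcoeff
  · exact smul_ne_zero hc₀ (PowerSeries.order_eq_nat.mp (ho t₀)).1 hcoeff
  · by_cases hct : c t = 0
    · rw [hct, zero_smul, map_zero]
    · rw [map_smul, PowerSeries.coeff_of_lt_order, smul_zero]
      rw [ho t]
      exact_mod_cast (hmin t (Finset.mem_filter.mpr ⟨ht, hct⟩)).lt_of_ne fun h ↦ hne (hinj h.symm)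

/-- The polynomials of weighted degree at most `m` that represent functions on the curve `f = 0` and
vanish to order at least `m` along every branch above `b` except `η l₀`. They play the role of the
Riemann–Roch space of a multiple of the point on `η l₀`. -/
noncomputable def poleSpace {ι : Type*} (f : k[X][Y]) (e m : ℕ) (b : k) (η : ι → k⟦X⟧) (l₀ : ι) :
    Submodule k k[X][Y] :=
  ((degreeLT k[X] f.natDegree).restrictScalars k ⊓ weightLE e m) ⊓
    ⨅ l ≠ l₀, ((Ideal.span {PowerSeries.X ^ m}).restrictScalars k).comap
      (alongBranch b (η l)).toLinearMap

lemma mem_poleSpace {ι : Type*} {f : k[X][Y]} {e m : ℕ} {b : k} {η : ι → k⟦X⟧} {l₀ : ι}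
    {G : k[X][Y]} :
    G ∈ poleSpace f e m b η l₀ ↔ (G.degree < f.natDegree ∧ G ∈ weightLE e m) ∧
      ∀ l ≠ l₀, (PowerSeries.X : k⟦X⟧) ^ m ∣ alongBranch b (η l) G := by
  simp [poleSpace, Submodule.mem_iInf, mem_degreeLT, Ideal.mem_span_singleton]

variable {ι : Type*} [Fintype ι] {f : k[X][Y]} {e m : ℕ} {b : k} {η : ι → k⟦X⟧} {l₀ : ι}

lemma IsWeightedCurve.exists_order_eq (hf : IsWeightedCurve e f) (hη : IsBranchFamily f b η)
    {G : k[X][Y]} (hG : G ∈ poleSpace f e m b η l₀) (hG0 : G ≠ 0) :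
    ∃ n ≤ m, (alongBranch b (η l₀) G).order = n := by
  classical
  obtain ⟨⟨hdeg, hweight⟩, hbranch⟩ := mem_poleSpace.mp hG
  have hndvd : ¬ f ∣ G := fun h ↦ hG0 <|
    eq_zero_of_dvd_of_degree_lt h (by rwa [degree_eq_natDegree hf.monic.ne_zero])
  obtain ⟨d, hd⟩ : ∃ d, f.natDegree = d + 1 := Nat.exists_eq_succ_of_ne_zero <|
    hη.card_eq ▸ (Fintype.card_pos_iff.mpr ⟨l₀⟩).ne'
  have hlt : (alongBranch b (η l₀) G).order < (m + 1 : ℕ) := by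
    by_contra! hle
    refine hndvd (hf.dvd_of_vanishing hη hweight (n := fun l ↦ if l = l₀ then m + 1 else m) ?_ ?_)
    · intro l
      split_ifs with hl
      · exact hl ▸ PowerSeries.X_pow_dvd_iff.mpr fun j hj ↦
          PowerSeries.coeff_of_lt_order _ (lt_of_lt_of_le (by exact_mod_cast hj) hle)
      · exact hbranch l hl
    · rw [sum_ite_eq_add, hη.card_eq, hd, Nat.add_sub_cancel, Nat.succ_mul]
      omega
  obtain ⟨n, hn⟩ := ENat.ne_top_iff_exists.mp hlt.ne_top
  rw [← hn] at hlt ⊢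
  exact ⟨n, by exact_mod_cast Nat.lt_succ_iff.mp (by exact_mod_cast hlt), rfl⟩

/-- The index set of the monomials `X ^ i * Y ^ j` with `j < d` and `i + e * j ≤ m`. -/
abbrev MonomialIndex (d e m : ℕ) : Type := Σ j : Fin d, Fin (m + 1 - e * j)

lemma mul_succ_le_card_monomialIndex (d e m : ℕ) :
    d * (m + 1) ≤ Fintype.card (MonomialIndex d e m) + e * d * d := by
  have h := Finset.sum_le_sum (s := Finset.univ) fun (j : Fin d) _ ↦
    (show m + 1 ≤ (m + 1 - e * j) + e * d by
      have := Nat.mul_le_mul_left e j.2.le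
      omega)
  simpa [Finset.sum_add_distrib, mul_comm, mul_left_comm] using h

lemma exists_mem_poleSpace (hη : IsBranchFamily f b η) (l₀ : ι) (O : Finset ℕ)
    (hO : O.card + e * f.natDegree * f.natDegree ≤ m) :
    ∃ G ∈ poleSpace f e m b η l₀, G ≠ 0 ∧
      ∀ j ∈ O, PowerSeries.coeff j (alongBranch b (η l₀) G) = 0 := by
  classical
  let exps : MonomialIndex f.natDegree e m → ℕ × ℕ := fun x ↦ (x.1, x.2)
  have hexps : Function.Injective exps := by
    rintro ⟨j, i⟩ ⟨j', i'⟩ h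
    obtain ⟨hj, hi⟩ := Prod.mk.inj h
    obtain rfl := Fin.ext hj
    obtain rfl := Fin.ext hi
    rfl
  let ψ : k[X][Y] →ₗ[k] ({l // l ≠ l₀} × Fin m) ⊕ O → k := LinearMap.pi <|
    Sum.elim (fun x ↦ PowerSeries.coeff x.2 ∘ₗ (alongBranch b (η x.1)).toLinearMap)
      fun j ↦ PowerSeries.coeff j ∘ₗ (alongBranch b (η l₀)).toLinearMap
  obtain ⟨G, hG, hG0, hψ⟩ := exists_mem_span_ne_zero_of_card_lt
    (linearIndependent_monomial_monomial.comp exps hexps) ψ <| by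
      obtain ⟨d, hd⟩ : ∃ d, f.natDegree = d + 1 := Nat.exists_eq_succ_of_ne_zero <|
        hη.card_eq ▸ (Fintype.card_pos_iff.mpr ⟨l₀⟩).ne'
      have hcard := mul_succ_le_card_monomialIndex f.natDegree e m
      rw [Fintype.card_sum, Fintype.card_prod, Fintype.card_subtype_compl, Fintype.card_subtype_eq,
        Fintype.card_fin, Fintype.card_coe, hη.card_eq]
      rw [hd] at hO hcard ⊢
      rw [Nat.add_sub_cancel]
      linarith [add_mul d 1 (m + 1), mul_add d m 1]
  refine ⟨G, mem_poleSpace.mpr ⟨?_, fun l hl ↦ ?_⟩, hG0, fun j hj ↦ congrFun hψ (.inr ⟨j, hj⟩)⟩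
  · suffices Submodule.span k _ ≤
      (degreeLT k[X] f.natDegree).restrictScalars k ⊓ weightLE e m by
      simpa [mem_degreeLT] using this hG
    rw [Submodule.span_le]
    rintro _ ⟨⟨j, i⟩, rfl⟩
    refine ⟨mem_degreeLT.mpr ((degree_monomial_le _ _).trans_lt (by exact_mod_cast j.2)), ?_⟩
    intro m' i' hlt
    simp only [exps, Function.comp_apply, coeff_monomial]
    split_ifs with hj
    · rw [coeff_monomial, if_neg]
      rintro rfl
      rw [← hj] at hlt
      have := i.2
      omega
    · exact coeff_zero _
  · exact PowerSeries.X_pow_dvd_iff.mpr fun j hj ↦ congrFun hψ (.inl ⟨⟨l, hl⟩, ⟨j, hj⟩⟩)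

lemma IsWeightedCurve.exists_distinct_orders (hf : IsWeightedCurve e f)
    (hη : IsBranchFamily f b η) (l₀ : ι) {n : ℕ}
    (hn : n + e * f.natDegree * f.natDegree ≤ m + 1) :
    ∃ (s : Fin n → k[X][Y]) (ν : Fin n → ℕ), (∀ t, s t ∈ poleSpace f e m b η l₀) ∧
      Function.Injective ν ∧ ∀ t, ν t ≤ m ∧ (alongBranch b (η l₀) (s t)).order = ν t := by
  classical
  let O : Finset ℕ := (Finset.range (m + 1)).filter
    fun j ↦ ∃ G ∈ poleSpace f e m b η l₀, (alongBranch b (η l₀) G).order = j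
  have hO : n ≤ O.card := by
    by_contra! hlt
    obtain ⟨G, hG, hG0, hvanish⟩ := exists_mem_poleSpace hη l₀ O (e := e) (m := m) (by omega)
    obtain ⟨j, hj, horder⟩ := hf.exists_order_eq hη hG hG0
    exact (PowerSeries.order_eq_nat.mp horder).1 <| hvanish j <|
      Finset.mem_filter.mpr ⟨Finset.mem_range.mpr (Nat.lt_succ_of_le hj), G, hG, horder⟩
  let ν : Fin n → O := O.equivFin.symm ∘ Fin.castLE hO
  choose s hs hsν using fun t ↦ (Finset.mem_filter.mp (ν t).2).2
  refine ⟨s, fun t ↦ ν t, hs, Subtype.val_injective.comp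
    (O.equivFin.symm.injective.comp (Fin.castLE_injective hO)), fun t ↦ ⟨?_, hsν t⟩⟩
  exact Nat.lt_succ_iff.mp (Finset.mem_range.mp (Finset.mem_filter.mp (ν t).2).1)

end PoleSpace

section Twist

variable {k : Type*} [Field k]

lemma iterate_tangentDerivation_mul_pow {p : ℕ} [CharP k p] {u : ℕ} (hu : p ∣ u)
    (f a s : k[X][Y]) (n : ℕ) :
    (tangentDerivation f)^[n] (a * s ^ u) = (tangentDerivation f)^[n] a * s ^ u := by
  induction n with
  | zero => rfl
  | succ n ih =>
    rw [Function.iterate_succ_apply', ih, Function.iterate_succ_apply', Derivation.leibniz,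
      Derivation.leibniz_pow, ← Nat.cast_smul_eq_nsmul k[X][Y] u,
      (CharP.cast_eq_zero_iff k[X][Y] p u).mpr hu, zero_smul, smul_zero, zero_add, smul_eq_mul,
      mul_comm]

lemma exists_sum_pow_smul_eq_zero [IsAlgClosed k] {ι κ : Type*} [Fintype ι] [Fintype κ]
    (w : ι → κ → k) (hcard : Fintype.card κ < Fintype.card ι) {n : ℕ} (hn : 0 < n) :
    ∃ c : ι → k, (∃ i, c i ≠ 0) ∧ ∑ i, c i ^ n • w i = 0 := by
  have hdep : ¬ LinearIndependent k w := fun hli ↦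
    hcard.not_ge (by simpa using hli.fintype_card_le_finrank)
  obtain ⟨g, hg, i, hi⟩ := Fintype.not_linearIndependent_iff.mp hdep
  choose c hc using fun i ↦ IsAlgClosed.exists_pow_nat_eq (g i) hn
  refine ⟨c, ⟨i, fun h ↦ hi ?_⟩, by simpa only [hc] using hg⟩
  rw [← hc, h, zero_pow hn.ne']

variable {p : ℕ} [Fact p.Prime] [CharP k p]

/-- The `p ^ a`-Frobenius of `s`, of degree less than `d` in `Y`, where `Y ^ (p ^ a)` is replaced by
`r / h`, `X ^ (p ^ a)` by `X`, and the denominator `h ^ d` is cleared. -/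
noncomputable def frobeniusTwist (p : ℕ) [Fact p.Prime] [CharP k p] (a d : ℕ) (h : k[X])
    (r s : k[X][Y]) : k[X][Y] :=
  ∑ j ∈ Finset.range d, C ((s.coeff j).map (iterateFrobenius k p a)) * C h ^ (d - j) * r ^ j

lemma frobeniusTwist_mem_weightLE {a d e c m : ℕ} {h : k[X]} {r s : k[X][Y]}
    (hh : h.natDegree ≤ c) (hr : r ∈ weightLE e c) (hs : s ∈ weightLE e m) :
    frobeniusTwist p a d h r s ∈ weightLE e (m + d * c) := by
  refine sum_mem fun j hj ↦ ?_
  have hcoeff : (s.coeff j).natDegree ≤ m := by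
    by_cases hzero : s.coeff j = 0
    · simp [hzero]
    · exact (Nat.le_add_right _ _).trans (natDegree_coeff_add_le hs hzero)
  have hmem := mul_mem_weightLE (mul_mem_weightLE
    (C_mem_weightLE (e := e) ((natDegree_map_le (f := iterateFrobenius k p a)).trans hcoeff))
    (pow_mem_weightLE (C_mem_weightLE hh) (d - j))) (pow_mem_weightLE hr j)
  rwa [add_assoc, ← add_mul, Nat.sub_add_cancel (Finset.mem_range.mp hj).le] at hmem

/-- The point `z` of the curve `f = 0` has first coordinate fixed by the endomorphism `σ`, which
sends its second coordinate to `r(z) / h(z)`. In a field of characteristic `p` the endomorphism of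
interest is an iterate of the Frobenius. -/
structure IsTwistedPoint {R : Type*} [CommRing R] (σ : R →+* R) (f : R[X][Y]) (h : R[X])
    (r : R[X][Y]) (z : R × R) : Prop where
  evalEval_eq_zero : f.evalEval z.1 z.2 = 0
  eval_ne_zero : h.eval z.1 ≠ 0
  map_fst : σ z.1 = z.1
  eval_mul_map_snd : h.eval z.1 * σ z.2 = r.evalEval z.1 z.2

/-- Every point of the curve `f = 0` off `h = 0` with first coordinate fixed by `σ` is a twisted
point for some member of the family `r`: in geometric terms, the quotients `r j / h` are the
automorphisms of the cover `f = 0` of the line, and `σ` acts on its fibres through them. -/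
def IsTwistedCover {R ι : Type*} [CommRing R] (σ : R →+* R) (f : R[X][Y]) (h : R[X])
    (r : ι → R[X][Y]) : Prop :=
  ∀ z : R × R, σ z.1 = z.1 → h.eval z.1 ≠ 0 → f.evalEval z.1 z.2 = 0 →
    ∃ j, IsTwistedPoint σ f h (r j) z

lemma IsTwistedPoint.evalEval_frobeniusTwist {a d : ℕ} {f : k[X][Y]} {h : k[X]} {r s : k[X][Y]}
    {z : k × k} (hz : IsTwistedPoint (iterateFrobenius k p a) f h r z) (hs : s.degree < d) :
    (frobeniusTwist p a d h r s).evalEval z.1 z.2 =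
      h.eval z.1 ^ d * s.evalEval z.1 z.2 ^ p ^ a := by
  have hsum : s.evalEval z.1 z.2 = ∑ j ∈ Finset.range d, (s.coeff j).eval z.1 * z.2 ^ j := by
    obtain rfl | hs0 := eq_or_ne s 0
    · simp
    · rw [← eval₂_evalRingHom, eval₂_eq_sum_range' _ ((natDegree_lt_iff_degree_lt hs0).mpr hs)]
      rfl
  rw [hsum, sum_pow_char_pow, Finset.mul_sum, frobeniusTwist, evalEval_finsetSum]
  refine Finset.sum_congr rfl fun j hj ↦ ?_
  rw [evalEval_mul, evalEval_mul, evalEval_pow, evalEval_pow, evalEval_C, evalEval_C,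
    mul_pow, ← iterateFrobenius_def p a (eval _ (s.coeff j)), ← eval_map_apply, hz.map_fst,
    ← hz.eval_mul_map_snd, iterateFrobenius_def,
    ← pow_sub_mul_pow _ (Finset.mem_range.mp hj).le]
  ring

end Twist

section AuxiliaryForm

variable {k ι κ : Type*} [Field k] [Fintype ι] [Fintype κ] {p : ℕ} [CharP k p]
  {f : k[X][Y]} {v : κ → k[X][Y]} {s : ι → k[X][Y]} {c : ι × κ → k}

/-- Stepanov's auxiliary function `∑ c (t, i) · v i · s t ^ u`. -/
noncomputable def auxiliaryForm (u : ℕ) (v : κ → k[X][Y]) (s : ι → k[X][Y]) (c : ι × κ → k) :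
    k[X][Y] :=
  ∑ x, c x • (v x.2 * s x.1 ^ u)

lemma iterate_tangentDerivation_auxiliaryForm {u : ℕ} (hu : p ∣ u) (f : k[X][Y])
    (v : κ → k[X][Y]) (s : ι → k[X][Y]) (c : ι × κ → k) (j : ℕ) :
    (tangentDerivation f)^[j] (auxiliaryForm u v s c) =
      auxiliaryForm u (fun i ↦ (tangentDerivation f)^[j] (v i)) s c := by
  have hlin := Module.End.coe_pow (tangentDerivation f : k[X][Y] →ₗ[k] k[X][Y]) j
  simp only [Derivation.coeFn_coe] at hlin
  rw [← hlin]
  simp only [auxiliaryForm, map_sum, map_smul]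
  simp only [hlin, iterate_tangentDerivation_mul_pow hu]

variable [Fact p.Prime]

/-- A function of low degree which at the twisted points is, up to a nonvanishing factor, the
`p ^ μ`-th power of the `j`-th tangential derivative of `auxiliaryForm (p ^ α) v s c`. -/
noncomputable def derivativeForm (p : ℕ) [Fact p.Prime] [CharP k p] (α μ : ℕ) (f : k[X][Y])
    (h : k[X]) (r : k[X][Y]) (v : κ → k[X][Y]) (s : ι → k[X][Y]) (c : ι × κ → k) (j : ℕ) :
    k[X][Y] :=
  ∑ x, c x ^ p ^ μ • ((tangentDerivation f)^[j] (v x.2) ^ p ^ μ *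
    frobeniusTwist p (α + μ) f.natDegree h r (s x.1))

lemma IsTwistedPoint.evalEval_derivativeForm {α μ : ℕ} (hα : α ≠ 0) {h : k[X]} {r : k[X][Y]}
    {z : k × k} (hz : IsTwistedPoint (iterateFrobenius k p (α + μ)) f h r z)
    (hs : ∀ t, (s t).degree < f.natDegree) (v : κ → k[X][Y]) (c : ι × κ → k) (j : ℕ) :
    (derivativeForm p α μ f h r v s c j).evalEval z.1 z.2 = h.eval z.1 ^ f.natDegree *
      ((tangentDerivation f)^[j] (auxiliaryForm (p ^ α) v s c)).evalEval z.1 z.2 ^ p ^ μ := by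
  rw [iterate_tangentDerivation_auxiliaryForm (dvd_pow_self p hα), auxiliaryForm, derivativeForm,
    evalEval_finsetSum, evalEval_finsetSum, sum_pow_char_pow, Finset.mul_sum]
  refine Finset.sum_congr rfl fun x _ ↦ ?_
  rw [evalEval_smul, evalEval_smul, evalEval_mul, evalEval_mul, evalEval_pow, evalEval_pow,
    hz.evalEval_frobeniusTwist (hs _), smul_eq_mul, smul_eq_mul, pow_add, pow_mul]
  ring

lemma IsTwistedPoint.X_pow_dvd_auxiliaryForm {α μ M : ℕ} (hα : α ≠ 0) (hM : M ≤ p) {h : k[X]}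
    {r : k[X][Y]} {z : k × k} (hz : IsTwistedPoint (iterateFrobenius k p (α + μ)) f h r z)
    (hsep : IsUnramifiedAt f z.1) (hs : ∀ t, (s t).degree < f.natDegree)
    (hdvd : ∀ j < M, f ∣ derivativeForm p α μ f h r v s c j) {ξ : k⟦X⟧}
    (hξ : PowerSeries.constantCoeff ξ = z.2) (hξf : alongBranch z.1 ξ f = 0) :
    (PowerSeries.X : k⟦X⟧) ^ M ∣ alongBranch z.1 ξ (auxiliaryForm (p ^ α) v s c) := by
  refine X_pow_dvd_of_iterate_tangentDerivation hξf (p := p) ?_ hM fun j hj ↦ ?_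
  · rw [hξ]
    exact hsep _ hz.evalEval_eq_zero
  · have hzero := evalEval_dvd z.1 z.2 (hdvd j hj)
    rw [hz.evalEval_eq_zero, zero_dvd_iff, hz.evalEval_derivativeForm hα hs] at hzero
    rw [hξ]
    exact eq_zero_of_pow_eq_zero
      ((mul_eq_zero.mp hzero).resolve_left (pow_ne_zero _ hz.eval_ne_zero))

variable {β : Type*} [Fintype β] {e ℓ m : ℕ} {b : k} {η : β → k⟦X⟧} {l₀ : β}

lemma auxiliaryForm_mem_weightLE (u : ℕ) (hv : ∀ i, v i ∈ weightLE e ℓ)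
    (hs : ∀ t, s t ∈ weightLE e m) (c : ι × κ → k) :
    auxiliaryForm u v s c ∈ weightLE e (ℓ + u * m) :=
  sum_mem fun _ _ ↦ Submodule.smul_mem _ _ (mul_mem_weightLE (hv _) (pow_mem_weightLE (hs _) u))

lemma X_pow_dvd_auxiliaryForm (u : ℕ) {ξ : k⟦X⟧}
    (hv : ∀ i, (PowerSeries.X : k⟦X⟧) ^ ℓ ∣ alongBranch b ξ (v i))
    (hs : ∀ t, (PowerSeries.X : k⟦X⟧) ^ m ∣ alongBranch b ξ (s t)) (c : ι × κ → k) :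
    (PowerSeries.X : k⟦X⟧) ^ (ℓ + u * m) ∣ alongBranch b ξ (auxiliaryForm u v s c) := by
  rw [auxiliaryForm, map_sum]
  refine Finset.dvd_sum fun x _ ↦ ?_
  rw [map_smul, map_mul, map_pow, pow_add, mul_comm u, pow_mul]
  exact dvd_smul_of_dvd _ (mul_dvd_mul (hv _) (pow_dvd_pow_of_dvd (hs _) u))

-- The orders `o i + u * ν t` are distinct because `o i < u`.
lemma alongBranch_auxiliaryForm_ne_zero {u : ℕ} {ξ : k⟦X⟧} {o : κ → ℕ} {ν : ι → ℕ}
    (ho : ∀ i, (alongBranch b ξ (v i)).order = o i) (ho_inj : Function.Injective o)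
    (ho_lt : ∀ i, o i < u) (hν : ∀ t, (alongBranch b ξ (s t)).order = ν t)
    (hν_inj : Function.Injective ν) (hc : ∃ x, c x ≠ 0) :
    alongBranch b ξ (auxiliaryForm u v s c) ≠ 0 := by
  have hinj : Function.Injective fun x : ι × κ ↦ o x.2 + u * ν x.1 := by
    rintro ⟨t, i⟩ ⟨t', i'⟩ heq
    dsimp only at heq
    have hmod := congrArg (· % u) heq
    have hdiv := congrArg (· / u) heq
    have hu : 0 < u := (Nat.zero_le _).trans_lt (ho_lt i)
    simp only [Nat.add_mul_mod_self_left, Nat.mod_eq_of_lt (ho_lt _)] at hmod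
    simp only [Nat.add_mul_div_left _ _ hu, Nat.div_eq_of_lt (ho_lt _), zero_add] at hdiv
    exact Prod.ext (hν_inj hdiv) (ho_inj hmod)
  have hli := linearIndependent_of_distinct_orders
    (g := fun x : ι × κ ↦ alongBranch b ξ (v x.2 * s x.1 ^ u)) (fun x ↦ by
      rw [map_mul, map_pow, PowerSeries.order_mul, PowerSeries.order_pow, ho, hν]
      simp) hinj
  rw [auxiliaryForm, map_sum]
  simp only [map_smul]
  obtain ⟨x, hx⟩ := hc
  exact fun hzero ↦ hx (Fintype.linearIndependent_iff.mp hli c hzero x)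

lemma exists_X_pow_dvd_derivativeForm [IsAlgClosed k] (α μ : ℕ) (f : k[X][Y]) (h : k[X])
    (r : k[X][Y]) (v : κ → k[X][Y]) (s : ι → k[X][Y]) (b : k) (ξ : k⟦X⟧) {M L : ℕ}
    (hML : M * L < Fintype.card ι * Fintype.card κ) :
    ∃ c : ι × κ → k, (∃ x, c x ≠ 0) ∧ ∀ j < M,
      (PowerSeries.X : k⟦X⟧) ^ L ∣ alongBranch b ξ (derivativeForm p α μ f h r v s c j) := by
  obtain ⟨c, hc, hsum⟩ := exists_sum_pow_smul_eq_zero (ι := ι × κ) (κ := Fin M × Fin L)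
    (fun x y ↦ PowerSeries.coeff y.2 (alongBranch b ξ ((tangentDerivation f)^[y.1] (v x.2) ^ p ^ μ *
      frobeniusTwist p (α + μ) f.natDegree h r (s x.1)))) (by simpa using hML)
    (pow_pos (Fact.out : p.Prime).pos μ)
  refine ⟨c, hc, fun j hj ↦ PowerSeries.X_pow_dvd_iff.mpr fun i hi ↦ ?_⟩
  have hcoeff := congrFun hsum (⟨j, hj⟩, ⟨i, hi⟩)
  simpa only [derivativeForm, map_sum, map_smul, Finset.sum_apply, Pi.smul_apply, Pi.zero_apply]
    using hcoeff

lemma IsWeightedCurve.dvd_derivativeForm {α μ M L c₀ : ℕ} (hf : IsWeightedCurve e f)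
    (hη : IsBranchFamily f b η) (hv : ∀ i, v i ∈ poleSpace f e ℓ b η l₀)
    (hs : ∀ t, s t ∈ poleSpace f e m b η l₀) {h : k[X]} (hh : h.natDegree ≤ c₀) {r : k[X][Y]}
    (hr : r ∈ weightLE e c₀) {j : ℕ} (hj : j < M)
    (hL : (PowerSeries.X : k⟦X⟧) ^ L ∣ alongBranch b (η l₀) (derivativeForm p α μ f h r v s c j))
    (hdeg : f.natDegree * (p ^ μ * (ℓ + M * (e * f.natDegree)) + (m + f.natDegree * c₀)) <
      L + (f.natDegree - 1) * (p ^ μ * (ℓ - M))) :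
    f ∣ derivativeForm p α μ f h r v s c j := by
  classical
  simp only [mem_poleSpace] at hv hs
  refine hf.dvd_of_vanishing hη (n := fun l ↦ if l = l₀ then L else p ^ μ * (ℓ - M))
    (N := p ^ μ * (ℓ + M * (e * f.natDegree)) + (m + f.natDegree * c₀)) ?_ (fun l ↦ ?_) ?_
  · refine sum_mem fun x _ ↦ Submodule.smul_mem _ _ (mul_mem_weightLE (pow_mem_weightLE ?_ _)
      (frobeniusTwist_mem_weightLE hh hr (hs _).1.2))
    refine weightLE_mono ?_ (iterate_tangentDerivation_mem_weightLE hf.mem_weightLE (hv _).1.2 j)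
    gcongr
  · split_ifs with hl
    · exact hl ▸ hL
    rw [derivativeForm, map_sum]
    refine Finset.dvd_sum fun x _ ↦ ?_
    rw [map_smul, map_mul, map_pow, mul_comm (p ^ μ), pow_mul]
    refine dvd_smul_of_dvd _ ((pow_dvd_pow_of_dvd ?_ _).mul_right _)
    exact (pow_dvd_pow _ (show ℓ - M ≤ ℓ - j by omega)).trans
      (X_pow_dvd_iterate_tangentDerivation (hη.root l) ((hv _).2 l hl) j)
  · rwa [sum_ite_eq_add, hη.card_eq]

end AuxiliaryForm

section Stepanov

variable {k : Type*} [Field k]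

lemma exists_eval_ne_zero_and_pow_ne [Infinite k] {p : ℕ} [CharP k p] {h : k[X]} (hh : h ≠ 0)
    {q : ℕ} (hq : 1 < q) : ∃ b, h.eval b ≠ 0 ∧ b ^ q ≠ b := by
  have hne : h * (X ^ q - X) ≠ 0 := mul_ne_zero hh (FiniteField.X_pow_card_sub_X_ne_zero k hq)
  by_contra! hall
  refine hne (Polynomial.funext fun b ↦ ?_)
  by_cases hb : h.eval b = 0
  · simp [hb]
  · simp [hall b hb]

theorem IsWeightedCurve.mul_card_twistedPoints_le [IsAlgClosed k] {p : ℕ} [Fact p.Prime]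
    [CharP k p] {e c₀ M μ α ℓ n L : ℕ} {f : k[X][Y]} (hf : IsWeightedCurve e f) {h : k[X]}
    (hh0 : h ≠ 0) (hh : h.natDegree ≤ c₀) {r : k[X][Y]} (hr : r ∈ weightLE e c₀)
    (hsep : ∀ b, h.eval b ≠ 0 → IsUnramifiedAt f b)
    (hα : α ≠ 0) (hℓ : ℓ < p ^ α) (hM : M ≤ p) (hn : n + e * f.natDegree * f.natDegree ≤ ℓ + 1)
    (hL : f.natDegree * (p ^ μ * (ℓ + M * (e * f.natDegree)) +
        ((M * p ^ μ + e * f.natDegree * f.natDegree) + f.natDegree * c₀)) <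
      L + (f.natDegree - 1) * (p ^ μ * (ℓ - M)))
    (hcount : M * L < (M * p ^ μ + 1) * n)
    (S : Finset (k × k)) (hS : ∀ z ∈ S, IsTwistedPoint (iterateFrobenius k p (α + μ)) f h r z) :
    M * S.card ≤ ℓ + p ^ α * (M * p ^ μ + e * f.natDegree * f.natDegree) := by
  have hinf : Infinite k := inferInstance
  obtain ⟨b, hhb, hb⟩ := exists_eval_ne_zero_and_pow_ne (p := p) hh0
    (Nat.one_lt_pow (by omega : α + μ ≠ 0) (Fact.out : p.Prime).one_lt)
  obtain ⟨η, hη, -⟩ := exists_isBranchFamily hf.monic (hsep b hhb)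
  let l₀ : Fin f.natDegree := ⟨0, hf.natDegree_pos⟩
  obtain ⟨s, ν, hs, hν_inj, hν⟩ := hf.exists_distinct_orders hη l₀ (n := M * p ^ μ + 1)
    (m := M * p ^ μ + e * f.natDegree * f.natDegree) (by omega)
  obtain ⟨v, o, hv, ho_inj, ho⟩ := hf.exists_distinct_orders hη l₀ hn
  obtain ⟨c, hc, hcL⟩ := exists_X_pow_dvd_derivativeForm (p := p) α μ f h r v s b (η l₀)
    (M := M) (L := L) (by simpa using hcount)
  have hdvd : ∀ j < M, f ∣ derivativeForm p α μ f h r v s c j := fun j hj ↦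
    hf.dvd_derivativeForm hη hv hs hh hr hj (hcL j hj) hL
  have hne : ¬ f ∣ auxiliaryForm (p ^ α) v s c := fun h ↦
    alongBranch_auxiliaryForm_ne_zero (fun i ↦ (ho i).2) ho_inj
      (fun i ↦ (ho i).1.trans_lt hℓ) (fun t ↦ (hν t).2) hν_inj hc <|
      zero_dvd_iff.mp (hη.root l₀ ▸ map_dvd (alongBranch b (η l₀)) h)
  simp only [mem_poleSpace] at hv hs
  refine hf.mul_card_le hη (auxiliaryForm_mem_weightLE _ (fun i ↦ (hv i).1.2)
    (fun t ↦ (hs t).1.2) c) hne l₀ (fun l hl ↦ X_pow_dvd_auxiliaryForm _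
    (fun i ↦ (hv i).2 l hl) (fun t ↦ (hs t).2 l hl) c) S (fun z hz hzb ↦ hb ?_)
    (fun z hz ↦ (hS z hz).evalEval_eq_zero) (fun z hz ↦ hsep _ (hS z hz).eval_ne_zero)
    fun z hz ξ hξ hξf ↦ (hS z hz).X_pow_dvd_auxiliaryForm hα hM (hsep _ (hS z hz).eval_ne_zero)
      (fun t ↦ (hs t).1.1) hdvd hξ hξf
  exact hzb ▸ (hS z hz).map_fst

end Stepanov

section StepanovBound

/-- The value of `p ^ α` from which the degree and rank conditions of Stepanov's method hold on a
curve of weight `e` and degree `d`, with `M` derivatives, `P = p ^ μ`, and twists of weight `c₀`. -/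
def stepanovThreshold (d e c₀ M P : ℕ) : ℕ :=
  1 + M + M * (d * (P * (M * (e * d)) + M * P + e * d * d + d * c₀) + d * (P * M) + 1) +
    (M * P + 1) * (e * d * d)

lemma stepanovThreshold_mono {d e c₀ M P M' P' : ℕ} (hM : M ≤ M') (hP : P ≤ P') :
    stepanovThreshold d e c₀ M P ≤ stepanovThreshold d e c₀ M' P' := by
  unfold stepanovThreshold
  gcongr

-- The truncation order `L` exceeds `P * ℓ` by a quantity independent of `ℓ`, so the number `M * L`
-- of linear conditions is eventually below `(M * P + 1) * n`, where `n = ℓ + 1 - O(1)`.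
lemma exists_truncation_order {d e c₀ M P ℓ : ℕ} (hd : 0 < d)
    (hℓ : stepanovThreshold d e c₀ M P ≤ ℓ + 1) :
    ∃ n L, n + e * d * d ≤ ℓ + 1 ∧
      d * (P * (ℓ + M * (e * d)) + ((M * P + e * d * d) + d * c₀)) <
        L + (d - 1) * (P * (ℓ - M)) ∧
      M * L < (M * P + 1) * n := by
  obtain ⟨D, hD⟩ : ∃ D,
    d * (P * (M * (e * d)) + M * P + e * d * d + d * c₀) + d * (P * M) + 1 = D := ⟨_, rfl⟩
  rw [stepanovThreshold, hD] at hℓ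
  obtain ⟨g, hg⟩ : ∃ g, e * d * d = g := ⟨_, rfl⟩
  have hgℓ : g ≤ ℓ := by nlinarith [Nat.zero_le (M * P * g), Nat.zero_le (M * D)]
  refine ⟨ℓ + 1 - g, P * ℓ + D, by omega, ?_, ?_⟩
  · obtain ⟨x, rfl⟩ : ∃ x, ℓ = M + x := ⟨ℓ - M, by omega⟩
    obtain ⟨y, rfl⟩ : ∃ y, d = y + 1 := ⟨d - 1, by omega⟩
    simp only [Nat.add_sub_cancel_left, Nat.add_sub_cancel]
    rw [← hD]
    ring_nf
    nlinarith [Nat.zero_le (P * M)]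
  · obtain ⟨x, rfl⟩ : ∃ x, ℓ = g + x := ⟨ℓ - g, by omega⟩
    rw [show g + x + 1 - g = x + 1 by omega]
    nlinarith [Nat.zero_le (M * P)]

lemma exists_pow_mem_Icc {p : ℕ} (hp : 1 < p) {M : ℕ} (hM : 0 < M) (hpM : p ≤ M) :
    ∃ μ, M ≤ p ^ μ ∧ p ^ μ ≤ M * M := by
  refine ⟨Nat.clog p M, Nat.le_pow_clog hp M, ?_⟩
  rcases hn : Nat.clog p M with _ | n
  · exact (pow_zero p).trans_le (Nat.mul_pos hM hM)
  · have hlt : p ^ n < M := (Nat.lt_clog_iff_pow_lt hp).mp (by omega)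
    rw [pow_succ]
    gcongr

variable {k : Type*} [Field k] [IsAlgClosed k] {p : ℕ} [Fact p.Prime] [CharP k p] {e c₀ : ℕ}
  {f : k[X][Y]} {h : k[X]} {r : k[X][Y]}

lemma IsWeightedCurve.mul_card_twistedPoints_le_of_le {M μ α : ℕ}
    (hf : IsWeightedCurve e f) (hh0 : h ≠ 0) (hh : h.natDegree ≤ c₀) (hr : r ∈ weightLE e c₀)
    (hsep : ∀ b, h.eval b ≠ 0 → IsUnramifiedAt f b) (hα : α ≠ 0) (hM : M ≤ p)
    (hthr : stepanovThreshold f.natDegree e c₀ M (p ^ μ) ≤ p ^ α)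
    (S : Finset (k × k)) (hS : ∀ z ∈ S, IsTwistedPoint (iterateFrobenius k p (α + μ)) f h r z) :
    M * S.card ≤ p ^ α * (M * p ^ μ + e * f.natDegree * f.natDegree + 1) := by
  obtain ⟨ℓ, hℓ⟩ := Nat.exists_eq_add_one.mpr (pow_pos (Fact.out : p.Prime).pos α)
  obtain ⟨n, L, hn, hL, hcount⟩ := exists_truncation_order hf.natDegree_pos (hthr.trans_eq hℓ)
  have hbound := hf.mul_card_twistedPoints_le hh0 hh hr hsep hα (by omega) hM hn hL hcount S hS
  rw [mul_add _ _ 1]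
  omega

-- When `p < M` the multiplicity `M` is out of reach of derivations, and a power `p ^ μ` of size at
-- least `M` replaces it.
theorem IsWeightedCurve.mul_card_twistedPoints_le_of_threshold_le {M a : ℕ}
    (hf : IsWeightedCurve e f) (hh0 : h ≠ 0) (hh : h.natDegree ≤ c₀) (hr : r ∈ weightLE e c₀)
    (hsep : ∀ b, h.eval b ≠ 0 → IsUnramifiedAt f b) (hM : 0 < M)
    (ha : 2 * (M * M) * stepanovThreshold f.natDegree e c₀ M (M * M) ≤ p ^ a)
    (S : Finset (k × k)) (hS : ∀ z ∈ S, IsTwistedPoint (iterateFrobenius k p a) f h r z) :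
    M * S.card ≤ p ^ a * (M + e * f.natDegree * f.natDegree + 1) := by
  have hp := (Fact.out : p.Prime)
  set t := stepanovThreshold f.natDegree e c₀ M (M * M)
  have ht_pos : 0 < t := by unfold t stepanovThreshold; omega
  have hMM : 1 ≤ M * M := Nat.mul_pos hM hM
  obtain hMp | hMp := le_or_gt M p
  · have ha0 : a ≠ 0 := by
      rintro rfl
      nlinarith [pow_zero p]
    simpa using hf.mul_card_twistedPoints_le_of_le (μ := 0) hh0 hh hr hsep ha0 hMp
      ((stepanovThreshold_mono (P' := M * M) le_rfl (by simpa using hMM)).trans (by nlinarith)) S hS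
  obtain ⟨μ, hMμ, hμM⟩ := exists_pow_mem_Icc hp.one_lt hM hMp.le
  have hμa : μ < a := by
    by_contra! haμ
    nlinarith [Nat.pow_le_pow_right hp.pos haμ]
  obtain ⟨α, rfl⟩ := Nat.exists_eq_add_of_le' hμa.le
  have hα : 2 * (M * M) * t ≤ p ^ α * (M * M) := by
    rw [pow_add] at ha
    exact ha.trans (by gcongr)
  have hbound := hf.mul_card_twistedPoints_le_of_le (M := 1) (μ := μ) (α := α) hh0 hh hr hsep
    (by omega) hp.one_lt.le ((stepanovThreshold_mono hM hμM).trans (by nlinarith)) S hS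
  set g := e * f.natDegree * f.natDegree
  rw [one_mul, one_mul] at hbound
  calc M * S.card ≤ M * (p ^ α * (p ^ μ + g + 1)) := by gcongr
    _ = p ^ α * (M * p ^ μ + M * (g + 1)) := by ring
    _ ≤ p ^ α * (M * p ^ μ + p ^ μ * (g + 1)) := by gcongr
    _ = p ^ (α + μ) * (M + g + 1) := by ring

end StepanovBound

section Chebotarev

variable {k : Type*} [Field k]

/-- The points of the curve `f = 0` with first coordinate in `s`, for `f` monic in `Y`. -/
noncomputable def pointsAbove (f : k[X][Y]) (s : Finset k) : Finset (k × k) :=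
  (s.sigma (fiber f)).map (Equiv.sigmaEquivProd k k).toEmbedding

lemma mem_pointsAbove {f : k[X][Y]} (hf : f.Monic) {s : Finset k} {z : k × k} :
    z ∈ pointsAbove f s ↔ z.1 ∈ s ∧ f.evalEval z.1 z.2 = 0 := by
  simp [pointsAbove, mem_fiber hf]

lemma card_pointsAbove_le (f : k[X][Y]) (s : Finset k) :
    (pointsAbove f s).card ≤ s.card * f.natDegree := by
  rw [pointsAbove, Finset.card_map, Finset.card_sigma]
  exact Finset.sum_le_card_nsmul _ _ _ fun b _ ↦ card_fiber_le b

lemma card_pointsAbove [IsAlgClosed k] {f : k[X][Y]} (hf : f.Monic) {s : Finset k}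
    (hs : ∀ b ∈ s, IsUnramifiedAt f b) : (pointsAbove f s).card = s.card * f.natDegree := by
  rw [pointsAbove, Finset.card_map, Finset.card_sigma]
  exact Finset.sum_const_nat fun b hb ↦ card_fiber hf (hs b hb)

lemma exists_finset_pow_eq_and_eval_ne_zero [IsAlgClosed k] {p : ℕ} [Fact p.Prime] [CharP k p]
    {a : ℕ} (ha : a ≠ 0) {h : k[X]} (hh : h ≠ 0) :
    ∃ s : Finset k, (∀ b, b ∈ s ↔ b ^ p ^ a = b ∧ h.eval b ≠ 0) ∧
      p ^ a ≤ s.card + h.natDegree := by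
  classical
  have hp := (Fact.out : p.Prime)
  have hne : (X ^ p ^ a - X : k[X]) ≠ 0 := FiniteField.X_pow_card_pow_sub_X_ne_zero k ha hp.one_lt
  refine ⟨(X ^ p ^ a - X : k[X]).roots.toFinset \ h.roots.toFinset, fun b ↦ ?_, ?_⟩
  · simp [hne, hh, sub_eq_zero]
  have hcard : (X ^ p ^ a - X : k[X]).roots.toFinset.card = p ^ a := by
    rw [Multiset.toFinset_card_of_nodup
        (nodup_roots (galois_poly_separable p _ (dvd_pow_self p ha))),
      splits_iff_card_roots.mp (IsAlgClosed.splits _),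
      FiniteField.X_pow_card_pow_sub_X_natDegree_eq k ha hp.one_lt]
  have hroots := (Multiset.toFinset_card_le h.roots).trans (card_roots' h)
  have hsdiff := Finset.le_card_sdiff h.roots.toFinset (X ^ p ^ a - X : k[X]).roots.toFinset
  omega

/-- The multiplicity at which Stepanov's bound `q (1 + O(1 / M))` suffices for the count in
`IsWeightedCurve.exists_isTwistedPoint`. -/
def chebotarevMultiplicity (d e : ℕ) : ℕ := 4 * d * (e * d * d + 1) + 1

/-- The field size from which `IsWeightedCurve.exists_isTwistedPoint` holds. -/
def chebotarevThreshold (d e c₀ : ℕ) : ℕ :=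
  let M := chebotarevMultiplicity d e
  2 * (M * M) * stepanovThreshold d e c₀ M (M * M) + 4 * d * c₀ + 2

-- Among `d` classes of points, `d - 1` have about `q` points each and the last at most `q / 4`,
-- which leaves out about `3 q / 4` of the `d * q` points.
lemma false_of_class_counts {d B q G c₀ E M g : ℕ} (hd : 0 < d) (hB : 4 * d * B ≤ q)
    (hG : q ≤ G + c₀) (htotal : G * d ≤ B * d + E) (hE : M * E ≤ (d - 1) * (q * (M + g + 1)))
    (hM : 4 * d * (g + 1) < M) (hc₀ : 4 * d * c₀ ≤ q) (hq : 0 < q) : False := by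
  obtain ⟨d', rfl⟩ := Nat.exists_eq_add_one.mpr hd
  rw [Nat.add_sub_cancel] at hE
  have hMg : 4 * (d' * (g + 1)) ≤ M := by nlinarith
  nlinarith [Nat.mul_le_mul_left q hMg, Nat.mul_le_mul_left M hB, Nat.mul_le_mul_left M hc₀,
    Nat.mul_le_mul_left M htotal, Nat.mul_le_mul_left (M * (d' + 1)) hG,
    Nat.mul_pos (show 0 < M by omega) hq]

theorem IsWeightedCurve.exists_isTwistedPoint [IsAlgClosed k] {p : ℕ} [Fact p.Prime] [CharP k p]
    {ι : Type*} [Fintype ι] {e c₀ a : ℕ} {f : k[X][Y]} {h : k[X]} {r : ι → k[X][Y]}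
    (hf : IsWeightedCurve e f) (hh0 : h ≠ 0) (hh : h.natDegree ≤ c₀)
    (hr : ∀ j, r j ∈ weightLE e c₀) (hsep : ∀ b, h.eval b ≠ 0 → IsUnramifiedAt f b)
    (ha : chebotarevThreshold f.natDegree e c₀ ≤ p ^ a) (hι : Fintype.card ι ≤ f.natDegree)
    (hcover : IsTwistedCover (iterateFrobenius k p a) f h r) (j₀ : ι)
    (B : Finset k) (hB : 4 * f.natDegree * B.card ≤ p ^ a) :
    ∃ z, IsTwistedPoint (iterateFrobenius k p a) f h (r j₀) z ∧ z.1 ∉ B := by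
  classical
  by_contra! hno
  rw [chebotarevThreshold] at ha
  set M := chebotarevMultiplicity f.natDegree e
  have ha0 : a ≠ 0 := by
    rintro rfl
    simp at ha
  obtain ⟨s, hs, hs_card⟩ := exists_finset_pow_eq_and_eval_ne_zero (p := p) ha0 hh0
  let S (j : ι) : Finset (k × k) :=
    {z ∈ pointsAbove f s | IsTwistedPoint (iterateFrobenius k p a) f h (r j) z}
  have hS (j) : M * (S j).card ≤ p ^ a * (M + e * f.natDegree * f.natDegree + 1) :=
    hf.mul_card_twistedPoints_le_of_threshold_le hh0 hh (hr j) hsep (M := M) (Nat.succ_pos _)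
      (by omega) _ fun z hz ↦ (Finset.mem_filter.mp hz).2
  have hj₀ : (S j₀).card ≤ B.card * f.natDegree := by
    refine (Finset.card_le_card fun z hz ↦ ?_).trans (card_pointsAbove_le f B)
    have hz := (Finset.mem_filter.mp hz).2
    exact (mem_pointsAbove hf.monic).mpr ⟨hno z hz, hz.evalEval_eq_zero⟩
  have htotal : s.card * f.natDegree ≤ ∑ j, (S j).card := by
    rw [← card_pointsAbove hf.monic fun b hb ↦ hsep b ((hs b).mp hb).2]
    refine (Finset.card_le_card fun z hz ↦ ?_).trans Finset.card_biUnion_le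
    obtain ⟨hzs, hzf⟩ := (mem_pointsAbove hf.monic).mp hz
    obtain ⟨j, hj⟩ := hcover z ((hs _).mp hzs).1 ((hs _).mp hzs).2 hzf
    exact Finset.mem_biUnion.mpr ⟨j, Finset.mem_univ j, Finset.mem_filter.mpr ⟨hz, hj⟩⟩
  rw [← Finset.add_sum_erase _ _ (Finset.mem_univ j₀)] at htotal
  refine false_of_class_counts (M := M) hf.natDegree_pos hB
    (hs_card.trans (Nat.add_le_add_left hh _)) (htotal.trans (Nat.add_le_add_right hj₀ _)) ?_
    (Nat.lt_succ_self _) (by omega) (by omega)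
  calc M * ∑ j ∈ Finset.univ.erase j₀, (S j).card
      ≤ (Fintype.card ι - 1) * (p ^ a * (M + e * f.natDegree * f.natDegree + 1)) := by
        rw [Finset.mul_sum, ← Finset.card_univ, ← Finset.card_erase_of_mem (Finset.mem_univ j₀)]
        exact Finset.sum_le_card_nsmul _ _ _ fun j _ ↦ hS j
    _ ≤ _ := by gcongr

end Chebotarev

section Saturation

variable {𝒰 : Ultrafilter ℕ} {S : ℕ → Type*} [∀ i, Nonempty (S i)]

lemma exists_forall_nat_eventually (h𝒰 : (𝒰 : Filter ℕ) ≤ Filter.atTop)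
    {P : ℕ → ∀ i, S i → Prop} (h : ∀ n, ∀ᶠ i in 𝒰, ∃ z, ∀ j < n, P j i z) :
    ∃ z : ∀ i, S i, ∀ n, ∀ᶠ i in 𝒰, P n i (z i) := by
  classical
  let N (i : ℕ) : ℕ := Nat.findGreatest (fun n ↦ ∃ z, ∀ j < n, P j i z) i
  have hN (i) : ∃ z, ∀ j < N i, P j i z :=
    Nat.findGreatest_spec (P := fun n ↦ ∃ z, ∀ j < n, P j i z) i.zero_le
      ⟨Classical.arbitrary _, by simp⟩
  choose z hz using hN
  refine ⟨z, fun n ↦ ?_⟩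
  filter_upwards [h (n + 1), h𝒰 (Filter.eventually_ge_atTop (n + 1))] with i hex hi
  exact hz i n (Nat.le_findGreatest hi hex)

theorem exists_forall_eventually_of_finset {J : Type*} [Countable J]
    (h𝒰 : (𝒰 : Filter ℕ) ≤ Filter.atTop) {P : J → ∀ i, S i → Prop}
    (h : ∀ s : Finset J, ∀ᶠ i in 𝒰, ∃ z, ∀ j ∈ s, P j i z) :
    ∃ z : ∀ i, S i, ∀ j, ∀ᶠ i in 𝒰, P j i (z i) := by
  classical
  obtain hJ | hJ := isEmpty_or_nonempty J
  · exact ⟨fun i ↦ Classical.arbitrary _, fun j ↦ (hJ.false j).elim⟩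
  obtain ⟨g, hg⟩ := exists_surjective_nat J
  obtain ⟨z, hz⟩ := exists_forall_nat_eventually h𝒰 (P := fun n i z ↦ P (g n) i z) fun n ↦ by
    filter_upwards [h ((Finset.range n).image g)] with i ⟨z, hz⟩
    exact ⟨z, fun j hj ↦ hz _ (Finset.mem_image_of_mem _ (Finset.mem_range.mpr hj))⟩
  exact ⟨z, hg.forall.mpr hz⟩

end Saturation

section Ultraproduct

variable {I : Type*} (𝒰 : Ultrafilter I) (K L : I → Type*) [∀ i, Field (K i)] [∀ i, Field (L i)]

/-- The ideal of the families that vanish almost everywhere along `𝒰`. -/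
def vanishingIdeal : Ideal (∀ i, K i) where
  carrier := {x | ∀ᶠ i in 𝒰, x i = 0}
  add_mem' hx hy := by
    filter_upwards [hx, hy] with i hxi hyi
    rw [Pi.add_apply, hxi, hyi, add_zero]
  zero_mem' := Filter.Eventually.of_forall fun _ ↦ rfl
  smul_mem' c x hx := by
    filter_upwards [hx] with i hxi
    rw [Pi.smul_apply', hxi, smul_zero]

lemma mem_vanishingIdeal {x : ∀ i, K i} : x ∈ vanishingIdeal 𝒰 K ↔ ∀ᶠ i in 𝒰, x i = 0 := Iff.rfl

instance : (vanishingIdeal 𝒰 K).IsMaximal := by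
  rw [Ideal.isMaximal_iff]
  refine ⟨by simp [mem_vanishingIdeal, 𝒰.neBot.ne], fun J x hJ hx hxJ ↦ ?_⟩
  have hinv : 1 - x⁻¹ * x ∈ J := hJ <| by
    filter_upwards [Ultrafilter.eventually_not.mpr hx] with i hxi
    simp [hxi]
  simpa using J.add_mem hinv (J.mul_mem_left x⁻¹ hxJ)

/-- The ultraproduct of the fields `K i` along `𝒰`, as a quotient of their product ring. -/
def Ultraproduct : Type _ := (∀ i, K i) ⧸ vanishingIdeal 𝒰 K

namespace Ultraproduct

noncomputable instance : Field (Ultraproduct 𝒰 K) := Ideal.Quotient.field (vanishingIdeal 𝒰 K)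

variable {K L}

/-- The class of a family in the ultraproduct. -/
noncomputable def mk : (∀ i, K i) →+* Ultraproduct 𝒰 K := Ideal.Quotient.mk (vanishingIdeal 𝒰 K)

variable {𝒰}

lemma mk_surjective : Function.Surjective (mk 𝒰 (K := K)) := Ideal.Quotient.mk_surjective

lemma mk_eq_zero {x : ∀ i, K i} : mk 𝒰 x = 0 ↔ ∀ᶠ i in 𝒰, x i = 0 :=
  Ideal.Quotient.eq_zero_iff_mem (I := vanishingIdeal 𝒰 K)

lemma mk_eq {x y : ∀ i, K i} : mk 𝒰 x = mk 𝒰 y ↔ ∀ᶠ i in 𝒰, x i = y i := by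
  rw [← sub_eq_zero, ← map_sub, mk_eq_zero]
  simp only [Pi.sub_apply, sub_eq_zero]

instance [∀ i, IsAlgClosed (K i)] : IsAlgClosed (Ultraproduct 𝒰 K) := by
  refine IsAlgClosed.of_exists_root _ fun P hP hirr ↦ ?_
  obtain ⟨Q, hQ, hdeg, hmonic⟩ := lifts_and_natDegree_eq_and_monic
    ((mem_lifts _).mpr (map_surjective (mk 𝒰) mk_surjective P)) hP
  have hroot (i) : ∃ x : K i, (Q.map (Pi.evalRingHom K i)).eval x = 0 := by
    refine IsAlgClosed.exists_root _ ?_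
    rw [degree_eq_natDegree (hmonic.map _).ne_zero, hmonic.natDegree_map, hdeg]
    exact_mod_cast hirr.natDegree_pos.ne'
  choose x hx using hroot
  have hQx : Q.eval x = 0 := funext fun i ↦
    (eval_map_apply (f := Pi.evalRingHom K i) x).symm.trans (hx i)
  exact ⟨mk 𝒰 x, by rw [← hQ, eval_map_apply, hQx, map_zero]⟩

variable (𝒰)

/-- The homomorphism of ultraproducts induced by a family of homomorphisms. -/
noncomputable def map (σ : ∀ i, K i →+* L i) : Ultraproduct 𝒰 K →+* Ultraproduct 𝒰 L :=
  Ideal.Quotient.lift (vanishingIdeal 𝒰 K)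
    ((mk 𝒰).comp (RingHom.pi fun i ↦ (σ i).comp (Pi.evalRingHom K i))) fun _ hx ↦
      mk_eq_zero.mpr <| hx.mono fun i hxi ↦ (congrArg (σ i) hxi).trans (map_zero _)

variable {𝒰}

lemma map_mk (σ : ∀ i, K i →+* L i) (x : ∀ i, K i) :
    map 𝒰 σ (mk 𝒰 x) = mk 𝒰 fun i ↦ σ i (x i) := rfl

end Ultraproduct

end Ultraproduct

section Ultralimit

variable {I R S : Type*} {T : I → Type*} [CommRing R] [CommRing S] [∀ i, CommRing (T i)]

lemma map_eq_zero_iff_forall_mem_support (φ : R →+* S) {P : R[X]} :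
    P.map φ = 0 ↔ ∀ n ∈ P.support, φ (P.coeff n) = 0 := by
  simp only [Polynomial.ext_iff, coeff_map, coeff_zero]
  refine ⟨fun h n _ ↦ h n, fun h n ↦ ?_⟩
  by_cases hn : n ∈ P.support
  · exact h n hn
  · rw [notMem_support_iff.mp hn, map_zero]

/-- An element of `R` vanishes in `S` if and only if it vanishes in almost all the `T i`. This
describes how an ultraproduct `S` and its factors `T i` compare to their product `R`, and the
description is inherited by the polynomial rings. -/
def IsUltralimit (𝒰 : Filter I) (φ : R →+* S) (ψ : ∀ i, R →+* T i) : Prop :=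
  ∀ x, φ x = 0 ↔ ∀ᶠ i in 𝒰, ψ i x = 0

namespace IsUltralimit

variable {𝒰 : Filter I} {φ : R →+* S} {ψ : ∀ i, R →+* T i}

lemma eq_iff (h : IsUltralimit 𝒰 φ ψ) {x y : R} : φ x = φ y ↔ ∀ᶠ i in 𝒰, ψ i x = ψ i y := by
  simpa only [map_sub, sub_eq_zero] using h (x - y)

lemma ne_iff {𝒰 : Ultrafilter I} (h : IsUltralimit 𝒰 φ ψ) {x y : R} :
    φ x ≠ φ y ↔ ∀ᶠ i in 𝒰, ψ i x ≠ ψ i y := by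
  rw [Ne, h.eq_iff, Ultrafilter.eventually_not]

lemma mapRingHom (h : IsUltralimit 𝒰 φ ψ) :
    IsUltralimit 𝒰 (Polynomial.mapRingHom φ) fun i ↦ Polynomial.mapRingHom (ψ i) := by
  intro P
  simp only [coe_mapRingHom, map_eq_zero_iff_forall_mem_support, h _,
    Filter.eventually_all_finset]

lemma eventually_isUnit (h : IsUltralimit 𝒰 φ ψ) (hφ : Function.Surjective φ) {x : R}
    (hx : IsUnit (φ x)) : ∀ᶠ i in 𝒰, IsUnit (ψ i x) := by
  obtain ⟨z, hz⟩ := isUnit_iff_exists_inv.mp hx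
  obtain ⟨y, rfl⟩ := hφ z
  rw [← map_mul, ← map_one φ, h.eq_iff] at hz
  filter_upwards [hz] with i hi
  exact IsUnit.of_mul_eq_one (ψ i y) (by rw [← map_mul, hi, map_one])

end IsUltralimit

lemma exists_eventually_map_eq {l : Filter I} {ψ : ∀ i, R →+* T i} {G : ∀ i, (T i)[X]} {d : ℕ}
    (hd : ∀ᶠ i in l, (G i).natDegree ≤ d)
    (hG : ∀ m, ∃ x : R, ∀ᶠ i in l, ψ i x = (G i).coeff m) :
    ∃ P : R[X], ∀ᶠ i in l, P.map (ψ i) = G i := by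
  choose x hx using hG
  refine ⟨∑ m ∈ Finset.range (d + 1), monomial m (x m), ?_⟩
  filter_upwards [hd, (Filter.eventually_all_finset (Finset.range (d + 1))).mpr fun m _ ↦ hx m]
    with i hdi hxi
  rw [(G i).as_sum_range' (d + 1) (by omega), Polynomial.map_sum]
  exact Finset.sum_congr rfl fun m hm ↦ by rw [map_monomial, hxi m hm]

end Ultralimit

section BivariateFactors

lemma coeff_coeff_swap {R : Type*} [CommRing R] (G : R[X][Y]) (m n : ℕ) :
    ((Bivariate.swap G).coeff n).coeff m = (G.coeff m).coeff n := by
  induction G using Polynomial.induction_on' with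
  | add p q hp hq => simp only [map_add, coeff_add, hp, hq]
  | monomial k a =>
    induction a using Polynomial.induction_on' with
    | add p q hp hq => simp only [map_add, coeff_add, hp, hq]
    | monomial l a =>
      rw [Bivariate.swap_monomial_monomial]
      simp only [coeff_monomial]
      split_ifs <;> simp_all [coeff_monomial]

lemma natDegree_swap_le_iff {R : Type*} [CommRing R] {G : R[X][Y]} {N : ℕ} :
    (Bivariate.swap G).natDegree ≤ N ↔ ∀ m, (G.coeff m).natDegree ≤ N := by
  simp only [natDegree_le_iff_coeff_eq_zero, Polynomial.ext_iff, coeff_coeff_swap, coeff_zero]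
  exact ⟨fun h m n hn ↦ h n hn m, fun h n hn m ↦ h m n hn⟩

lemma natDegree_coeff_le_of_dvd {R : Type*} [CommRing R] [IsDomain R] {f g : R[X][Y]} (hf : f ≠ 0)
    (hg : g ∣ f) {N : ℕ} (hN : ∀ m, (f.coeff m).natDegree ≤ N) (m : ℕ) :
    (g.coeff m).natDegree ≤ N := by
  have hswap : Bivariate.swap f ≠ 0 := (map_ne_zero_iff _ Bivariate.swap.injective).mpr hf
  refine natDegree_swap_le_iff.mp (le_trans ?_ (natDegree_swap_le_iff.mpr hN)) m
  exact natDegree_le_of_dvd (_root_.map_dvd Bivariate.swap hg) hswap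

variable {A W : Type*} [Field A] [Field W] (ι : A →+* W)

lemma mem_lifts_of_eval_mem_range [Infinite A] {c : W[X]}
    (hc : ∀ x : A, c.eval (ι x) ∈ Set.range ι) : c ∈ lifts ι := by
  classical
  choose y hy using hc
  obtain ⟨s, hs⟩ := Infinite.exists_subset_card_eq A (c.natDegree + 1)
  refine (mem_lifts _).mpr ⟨Lagrange.interpolate s id y,
    eq_of_degrees_lt_of_eval_index_eq s ι.injective.injOn ?_ ?_ fun x hx ↦ ?_⟩
  · rw [degree_map]
    exact Lagrange.degree_interpolate_lt _ (Set.injOn_id _)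
  · rw [hs]
    exact degree_le_natDegree.trans_lt (by exact_mod_cast Nat.lt_succ_self _)
  · rw [← hy, eval_map_apply]
    exact congrArg ι (Lagrange.eval_interpolate_at_node (v := id) y (Set.injOn_id _) hx)

variable [IsAlgClosed A]

lemma mem_lifts_of_dvd_map {P : A[X]} (hP : P.Monic) {g : W[X]} (hg : g.Monic)
    (hgP : g ∣ P.map ι) : g ∈ lifts ι := by
  have hP0 := (hP.map ι).ne_zero
  refine (((IsAlgClosed.splits P).map ι).of_dvd hP0 hgP).mem_lift_of_roots_mem_range hg ι
    fun x hx ↦ ?_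
  have hx := Multiset.mem_of_le (roots.le_of_dvd hP0 hgP) hx
  rw [(IsAlgClosed.splits P).roots_map] at hx
  obtain ⟨y, -, rfl⟩ := Multiset.mem_map.mp hx
  exact ⟨y, rfl⟩

lemma mem_lifts_of_dvd_map_map {f : A[X][Y]} (hf : f.Monic) {g : W[X][Y]} (hg : g.Monic)
    (hgf : g ∣ f.map (mapRingHom ι)) : g ∈ lifts (mapRingHom ι) := by
  have : Infinite A := IsAlgClosed.instInfinite
  refine (lifts_iff_coeff_lifts _).mpr fun m ↦
    mem_lifts_of_eval_mem_range ι fun x ↦ ?_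
  have hx : g.map (evalRingHom (ι x)) ∣ (f.map (evalRingHom x)).map ι := by
    convert Polynomial.map_dvd (evalRingHom (ι x)) hgf using 1
    simp only [Polynomial.map_map]
    congr 1
    ext <;> simp
  simpa using (lifts_iff_coeff_lifts _).mp (mem_lifts_of_dvd_map ι (hf.map _) (hg.map _) hx) m

theorem irreducible_map_map {f : A[X][Y]} (hf : f.Monic) (hirr : Irreducible f) :
    Irreducible (f.map (mapRingHom ι)) := by
  have hinj : Function.Injective (Polynomial.map (mapRingHom ι)) :=
    map_injective _ (map_injective _ ι.injective)
  rw [(hf.map _).irreducible_iff_natDegree']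
  refine ⟨fun h ↦ hirr.ne_one (hinj (by simpa using h)), fun g g' hg hg' hgg hmem ↦ ?_⟩
  obtain ⟨G, hG, -, hG_monic⟩ := lifts_and_natDegree_eq_and_monic
    (mem_lifts_of_dvd_map_map ι hf hg (Dvd.intro _ hgg)) hg
  obtain ⟨G', hG', hG'_deg, hG'_monic⟩ := lifts_and_natDegree_eq_and_monic
    (mem_lifts_of_dvd_map_map ι hf hg' (Dvd.intro_left _ hgg)) hg'
  refine (hf.irreducible_iff_natDegree'.mp hirr).2 G G' hG_monic hG'_monic (hinj ?_) ?_
  · rw [Polynomial.map_mul, hG, hG', hgg]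
  · rwa [hG'_deg, ← hf.natDegree_map (mapRingHom ι)]

end BivariateFactors

section UltraproductPolynomials

variable {I : Type*} {𝒰 : Ultrafilter I} {K : I → Type*} [∀ i, Field (K i)]

variable (K) in
/-- The reduction of a bivariate polynomial over the product to its `i`-th factor. -/
noncomputable def component (i : I) : (∀ i, K i)[X][Y] →+* (K i)[X][Y] :=
  mapRingHom (mapRingHom (Pi.evalRingHom K i))

variable (𝒰) in
/-- The image over the ultraproduct of a bivariate polynomial over the product. -/
noncomputable def toUltraproduct : (∀ i, K i)[X][Y] →+* (Ultraproduct 𝒰 K)[X][Y] :=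
  mapRingHom (mapRingHom (Ultraproduct.mk 𝒰))

lemma isUltralimit_mk :
    IsUltralimit 𝒰 (Ultraproduct.mk 𝒰 (K := K)) fun i ↦ Pi.evalRingHom K i :=
  fun _ ↦ Ultraproduct.mk_eq_zero

lemma isUltralimit_toUltraproduct :
    IsUltralimit (R := (∀ i, K i)[X][Y]) 𝒰 (toUltraproduct 𝒰) (component K) :=
  isUltralimit_mk.mapRingHom.mapRingHom

lemma toUltraproduct_surjective : Function.Surjective (toUltraproduct 𝒰 (K := K)) :=
  map_surjective _ (map_surjective _ Ultraproduct.mk_surjective)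

lemma exists_forall_of_eventually_exists {l : Filter I} {S : I → Type*} [∀ i, Nonempty (S i)]
    {P : ∀ i, S i → Prop} (h : ∀ᶠ i in l, ∃ z, P i z) : ∃ z : ∀ i, S i, ∀ᶠ i in l, P i (z i) :=
  ⟨fun i ↦ Classical.epsilon (P i), h.mono fun _ hi ↦ Classical.epsilon_spec hi⟩

lemma exists_eventually_component_eq_of_dvd {F : (∀ i, K i)[X][Y]} (hF : F.Monic)
    {G : ∀ i, (K i)[X][Y]} (hG : ∀ᶠ i in 𝒰, G i ∣ component K i F) :
    ∃ P : (∀ i, K i)[X][Y], ∀ᶠ i in 𝒰, component K i P = G i := by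
  have hF0 (i) : component K i F ≠ 0 := (hF.map _).ne_zero
  refine exists_eventually_map_eq (d := F.natDegree) (hG.mono fun i hi ↦
    (natDegree_le_of_dvd hi (hF0 i)).trans natDegree_map_le) fun m ↦ ?_
  refine exists_eventually_map_eq (d := (Bivariate.swap F).natDegree) (hG.mono fun i hi ↦
    natDegree_coeff_le_of_dvd (hF0 i) hi (fun n ↦ ?_) m)
    fun n ↦ ⟨fun i ↦ ((G i).coeff m).coeff n, .of_forall fun i ↦ rfl⟩
  exact (coeff_map (mapRingHom (Pi.evalRingHom K i)) (p := F) n).symm ▸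
    natDegree_map_le.trans (natDegree_swap_le_iff.mp le_rfl n)

theorem eventually_irreducible_component {F : (∀ i, K i)[X][Y]} (hF : F.Monic)
    (hirr : Irreducible (toUltraproduct 𝒰 F)) : ∀ᶠ i in 𝒰, Irreducible (component K i F) := by
  by_contra hred
  have hunit (i) : ¬ IsUnit (component K i F) := fun hi ↦ by
    have hdeg : F.natDegree = 0 := by
      rw [← hF.natDegree_map (mapRingHom (Pi.evalRingHom K i))]
      exact natDegree_eq_zero_of_isUnit hi
    rw [eq_one_of_monic_natDegree_zero hF hdeg, map_one] at hirr
    exact not_irreducible_one hirr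
  have hfactor : ∀ᶠ i in 𝒰, ∃ G : (K i)[X][Y] × (K i)[X][Y],
      component K i F = G.1 * G.2 ∧ ¬ IsUnit G.1 ∧ ¬ IsUnit G.2 :=
    (Ultrafilter.eventually_not.mpr hred).mono fun i hi ↦ by
      simpa [irreducible_iff, hunit i] using hi
  obtain ⟨G, hG⟩ := exists_forall_of_eventually_exists hfactor
  obtain ⟨P, hP⟩ := exists_eventually_component_eq_of_dvd hF
    (hG.mono fun i hi ↦ Dvd.intro _ hi.1.symm)
  obtain ⟨Q, hQ⟩ := exists_eventually_component_eq_of_dvd hF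
    (hG.mono fun i hi ↦ Dvd.intro_left _ hi.1.symm)
  have hPQ : toUltraproduct 𝒰 F = toUltraproduct 𝒰 P * toUltraproduct 𝒰 Q := by
    rw [← map_mul, (isUltralimit_toUltraproduct (K := K)).eq_iff]
    filter_upwards [hG, hP, hQ] with i hGi hPi hQi
    rw [map_mul, hGi.1, hPi, hQi]
  have hunit_lift {Q : (∀ i, K i)[X][Y]} (hQ : IsUnit (toUltraproduct 𝒰 Q)) :
      ∀ᶠ i in 𝒰, IsUnit (component K i Q) :=
    isUltralimit_toUltraproduct.eventually_isUnit toUltraproduct_surjective hQ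
  obtain hu | hu := hirr.isUnit_or_isUnit hPQ
  · obtain ⟨i, hi, hPi, hGi⟩ := ((hunit_lift hu).and (hP.and hG)).exists
    exact hGi.2.1 (hPi ▸ hi)
  · obtain ⟨i, hi, hQi, hGi⟩ := ((hunit_lift hu).and (hQ.and hG)).exists
    exact hGi.2.2 (hQi ▸ hi)

end UltraproductPolynomials

section WeightsOfMonicPolynomials

variable {R : Type*} [CommRing R] {F G : R[X][Y]} {e : ℕ}

lemma mem_weightLE_of_natDegree_coeff_le (he : ∀ m, (G.coeff m).natDegree ≤ e) (e' : ℕ) :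
    G ∈ weightLE e' (e + e' * G.natDegree) := by
  rw [mem_weightLE_iff]
  intro m i hmi
  have hm : m ≤ G.natDegree := le_natDegree_of_ne_zero fun h ↦ hmi (by rw [h, coeff_zero])
  exact add_le_add ((le_natDegree_of_ne_zero hmi).trans (he m)) (Nat.mul_le_mul_left e' hm)

lemma mem_weightLE_of_monic (hF : F.Monic) (he : ∀ m, (F.coeff m).natDegree ≤ e) :
    F ∈ weightLE e (e * F.natDegree) := by
  rw [mem_weightLE_iff]
  intro m i hmi
  have hm : m ≤ F.natDegree := le_natDegree_of_ne_zero fun h ↦ hmi (by rw [h, coeff_zero])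
  obtain hm | rfl := hm.lt_or_eq
  · calc
      i + e * m ≤ e + e * m := by gcongr; exact (le_natDegree_of_ne_zero hmi).trans (he m)
      _ = e * (m + 1) := by ring
      _ ≤ e * F.natDegree := Nat.mul_le_mul_left e hm
  · rw [hF.coeff_natDegree, coeff_one, ite_ne_right_iff] at hmi
    rw [hmi.1, zero_add]

lemma map_mem_weightLE {S : Type*} [CommRing S] (φ : R →+* S) {N : ℕ} (hG : G ∈ weightLE e N) :
    G.map (mapRingHom φ) ∈ weightLE e N := by
  rw [mem_weightLE_iff] at hG ⊢
  intro m i hmi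
  rw [coeff_map, coe_mapRingHom, coeff_map] at hmi
  exact hG m i fun h ↦ hmi (by rw [h, map_zero])

lemma exists_forall_mem_weightLE {ι : Type*} [Finite ι] (e : ℕ) (r : ι → R[X][Y]) :
    ∃ N, ∀ j, r j ∈ weightLE e N := by
  have h (j) : r j ∈ weightLE e ((Bivariate.swap (r j)).natDegree + e * (r j).natDegree) :=
    mem_weightLE_of_natDegree_coeff_le (natDegree_swap_le_iff.mp le_rfl) e
  obtain ⟨N, hN⟩ := Finite.exists_le fun j ↦
    (Bivariate.swap (r j)).natDegree + e * (r j).natDegree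
  exact ⟨N, fun j ↦ weightLE_mono (hN j) (h j)⟩

end WeightsOfMonicPolynomials

section TransferOfCovers

lemma isUnramifiedAt_of_C_mem_span {k : Type*} [Field k] {f : k[X][Y]} {h : k[X]}
    (hsep : C h ∈ Ideal.span {f, derivative f}) {b : k} (hb : h.eval b ≠ 0) :
    IsUnramifiedAt f b := by
  intro w hw hw'
  obtain ⟨t, s, hst⟩ := Ideal.mem_span_pair.mp hsep
  have := congrArg (evalEval b w) hst
  rw [evalEval_add, evalEval_mul, evalEval_mul, hw, hw', evalEval_C, mul_zero, mul_zero,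
    add_zero] at this
  exact hb this.symm

lemma isTwistedPoint_map_iff {R S : Type*} [CommRing R] [CommRing S] (φ : R →+* S) {σ : S →+* S}
    {f r : R[X][Y]} {h : R[X]} {z : R × R} :
    IsTwistedPoint σ (f.map (mapRingHom φ)) (h.map φ) (r.map (mapRingHom φ)) (φ z.1, φ z.2) ↔
      φ (f.evalEval z.1 z.2) = 0 ∧ φ (h.eval z.1) ≠ 0 ∧ σ (φ z.1) = φ z.1 ∧
        φ (h.eval z.1) * σ (φ z.2) = φ (r.evalEval z.1 z.2) := by
  rw [← eval_map_apply (p := h), ← map_mapRingHom_evalEval, ← map_mapRingHom_evalEval]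
  exact ⟨fun ⟨h₁, h₂, h₃, h₄⟩ ↦ ⟨h₁, h₂, h₃, h₄⟩, fun ⟨h₁, h₂, h₃, h₄⟩ ↦ ⟨h₁, h₂, h₃, h₄⟩⟩

variable {I : Type*} {𝒰 : Ultrafilter I} {K : I → Type*} [∀ i, Field (K i)]
  {σ : ∀ i, K i →+* K i} {F : (∀ i, K i)[X][Y]} {H : (∀ i, K i)[X]}

lemma isTwistedPoint_toUltraproduct_iff {R : (∀ i, K i)[X][Y]} {z : ∀ i, K i × K i} :
    IsTwistedPoint (Ultraproduct.map 𝒰 σ) (toUltraproduct 𝒰 F) (H.map (Ultraproduct.mk 𝒰))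
        (toUltraproduct 𝒰 R)
        (Ultraproduct.mk 𝒰 fun i ↦ (z i).1, Ultraproduct.mk 𝒰 fun i ↦ (z i).2) ↔
      ∀ᶠ i in 𝒰, IsTwistedPoint (σ i) (component K i F) (H.map (Pi.evalRingHom K i))
        (component K i R) (z i) := by
  let z' : (∀ i, K i) × (∀ i, K i) := (fun i ↦ (z i).1, fun i ↦ (z i).2)
  have hcomponent (i) : IsTwistedPoint (σ i) (component K i F) (H.map (Pi.evalRingHom K i))
      (component K i R) (z i) ↔ _ := isTwistedPoint_map_iff (Pi.evalRingHom K i) (z := z')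
  refine (isTwistedPoint_map_iff (Ultraproduct.mk 𝒰) (z := z')).trans ?_
  rw [Filter.eventually_congr (.of_forall hcomponent)]
  simp only [Ultraproduct.map_mk, ← map_mul, Ultraproduct.mk_eq, Ultraproduct.mk_eq_zero, Ne,
    ← Ultrafilter.eventually_not, ← Filter.eventually_and]
  rfl

lemma eventually_isTwistedCover_component {J : Type*} {R : J → (∀ i, K i)[X][Y]}
    (hcover : IsTwistedCover (Ultraproduct.map 𝒰 σ) (toUltraproduct 𝒰 F)
      (H.map (Ultraproduct.mk 𝒰)) fun j ↦ toUltraproduct 𝒰 (R j)) :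
    ∀ᶠ i in 𝒰, IsTwistedCover (σ i) (component K i F) (H.map (Pi.evalRingHom K i))
      fun j ↦ component K i (R j) := by
  by_contra hcon
  rw [← Ultrafilter.eventually_not] at hcon
  obtain ⟨z, hz⟩ : ∃ z : ∀ i, K i × K i, ∀ᶠ i in 𝒰, σ i (z i).1 = (z i).1 ∧
      (H.map (Pi.evalRingHom K i)).eval (z i).1 ≠ 0 ∧
      (component K i F).evalEval (z i).1 (z i).2 = 0 ∧
      ∀ j, ¬ IsTwistedPoint (σ i) (component K i F) (H.map (Pi.evalRingHom K i))
        (component K i (R j)) (z i) :=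
    exists_forall_of_eventually_exists <| hcon.mono fun i hi ↦ by
      simpa only [IsTwistedCover, not_forall, not_exists, exists_prop] using hi
  have heval : (H.map (Ultraproduct.mk 𝒰)).eval (Ultraproduct.mk 𝒰 fun i ↦ (z i).1) ≠ 0 := by
    intro h
    rw [eval_map_apply, Ultraproduct.mk_eq_zero] at h
    obtain ⟨i, hi, h0⟩ := (hz.and h).exists
    exact hi.2.1 ((eval_map_apply (f := Pi.evalRingHom K i) fun i ↦ (z i).1).trans h0)
  have hroot : (toUltraproduct 𝒰 F).evalEval (Ultraproduct.mk 𝒰 fun i ↦ (z i).1)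
      (Ultraproduct.mk 𝒰 fun i ↦ (z i).2) = 0 := by
    rw [toUltraproduct, coe_mapRingHom, map_mapRingHom_evalEval, Ultraproduct.mk_eq_zero]
    exact hz.mono fun i hi ↦ Eq.trans
      (map_mapRingHom_evalEval (Pi.evalRingHom K i) F (fun i ↦ (z i).1) fun i ↦ (z i).2).symm
      hi.2.2.1
  obtain ⟨j, hj⟩ := hcover (Ultraproduct.mk 𝒰 fun i ↦ (z i).1, Ultraproduct.mk 𝒰 fun i ↦ (z i).2)
    (Ultraproduct.mk_eq.mpr <| hz.mono fun i hi ↦ hi.1) heval hroot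
  obtain ⟨i, hi, hji⟩ := (hz.and (isTwistedPoint_toUltraproduct_iff.mp hj)).exists
  exact hi.2.2.2 j hji

lemma eventually_C_mem_span_component
    (hsep : C (H.map (Ultraproduct.mk 𝒰)) ∈
      Ideal.span {toUltraproduct 𝒰 F, derivative (toUltraproduct 𝒰 F)}) :
    ∀ᶠ i in 𝒰, C (H.map (Pi.evalRingHom K i)) ∈
      Ideal.span {component K i F, derivative (component K i F)} := by
  obtain ⟨t, s, hst⟩ := Ideal.mem_span_pair.mp hsep
  obtain ⟨T, rfl⟩ := toUltraproduct_surjective t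
  obtain ⟨S, rfl⟩ := toUltraproduct_surjective s
  have heq : toUltraproduct 𝒰 (T * F + S * derivative F) = toUltraproduct 𝒰 (C H) := by
    rw [map_add, map_mul, map_mul]
    convert hst using 3
    · exact (derivative_map F (Polynomial.mapRingHom _)).symm
    · exact map_C (Polynomial.mapRingHom (Ultraproduct.mk 𝒰 (K := K)))
  rw [(isUltralimit_toUltraproduct (K := K)).eq_iff] at heq
  filter_upwards [heq] with i hi
  refine Ideal.mem_span_pair.mpr ⟨component K i T, component K i S, ?_⟩
  rw [map_add, map_mul, map_mul] at hi
  convert hi using 3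
  · exact derivative_map F (Polynomial.mapRingHom _)
  · exact (map_C (Polynomial.mapRingHom (Pi.evalRingHom K i))).symm

end TransferOfCovers

section NonstandardFrobenius

lemma finite_fixed_iterateFrobenius (k : Type*) [Field k] [IsAlgClosed k] {p a : ℕ}
    [Fact p.Prime] [CharP k p] (ha : a ≠ 0) : {b : k | iterateFrobenius k p a b = b}.Finite := by
  obtain ⟨s, hs, -⟩ := exists_finset_pow_eq_and_eval_ne_zero (k := k) (p := p) ha
    (one_ne_zero (α := k[X]))
  exact s.finite_toSet.subset fun b hb ↦ (hs b).mpr ⟨hb, by simp⟩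

variable {I : Type*} (𝒰 : Ultrafilter I) (K : I → Type*) [∀ i, Field (K i)] (p a : I → ℕ)
  [∀ i, Fact (p i).Prime] [∀ i, CharP (K i) (p i)]

/-- The endomorphism of the ultraproduct induced by the Frobenius maps `x ↦ x ^ (p i) ^ (a i)`. -/
noncomputable def ultraFrobenius : Ultraproduct 𝒰 K →+* Ultraproduct 𝒰 K :=
  Ultraproduct.map 𝒰 fun i ↦ iterateFrobenius (K i) (p i) (a i)

variable {K} in
/-- The sets `Z i` contain all but a vanishing proportion of the subfields of `p i ^ a i` elements,
which are encoded as the fixed points of the Frobenius maps. -/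
def IsConegligible (Z : ∀ i, Set (K i)) : Prop :=
  ∀ n, ∀ᶠ i in 𝒰,
    n * ({b | iterateFrobenius (K i) (p i) (a i) b = b} \ Z i).ncard ≤ p i ^ a i

variable {𝒰 K p a} [∀ i, IsAlgClosed (K i)]

lemma eventually_exists_isTwistedPoint (hq : ∀ n, ∀ᶠ i in 𝒰, n ≤ p i ^ a i) {J : Type*} [Fintype J]
    {F : (∀ i, K i)[X][Y]} {H : (∀ i, K i)[X]} {R : J → (∀ i, K i)[X][Y]} (hF : F.Monic)
    (hirr : Irreducible (toUltraproduct 𝒰 F)) (hH : H.map (Ultraproduct.mk 𝒰) ≠ 0)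
    (hsep : C (H.map (Ultraproduct.mk 𝒰)) ∈
      Ideal.span {toUltraproduct 𝒰 F, derivative (toUltraproduct 𝒰 F)})
    (hJ : Fintype.card J ≤ F.natDegree)
    (hcover : IsTwistedCover (ultraFrobenius 𝒰 K p a) (toUltraproduct 𝒰 F)
      (H.map (Ultraproduct.mk 𝒰)) fun j ↦ toUltraproduct 𝒰 (R j)) (j₀ : J) :
    ∀ᶠ i in 𝒰, ∀ B : Finset (K i), 4 * F.natDegree * B.card ≤ p i ^ a i →
      ∃ z, IsTwistedPoint (iterateFrobenius (K i) (p i) (a i)) (component K i F)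
        (H.map (Pi.evalRingHom K i)) (component K i (R j₀)) z ∧ z.1 ∉ B := by
  obtain ⟨N, hN⟩ := exists_forall_mem_weightLE (Bivariate.swap F).natDegree R
  have hH' : ∀ᶠ i in 𝒰, H.map (Pi.evalRingHom K i) ≠ 0 := by
    simpa using isUltralimit_mk.mapRingHom.ne_iff.mp (hH.trans_eq (Polynomial.map_zero _).symm)
  filter_upwards [eventually_irreducible_component hF hirr, hH',
    eventually_C_mem_span_component hsep, eventually_isTwistedCover_component hcover,
    hq (chebotarevThreshold F.natDegree (Bivariate.swap F).natDegree (max N H.natDegree))]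
    with i hirr_i hH_i hsep_i hcover_i hq_i B hB
  have hdeg : (component K i F).natDegree = F.natDegree := hF.natDegree_map _
  have hcurve : IsWeightedCurve (Bivariate.swap F).natDegree (component K i F) := by
    refine ⟨hF.map _, hirr_i, ?_⟩
    rw [hdeg]
    exact map_mem_weightLE _ (mem_weightLE_of_monic hF (natDegree_swap_le_iff.mp le_rfl))
  rw [← hdeg] at hJ hq_i hB
  exact hcurve.exists_isTwistedPoint hH_i (natDegree_map_le.trans (le_max_right _ _))
    (fun j ↦ map_mem_weightLE _ (weightLE_mono (le_max_left _ _) (hN j)))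
    (fun b ↦ isUnramifiedAt_of_C_mem_span hsep_i) hq_i hJ hcover_i j₀ B hB

lemma IsConegligible.eventually_exists_mem {Z : ∀ i, Set (K i)} (hZ : IsConegligible 𝒰 p a Z)
    (hq : ∀ n, ∀ᶠ i in 𝒰, n ≤ p i ^ a i) {D : ℕ} {S : ∀ i, Set (K i)}
    (hS : ∀ i, ∀ b ∈ S i, iterateFrobenius (K i) (p i) (a i) b = b)
    (hmeet : ∀ᶠ i in 𝒰, ∀ B : Finset (K i), D * B.card ≤ p i ^ a i → ∃ b ∈ S i, b ∉ B) (m : ℕ) :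
    ∀ᶠ i in 𝒰, ∀ s : Finset (K i), s.card ≤ m → ∃ b ∈ S i, b ∈ Z i ∧ b ∉ s := by
  classical
  filter_upwards [hmeet, hq 2, hq (2 * D * m), hZ (2 * D)] with i hmeet_i hq_i hm_i hZ_i s hs
  have ha : a i ≠ 0 := fun h0 ↦ by simp [h0] at hq_i
  have hfin := (finite_fixed_iterateFrobenius (K i) (p := p i) ha).subset
    (Set.sdiff_subset (t := Z i))
  rw [Set.ncard_eq_toFinset_card _ hfin] at hZ_i
  obtain ⟨b, hb, hbB⟩ := hmeet_i (hfin.toFinset ∪ s) (by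
    nlinarith [Nat.mul_le_mul_left D (Finset.card_union_le hfin.toFinset s),
      Nat.mul_le_mul_left D hs])
  rw [Finset.mem_union, Set.Finite.mem_toFinset, not_or] at hbB
  exact ⟨b, hb, by_contra fun hbZ ↦ hbB.1 ⟨hS i b hb, hbZ⟩, hbB.2⟩

theorem exists_isTwistedPoint_notMem_range {𝒰 : Ultrafilter ℕ} (h𝒰 : (𝒰 : Filter ℕ) ≤ Filter.atTop)
    {K : ℕ → Type*} [∀ i, Field (K i)] [∀ i, IsAlgClosed (K i)] {p a : ℕ → ℕ}
    [∀ i, Fact (p i).Prime] [∀ i, CharP (K i) (p i)] (hq : ∀ n, ∀ᶠ i in 𝒰, n ≤ p i ^ a i)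
    {Z : ∀ i, Set (K i)} (hZ : IsConegligible 𝒰 p a Z)
    {A : Type*} [Field A] [IsAlgClosed A] [Countable A] (ι : A →+* Ultraproduct 𝒰 K)
    {J : Type*} [Fintype J] {f : A[X][Y]} {h : A[X]} {r : J → A[X][Y]} (hf : f.Monic)
    (hirr : Irreducible f) (hh : h ≠ 0) (hsep : C h ∈ Ideal.span {f, derivative f})
    (hJ : Fintype.card J ≤ f.natDegree)
    (hcover : IsTwistedCover (ultraFrobenius 𝒰 K p a) (f.map (mapRingHom ι)) (h.map ι)
      fun j ↦ (r j).map (mapRingHom ι)) (j₀ : J) :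
    ∃ z : ∀ i, K i × K i, (∀ᶠ i in 𝒰, (z i).1 ∈ Z i) ∧
      Ultraproduct.mk 𝒰 (fun i ↦ (z i).1) ∉ Set.range ι ∧
      IsTwistedPoint (ultraFrobenius 𝒰 K p a) (f.map (mapRingHom ι)) (h.map ι)
        ((r j₀).map (mapRingHom ι))
        (Ultraproduct.mk 𝒰 fun i ↦ (z i).1, Ultraproduct.mk 𝒰 fun i ↦ (z i).2) := by
  classical
  obtain ⟨F, hFf, hdeg, hF⟩ := lifts_and_natDegree_eq_and_monic
    ((mem_lifts _).mpr (toUltraproduct_surjective (f.map (mapRingHom ι)))) (hf.map _)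
  replace hFf : toUltraproduct 𝒰 F = f.map (mapRingHom ι) := hFf
  rw [hf.natDegree_map] at hdeg
  obtain ⟨H, hH⟩ := map_surjective _ (Ultraproduct.mk_surjective (𝒰 := 𝒰) (K := K)) (h.map ι)
  choose R hR using fun j ↦ toUltraproduct_surjective (𝒰 := 𝒰) (K := K) ((r j).map (mapRingHom ι))
  choose y hy using fun x ↦ Ultraproduct.mk_surjective (𝒰 := 𝒰) (K := K) (ι x)
  simp only [← hFf, ← hH, ← hR] at hcover ⊢
  have hsep' : C (H.map (Ultraproduct.mk 𝒰)) ∈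
      Ideal.span {toUltraproduct 𝒰 F, derivative (toUltraproduct 𝒰 F)} := by
    rw [hH, hFf, derivative_map]
    simpa [Ideal.map_span, Set.image_pair] using
      Ideal.mem_map_of_mem (mapRingHom (mapRingHom ι)) hsep
  have hpoints := eventually_exists_isTwistedPoint hq hF (hFf ▸ irreducible_map_map ι hf hirr)
    (hH ▸ (Polynomial.map_ne_zero_iff ι.injective).mpr hh) hsep' (hdeg ▸ hJ) hcover j₀
  have havoid := hZ.eventually_exists_mem hq (D := 4 * F.natDegree)
    (S := fun i ↦ {b | ∃ w, IsTwistedPoint (iterateFrobenius (K i) (p i) (a i)) (component K i F)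
      (H.map (Pi.evalRingHom K i)) (component K i (R j₀)) (b, w)})
    (fun i b ⟨w, hw⟩ ↦ hw.map_fst)
    (hpoints.mono fun i hi B hB ↦ let ⟨z, hz, hzB⟩ := hi B hB; ⟨z.1, ⟨z.2, hz⟩, hzB⟩)
  have hsat (s : Finset A) : ∀ᶠ i in 𝒰, ∃ z : K i × K i, ∀ x ∈ s, z.1 ∈ Z i ∧ z.1 ≠ y x i ∧
      IsTwistedPoint (iterateFrobenius (K i) (p i) (a i)) (component K i F)
        (H.map (Pi.evalRingHom K i)) (component K i (R j₀)) z := by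
    filter_upwards [havoid s.card] with i hi
    obtain ⟨b, ⟨w, hw⟩, hbZ, hbs⟩ := hi (s.image fun x ↦ y x i) Finset.card_image_le
    exact ⟨(b, w), fun x hx ↦ ⟨hbZ, fun hbx ↦ hbs (Finset.mem_image.mpr ⟨x, hx, hbx.symm⟩), hw⟩⟩
  obtain ⟨z, hz⟩ := exists_forall_eventually_of_finset h𝒰 hsat
  refine ⟨z, (hz 0).mono fun i hi ↦ hi.1, ?_,
    isTwistedPoint_toUltraproduct_iff.mpr ((hz 0).mono fun i hi ↦ hi.2.2)⟩
  rintro ⟨x, hx⟩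
  rw [← hy x, Ultraproduct.mk_eq] at hx
  obtain ⟨i, hi, hxi⟩ := ((hz x).and hx).exists
  exact hi.2.1 hxi.symm

end NonstandardFrobenius

section PeriodicEndomorphisms

lemma exists_common_period {S T : Type*} {f : S → S} {g : T → T} {x : S} {y : T}
    (hx : x ∈ periodicPts f) (hy : y ∈ periodicPts g) :
    ∃ n > 0, IsPeriodicPt f n x ∧ IsPeriodicPt g n y := by
  obtain ⟨n, hn, hx⟩ := hx
  obtain ⟨m, hm, hy⟩ := hy
  exact ⟨n * m, Nat.mul_pos hn hm, hx.mul_const m, hy.const_mul n⟩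

lemma mem_periodicPts_mapRingHom {R : Type*} [CommRing R] {τ : R →+* R}
    (hτ : ∀ x, x ∈ periodicPts τ) (P : R[X]) : P ∈ periodicPts (mapRingHom τ) := by
  induction P using Polynomial.induction_on' with
  | add P Q hP hQ =>
    obtain ⟨n, hn, hP, hQ⟩ := exists_common_period hP hQ
    exact ⟨n, hn, by rw [IsPeriodicPt, Function.IsFixedPt, iterate_map_add, hP.eq, hQ.eq]⟩
  | monomial k c =>
    exact (show Semiconj (monomial k) τ (mapRingHom τ) from
      fun c ↦ (map_monomial τ).symm).mapsTo_periodicPts (hτ c)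

lemma mem_periodicPts_of_isFractionRing {R Q : Type*} [CommRing R] [IsDomain R] [Field Q]
    [Algebra R Q] [IsFractionRing R Q] {τ : R →+* R} (hτ : ∀ x, x ∈ periodicPts τ) {σ : Q →+* Q}
    (hσ : Semiconj (algebraMap R Q) τ σ) (x : Q) : x ∈ periodicPts σ := by
  obtain ⟨a, b, -, rfl⟩ := IsFractionRing.div_surjective (A := R) x
  obtain ⟨n, hn, ha, hb⟩ := exists_common_period (hσ.mapsTo_periodicPts (hτ a))
    (hσ.mapsTo_periodicPts (hτ b))
  exact ⟨n, hn, by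
    rw [IsPeriodicPt, Function.IsFixedPt, ← RingHom.coe_pow, map_div₀, RingHom.coe_pow, ha.eq,
      hb.eq]⟩

lemma aeval_map_apply {R S : Type*} [CommRing R] [CommRing S] [Algebra R S] {τ : R →+* R}
    {σ : S →+* S} (hσ : Semiconj (algebraMap R S) τ σ) (P : R[X]) (y : S) :
    aeval (σ y) (P.map τ) = σ (aeval y P) := by
  rw [aeval_def, aeval_def, eval₂_map, hom_eval₂]
  congr 1
  exact RingHom.ext hσ

variable {Q M : Type*} [Field Q] [Field M] [Algebra Q M] {σ : Q →+* Q} {σM : M →+* M}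

lemma exists_dvd_map_eq_self {P : Q[X]} (hP : P.Monic) (hper : P ∈ periodicPts (mapRingHom σ)) :
    ∃ F : Q[X], F.Monic ∧ F.map σ = F ∧ P ∣ F ∧
      ∀ x : M, aeval x F = 0 → ∃ n, aeval x (P.map (σ ^ n)) = 0 := by
  obtain ⟨N, hN, hper⟩ := hper
  have hperiod : P.map (σ ^ N) = P := by
    have (n : ℕ) : (mapRingHom σ) ^ n = mapRingHom (σ ^ n) := by
      induction n with
      | zero => ext <;> simp
      | succ n ih => rw [pow_succ, ih, pow_succ, RingHom.mul_def, RingHom.mul_def, mapRingHom_comp]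
    rw [← coe_mapRingHom, ← this, RingHom.coe_pow, hper.eq]
  refine ⟨∏ n ∈ Finset.range N, P.map (σ ^ n), monic_prod_of_monic _ _ fun n _ ↦ hP.map _, ?_, ?_,
    fun x hx ↦ ?_⟩
  · apply mul_right_cancel₀ hP.ne_zero
    calc
      (∏ n ∈ Finset.range N, P.map (σ ^ n)).map σ * P
          = ∏ n ∈ Finset.range (N + 1), P.map (σ ^ n) := by
        rw [Finset.prod_range_succ', pow_zero, RingHom.one_def, Polynomial.map_id,
          Polynomial.map_prod]
        simp only [Polynomial.map_map, pow_succ', RingHom.mul_def]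
      _ = (∏ n ∈ Finset.range N, P.map (σ ^ n)) * P := by rw [Finset.prod_range_succ, hperiod]
  · simpa only [pow_zero, RingHom.one_def, Polynomial.map_id] using
      Finset.dvd_prod_of_mem (fun n ↦ P.map (σ ^ n)) (Finset.mem_range.mpr hN)
  · rw [map_prod, Finset.prod_eq_zero_iff] at hx
    obtain ⟨n, -, hn⟩ := hx
    exact ⟨n, hn⟩

lemma mapsTo_rootSet (hσ : Semiconj (algebraMap Q M) σ σM) {F : Q[X]} (hF : F.Monic)
    (hFσ : F.map σ = F) : Set.MapsTo σM (F.rootSet M) (F.rootSet M) := by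
  intro x hx
  have hroot := aeval_map_apply hσ F x
  rw [hFσ, (mem_rootSet.mp hx).2, map_zero] at hroot
  exact mem_rootSet.mpr ⟨hF.ne_zero, hroot⟩

lemma mem_periodicPts_of_isAlgebraic [Algebra.IsAlgebraic Q M] (hper : ∀ x, x ∈ periodicPts σ)
    (hσ : Semiconj (algebraMap Q M) σ σM) (x : M) : x ∈ periodicPts σM := by
  obtain ⟨F, hF, hFσ, hdvd, -⟩ := exists_dvd_map_eq_self (M := M)
    (minpoly.monic (Algebra.IsIntegral.isIntegral (R := Q) x)) (mem_periodicPts_mapRingHom hper _)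
  have hx : x ∈ F.rootSet M :=
    mem_rootSet.mpr ⟨hF.ne_zero, aeval_eq_zero_of_dvd_aeval_eq_zero hdvd (minpoly.aeval Q x)⟩
  have hmaps := mapsTo_rootSet hσ hF hFσ
  have := (F.rootSet_finite M).to_subtype
  have hperiodic := (hmaps.restrict_inj.mpr σM.injective.injOn).mem_periodicPts ⟨x, hx⟩
  exact Semiconj.mapsTo_periodicPts (g := Subtype.val) (fun _ ↦ rfl) hperiodic

variable [IsAlgClosed M] [Algebra.IsAlgebraic Q M]

lemma exists_stable_galois (hper : ∀ x, x ∈ periodicPts σ) (hσ : Semiconj (algebraMap Q M) σ σM)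
    (T : Finset M) (hT : ∀ t ∈ T, IsSeparable Q t) :
    ∃ L : IntermediateField Q M, FiniteDimensional Q L ∧ IsGalois Q L ∧ (∀ t ∈ T, t ∈ L) ∧
      ∀ x ∈ L, σM x ∈ L := by
  have hmonic (t : M) : (minpoly Q t).Monic := minpoly.monic (Algebra.IsIntegral.isIntegral t)
  obtain ⟨F, hF, hFσ, hdvd, hroots⟩ := exists_dvd_map_eq_self (M := M)
    (monic_prod_of_monic T _ fun t _ ↦ hmonic t) (mem_periodicPts_mapRingHom hper _)
  have hsep : ∀ x ∈ F.rootSet M, IsSeparable Q x := by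
    intro x hx
    obtain ⟨n, hn⟩ := hroots x (mem_rootSet.mp hx).2
    rw [Polynomial.map_prod, map_prod, Finset.prod_eq_zero_iff] at hn
    obtain ⟨t, ht, hxt⟩ := hn
    exact (Polynomial.Separable.map (hT t ht)).of_dvd (minpoly.dvd _ _ hxt)
  have := IntermediateField.adjoin_rootSet_isSplittingField
    (IsAlgClosed.splits (F.map (algebraMap Q M)))
  have := (IntermediateField.isSeparable_adjoin_iff_isSeparable Q M).mpr hsep
  have := Normal.of_isSplittingField (F := Q) (E := IntermediateField.adjoin Q (F.rootSet M)) F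
  refine ⟨IntermediateField.adjoin Q (F.rootSet M), IsSplittingField.finiteDimensional _ F,
    ⟨⟩, fun t ht ↦ ?_, fun x hx ↦ ?_⟩
  · exact IntermediateField.subset_adjoin Q _ (mem_rootSet.mpr ⟨hF.ne_zero,
      aeval_eq_zero_of_dvd_aeval_eq_zero ((Finset.dvd_prod_of_mem _ ht).trans hdvd)
        (minpoly.aeval Q t)⟩)
  · induction hx using IntermediateField.adjoin_induction with
    | mem x hx => exact IntermediateField.subset_adjoin Q _ (mapsTo_rootSet hσ hF hFσ hx)
    | algebraMap x => rw [← hσ]; exact IntermediateField.algebraMap_mem _ _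
    | add x y _ _ hx hy => rw [map_add]; exact add_mem hx hy
    | inv x _ hx => rw [map_inv₀]; exact inv_mem hx
    | mul x y _ _ hx hy => rw [map_mul]; exact mul_mem hx hy

end PeriodicEndomorphisms

section IntegralPrimitiveElements

variable (R : Type*) {Q M : Type*} [CommRing R] [IsDomain R] [Field Q] [Algebra R Q]
  [IsFractionRing R Q] [Field M] [Algebra Q M] [Algebra R M] [IsScalarTower R Q M]

lemma exists_isIntegral_adjoin_eq {L : IntermediateField Q M} [FiniteDimensional Q L]
    [Algebra.IsSeparable Q L] : ∃ y : M, IsIntegral R y ∧ IntermediateField.adjoin Q {y} = L := by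
  obtain ⟨α, hα⟩ := Field.exists_primitive_element Q L
  have hαL : IntermediateField.adjoin Q {(α : M)} = L := by
    rw [← IntermediateField.lift_adjoin_simple, hα, IntermediateField.lift_top]
  have halg : IsAlgebraic R (α : M) :=
    (IsFractionRing.isAlgebraic_iff R Q M).mpr
      (IntermediateField.isAlgebraic_iff.mp (Algebra.IsAlgebraic.isAlgebraic α))
  obtain ⟨d, hd, hint⟩ := halg.exists_integral_multiple
  refine ⟨d • (α : M), hint, ?_⟩
  have hdQ : algebraMap R Q d ≠ 0 := by rwa [Ne, IsFractionRing.to_map_eq_zero_iff]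
  rw [← algebraMap_smul Q d (α : M)]
  refine le_antisymm (IntermediateField.adjoin_simple_le_iff.mpr (L.smul_mem α.2)) ?_
  refine hαL.ge.trans (IntermediateField.adjoin_simple_le_iff.mpr ?_)
  have := IntermediateField.smul_mem _ (x := (algebraMap R Q d)⁻¹)
    (IntermediateField.mem_adjoin_simple_self Q (algebraMap R Q d • (α : M)))
  rwa [inv_smul_smul₀ hdQ] at this

variable [Algebra.IsAlgebraic Q M]

lemma exists_stable_generator [IsAlgClosed M] {σ : Q →+* Q} {σM : M →+* M}
    (hper : ∀ x, x ∈ Function.periodicPts σ)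
    (hσ : Function.Semiconj (algebraMap Q M) σ σM) (T : Finset M) (hT : ∀ t ∈ T, IsSeparable Q t) :
    ∃ y : M, IsIntegral R y ∧ IsSeparable Q y ∧ (∀ t ∈ T, t ∈ IntermediateField.adjoin Q {y}) ∧
      ∀ x, aeval x (minpoly Q y) = 0 → σM x ∈ IntermediateField.adjoin Q {y} := by
  obtain ⟨L, _, _, hTL, hstable⟩ := exists_stable_galois hper hσ T hT
  obtain ⟨y, hint, rfl⟩ := exists_isIntegral_adjoin_eq R (L := L)
  have hy := IntermediateField.mem_adjoin_simple_self Q y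
  refine ⟨y, hint, ?_, hTL, fun x hx ↦ hstable x ?_⟩
  · have := Algebra.IsSeparable.isSeparable Q (⟨y, hy⟩ : IntermediateField.adjoin Q {y})
    rwa [IsSeparable, IntermediateField.minpoly_eq] at this
  · have hsplits := Normal.splits (F := Q) inferInstance (⟨y, hy⟩ : IntermediateField.adjoin Q {y})
    rw [IntermediateField.splits_iff_mem (IsAlgClosed.splits _), IntermediateField.minpoly_eq]
      at hsplits
    exact hsplits x (mem_rootSet.mpr ⟨minpoly.ne_zero (Algebra.IsIntegral.isIntegral y), hx⟩)

lemma exists_common_denominator (y : M) {J : Type*} [Finite J] {x : J → M}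
    (hx : ∀ j, x j ∈ IntermediateField.adjoin Q {y}) :
    ∃ h : R, h ≠ 0 ∧ ∃ r : J → R[X], ∀ j, algebraMap R M h * x j = aeval y (r j) := by
  have hg (j : J) : ∃ g : Q[X], aeval y g = x j := by
    have := hx j
    rwa [← IntermediateField.mem_toSubalgebra,
      IntermediateField.adjoin_simple_toSubalgebra_of_isAlgebraic
        (Algebra.IsAlgebraic.isAlgebraic y), Algebra.adjoin_singleton_eq_range_aeval] at this
  choose g hg using hg
  let := Polynomial.algebra (R := R) (A := Q)
  have := Polynomial.isLocalization (nonZeroDivisors R) Q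
  obtain ⟨⟨_, h, hh, rfl⟩, hint⟩ := IsLocalization.exist_integer_multiples_of_finite
    ((nonZeroDivisors R).map (C : R →+* R[X])) g
  choose r hr using hint
  refine ⟨h, nonZeroDivisors.ne_zero hh, r, fun j ↦ ?_⟩
  have hrj : (r j).map (algebraMap R Q) = algebraMap R Q h • g j := by
    calc
      (r j).map (algebraMap R Q) = (C h : R[X]) • g j := hr j
      _ = algebraMap R Q h • g j := by
        rw [Algebra.smul_def, algebraMap_def, coe_mapRingHom, map_C, smul_eq_C_mul]
  rw [← aeval_map_algebraMap Q, hrj, map_smul, hg, Algebra.smul_def,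
    ← IsScalarTower.algebraMap_apply]

end IntegralPrimitiveElements

section ConjugateFormulas

variable {R M W : Type*} [CommRing R] [Field M] [Algebra R M] [Field W] {τ : R →+* R}
  {σM : M →+* M} {θ : R →+* W} {σ : W →+* W} {y : M} {f : R[X]}

lemma map_eval₂RingHom_eq (hdvd : ∀ g : R[X], aeval y g = 0 → f ∣ g) {w : W}
    (hw : f.eval₂ θ w = 0) {G H : R[X][X]}
    (hGH : G.map (eval₂RingHom (algebraMap R M) y) = H.map (eval₂RingHom (algebraMap R M) y)) :
    G.map (eval₂RingHom θ w) = H.map (eval₂RingHom θ w) := by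
  ext n
  have hcoeff := congrArg (coeff · n) hGH
  simp only [coeff_map, coe_eval₂RingHom, ← aeval_def] at hcoeff
  obtain ⟨t, ht⟩ := hdvd (G.coeff n - H.coeff n) (by rw [map_sub, hcoeff, sub_self])
  rw [coeff_map, coeff_map, ← sub_eq_zero, ← map_sub, ht, map_mul, coe_eval₂RingHom, hw, zero_mul]

lemma map_eval₂RingHom_prod {S J : Type*} [CommRing S] [Fintype J] (φ : R →+* S) (s : S) (h : R)
    (r : J → R[X]) : (∏ j, (C (C h) * Y - C (r j))).map (eval₂RingHom φ s) =
      ∏ j, (C (φ h) * X - C ((r j).eval₂ φ s)) := by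
  simp [Polynomial.map_prod]

lemma map_eval₂RingHom_C_mul_map_C {S : Type*} [CommRing S] (φ : R →+* S) (s : S) (h : R)
    (g : R[X]) : (C (C h) * g.map C).map (eval₂RingHom φ s) = C (φ h) * g.map φ := by
  have hC : (eval₂RingHom φ s).comp C = φ := by ext; simp
  rw [Polynomial.map_mul, Polynomial.map_map, hC, map_C, coe_eval₂RingHom, eval₂_C]

-- The formulas `h * σM (x j) = r j` at the conjugates `x j` of `y` give the identity
-- `∏ j, (h * Y - r j) = h ^ d * f ^ τ` modulo `f`, which survives the specialization `θ`.
lemma exists_eq_of_eval₂_eq_zero (hM : Semiconj (algebraMap R M) τ σM)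
    (hdvd : ∀ g : R[X], aeval y g = 0 → f ∣ g) {J : Type*} [Fintype J] {x : J → M}
    (hx : f.map (algebraMap R M) = ∏ j, (X - C (x j))) {h : R} {r : J → R[X]}
    (hr : ∀ j, algebraMap R M h * σM (x j) = aeval y (r j)) (hθ : Semiconj θ τ σ) {w : W}
    (hw : f.eval₂ θ w = 0) : ∃ j, θ h * σ w = (r j).eval₂ θ w := by
  have hconj : (f.map τ).map (algebraMap R M) = ∏ j, (X - C (σM (x j))) := by
    have := congrArg (Polynomial.map σM) hx
    rw [Polynomial.map_map, Polynomial.map_prod] at this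
    simp only [Polynomial.map_sub, map_X, map_C] at this
    rw [← this, Polynomial.map_map]
    congr 1
    exact RingHom.ext hM
  have hM' : (∏ j, (C (C h) * Y - C (r j))).map (eval₂RingHom (algebraMap R M) y) =
      (C (C (h ^ Fintype.card J)) * (f.map τ).map C).map (eval₂RingHom (algebraMap R M) y) := by
    rw [map_eval₂RingHom_prod, map_eval₂RingHom_C_mul_map_C, hconj, map_pow, C_pow,
      ← Finset.card_univ, ← Finset.prod_const, ← Finset.prod_mul_distrib]
    refine Finset.prod_congr rfl fun j _ ↦ ?_
    rw [← aeval_def, ← hr, C_mul, mul_sub]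
  have hW := congrArg (eval (σ w)) (map_eval₂RingHom_eq hdvd hw hM')
  have hroot : (f.map τ).eval₂ θ (σ w) = 0 := by
    rw [eval₂_map, RingHom.ext (f := θ.comp τ) (g := σ.comp θ) hθ, ← hom_eval₂, hw, map_zero]
  rw [map_eval₂RingHom_prod, map_eval₂RingHom_C_mul_map_C, eval_mul, eval_map, hroot, mul_zero,
    eval_prod, Finset.prod_eq_zero_iff] at hW
  obtain ⟨j, -, hj⟩ := hW
  exact ⟨j, by simpa [sub_eq_zero] using hj⟩

end ConjugateFormulas

section Embeddings

variable {R Q M W : Type*} [CommRing R] [Field Q] [Algebra R Q] [IsFractionRing R Q] [Field M]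
  [Algebra Q M] [Algebra R M] [IsScalarTower R Q M] [Field W] {θ : R →+* W}

lemma exists_extension_apply_eq [IsDomain R] [IsIntegrallyClosed R] [Algebra.IsAlgebraic Q M]
    [IsAlgClosed W] (hθ : Function.Injective θ) {y : M} (hy : IsIntegral R y) {w : W}
    (hw : (minpoly R y).eval₂ θ w = 0) :
    ∃ χ : M →+* W, χ.comp (algebraMap R M) = θ ∧ χ y = w := by
  let _ : Algebra Q W := (IsFractionRing.lift (K := Q) hθ).toAlgebra
  have hθQ : (algebraMap Q W).comp (algebraMap R Q) = θ :=
    RingHom.ext (IsFractionRing.lift_algebraMap hθ)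
  have hroot : aeval w (minpoly Q y) = 0 := by
    rw [minpoly.isIntegrallyClosed_eq_field_fractions' Q hy, aeval_def, eval₂_map, hθQ, hw]
  obtain ⟨χ, hχ⟩ := IntermediateField.exists_algHom_of_splits_of_aeval (F := Q) (E := M) (K := W)
    (fun s ↦ ⟨Algebra.IsIntegral.isIntegral s, IsAlgClosed.splits _⟩) hroot
  refine ⟨χ, ?_, hχ⟩
  rw [IsScalarTower.algebraMap_eq R Q M, ← RingHom.comp_assoc, χ.comp_algebraMap, hθQ]

lemma apply_eq_of_mem_adjoin {τ : R →+* R} {σM : M →+* M} (hM : Semiconj (algebraMap R M) τ σM)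
    {σ : W →+* W} (hθ : Semiconj θ τ σ) {χ : M →+* W} (hχ : χ.comp (algebraMap R M) = θ) {y : M}
    (hy : χ (σM y) = σ (χ y)) {x : M} (hx : x ∈ IntermediateField.adjoin Q {y}) :
    χ (σM x) = σ (χ x) := by
  induction hx using IntermediateField.adjoin_induction with
  | mem x hx => rwa [Set.mem_singleton_iff.mp hx]
  | algebraMap x =>
    obtain ⟨a, b, -, rfl⟩ := IsFractionRing.div_surjective (A := R) x
    have hχ' (c : R) : χ (algebraMap R M c) = θ c := RingHom.congr_fun hχ c
    rw [map_div₀, ← IsScalarTower.algebraMap_apply, ← IsScalarTower.algebraMap_apply]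
    simp only [map_div₀, ← hM.eq, hχ', hθ.eq]
  | add x y _ _ hx hy => simp only [map_add, hx, hy]
  | inv x _ hx => simp only [map_inv₀, hx]
  | mul x y _ _ hx hy => simp only [map_mul, hx, hy]

end Embeddings

section ConjugateData

variable {R Q M : Type*} [CommRing R] [IsDomain R] [IsIntegrallyClosed R] [Field Q] [Algebra R Q]
  [IsFractionRing R Q] [Field M] [Algebra Q M] [Algebra R M] [IsScalarTower R Q M]

lemma exists_unramified_denominator [Algebra.IsAlgebraic Q M] {y : M} (hy : IsIntegral R y)
    (hsep : IsSeparable Q y) {J : Type*} [Finite J] {x : J → M}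
    (hx : ∀ j, x j ∈ IntermediateField.adjoin Q {y}) :
    ∃ h : R, h ≠ 0 ∧ C h ∈ Ideal.span {minpoly R y, derivative (minpoly R y)} ∧
      ∃ r : J → R[X], ∀ j, algebraMap R M h * x j = aeval y (r j) := by
  have := FaithfulSMul.trans R Q M
  set f := minpoly R y
  have hminpoly : minpoly Q y = f.map (algebraMap R Q) :=
    minpoly.isIntegrallyClosed_eq_field_fractions' Q hy
  have hder : aeval y (derivative f) ≠ 0 := by
    have := hsep.aeval_derivative_ne_zero (minpoly.aeval Q y)
    rwa [hminpoly, derivative_map, aeval_map_algebraMap] at this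
  have hder_inv : (aeval y (derivative f))⁻¹ ∈ IntermediateField.adjoin Q {y} := by
    rw [← aeval_map_algebraMap Q]
    exact inv_mem (IntermediateField.algebra_adjoin_le_adjoin Q _
      (aeval_mem_adjoin_singleton Q y))
  obtain ⟨h, hh, r, hr⟩ := exists_common_denominator R y
    (x := fun o : Option J ↦ o.elim (aeval y (derivative f))⁻¹ x)
    (Option.forall.mpr ⟨hder_inv, hx⟩)
  refine ⟨h, hh, ?_, fun j ↦ r (some j), fun j ↦ hr (some j)⟩
  have hnone : aeval y (r none * derivative f - C h) = 0 := by
    rw [map_sub, map_mul, ← hr none, aeval_C, Option.elim_none, inv_mul_cancel_right₀ hder,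
      sub_self]
  obtain ⟨t, ht⟩ := minpoly.isIntegrallyClosed_dvd hy hnone
  exact Ideal.mem_span_pair.mpr ⟨-t, r none, by linear_combination ht⟩

end ConjugateData

section SpecializationOfConstants

lemma exists_eq_prod_X_sub_C {M : Type*} [Field M] [IsAlgClosed M] {P : M[X]} (hP : P.Monic)
    {d : ℕ} (hd : P.natDegree = d) : ∃ x : Fin d → M, P = ∏ j, (X - C (x j)) := by
  have hsplits : P.Splits := IsAlgClosed.splits P
  have hlength : P.roots.toList.length = d := by
    rw [Multiset.length_toList, ← hsplits.natDegree_eq_card_roots, hd]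
  subst hlength
  refine ⟨P.roots.toList.get, ?_⟩
  calc
    P = (P.roots.map (X - C ·)).prod := hsplits.eq_prod_roots_of_monic hP
    _ = (P.roots.toList.map (X - C ·)).prod := by
      rw [← Multiset.prod_coe, ← Multiset.map_coe, Multiset.coe_toList]
    _ = ∏ j, (X - C (P.roots.toList.get j)) := by
      rw [← List.prod_ofFn, ← List.ofFn_get (P.roots.toList.map _)]
      simp

variable {A W : Type*} [Field A] [Field W] {ι : A →+* W}

lemma evalEval_map_mapRingHom (b w : W) (g : A[X][Y]) :
    (g.map (mapRingHom ι)).evalEval b w = g.eval₂ (eval₂RingHom ι b) w := by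
  rw [← coe_evalEvalRingHom, ← coe_eval₂RingHom, ← coe_mapRingHom, ← RingHom.comp_apply]
  congr 1
  ext <;> simp

lemma eval₂RingHom_injective [IsAlgClosed A] {b : W} (hb : b ∉ Set.range ι) :
    Function.Injective (eval₂RingHom ι b) := by
  rw [injective_iff_map_eq_zero]
  intro P hP
  by_contra hP0
  have hroot : b ∈ (P.map ι).roots := by
    rwa [mem_roots ((Polynomial.map_ne_zero_iff ι.injective).mpr hP0), IsRoot, eval_map]
  rw [(IsAlgClosed.splits P).roots_map] at hroot
  obtain ⟨y, -, rfl⟩ := Multiset.mem_map.mp hroot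
  exact hb ⟨y, rfl⟩

variable {τ : A →+* A} {σ : W →+* W}

lemma semiconj_eval₂RingHom (hι : Semiconj ι τ σ) {b : W} (hb : σ b = b) :
    Semiconj (eval₂RingHom ι b) (mapRingHom τ) σ := by
  intro P
  rw [coe_mapRingHom, coe_eval₂RingHom, eval₂_map, hom_eval₂, hb]
  congr 1
  exact RingHom.ext hι

lemma isTwistedCover_map {M : Type*} [Field M] [Algebra A[X] M] {σM : M →+* M}
    (hM : Semiconj (algebraMap A[X] M) (mapRingHom τ) σM) {y : M} {f : A[X][Y]}
    (hdvd : ∀ g : A[X][Y], aeval y g = 0 → f ∣ g) {J : Type*} [Fintype J] {x : J → M}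
    (hx : f.map (algebraMap A[X] M) = ∏ j, (X - C (x j))) {h : A[X]} {r : J → A[X][Y]}
    (hr : ∀ j, algebraMap A[X] M h * σM (x j) = aeval y (r j)) (hι : Semiconj ι τ σ) :
    IsTwistedCover σ (f.map (mapRingHom ι)) (h.map ι) fun j ↦ (r j).map (mapRingHom ι) := by
  intro z hfix hne hz
  have hroot := hz
  rw [evalEval_map_mapRingHom] at hroot
  obtain ⟨j, hj⟩ := exists_eq_of_eval₂_eq_zero hM hdvd hx hr (semiconj_eval₂RingHom hι hfix) hroot
  refine ⟨j, hz, hne, hfix, ?_⟩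
  rwa [evalEval_map_mapRingHom, eval_map]

end SpecializationOfConstants

section RingHomsIntoUltraproducts

variable {𝒰 : Ultrafilter ℕ} {K : ℕ → Type*} [∀ i, Field (K i)]

lemma exists_ringHom_of_finset {R J : Type*} [Semiring R] [Countable R] [Countable J]
    (h𝒰 : (𝒰 : Filter ℕ) ≤ Filter.atTop) {P : J → ∀ i, (R → K i) → Prop}
    (h : ∀ s : Finset J, ∃ (χ : R →+* Ultraproduct 𝒰 K) (w : R → ∀ i, K i),
      (∀ x, Ultraproduct.mk 𝒰 (w x) = χ x) ∧ ∀ j ∈ s, ∀ᶠ i in 𝒰, P j i (w · i)) :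
    ∃ (χ : R →+* Ultraproduct 𝒰 K) (w : R → ∀ i, K i),
      (∀ x, Ultraproduct.mk 𝒰 (w x) = χ x) ∧ ∀ j, ∀ᶠ i in 𝒰, P j i (w · i) := by
  let P' : (R × R) ⊕ J → ∀ i, (R → K i) → Prop := Sum.elim
    (fun x i v ↦ v (x.1 + x.2) = v x.1 + v x.2 ∧ v (x.1 * x.2) = v x.1 * v x.2 ∧ v 1 = 1) P
  have hfinite (s : Finset ((R × R) ⊕ J)) : ∀ᶠ i in 𝒰, ∃ v, ∀ j ∈ s, P' j i v := by
    obtain ⟨χ, w, hw, hP⟩ := h s.toRight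
    have hs : ∀ j ∈ s, ∀ᶠ i in 𝒰, P' j i (w · i) := by
      rintro (x | j) hj
      · have hadd := (Ultraproduct.mk_eq (𝒰 := 𝒰)).mp
          ((hw (x.1 + x.2)).trans (by rw [map_add, ← hw, ← hw, ← map_add]))
        have hmul := (Ultraproduct.mk_eq (𝒰 := 𝒰)).mp
          ((hw (x.1 * x.2)).trans (by rw [map_mul, ← hw, ← hw, ← map_mul]))
        have hone := (Ultraproduct.mk_eq (𝒰 := 𝒰)).mp ((hw 1).trans
          (by rw [map_one, map_one (Ultraproduct.mk 𝒰)]))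
        filter_upwards [hadd, hmul, hone] with i hadd hmul hone using ⟨hadd, hmul, hone⟩
      · exact hP j (Finset.mem_toRight.mpr hj)
    filter_upwards [(Filter.eventually_all_finset s).mpr hs] with i hi using ⟨_, hi⟩
  obtain ⟨v, hv⟩ := exists_forall_eventually_of_finset h𝒰 hfinite
  let χ : R →* Ultraproduct 𝒰 K :=
    { toFun x := Ultraproduct.mk 𝒰 fun i ↦ v i x
      map_one' := by
        rw [← map_one (Ultraproduct.mk 𝒰), Ultraproduct.mk_eq]
        filter_upwards [hv (.inl (0, 0))] with i hi using hi.2.2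
      map_mul' x y := by
        rw [← map_mul, Ultraproduct.mk_eq]
        filter_upwards [hv (.inl (x, y))] with i hi using hi.2.1 }
  refine ⟨RingHom.mk' χ fun x y ↦ ?_, fun x i ↦ v i x, fun _ ↦ rfl, fun j ↦ hv (.inr j)⟩
  change Ultraproduct.mk 𝒰 _ = Ultraproduct.mk 𝒰 _ + Ultraproduct.mk 𝒰 _
  rw [← map_add, Ultraproduct.mk_eq]
  filter_upwards [hv (.inl (x, y))] with i hi using hi.1

end RingHomsIntoUltraproducts

section EmbeddingTheorem

variable {𝒰 : Ultrafilter ℕ} {K : ℕ → Type*} [∀ i, Field (K i)] [∀ i, IsAlgClosed (K i)]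
  {p a : ℕ → ℕ} [∀ i, Fact (p i).Prime] [∀ i, CharP (K i) (p i)]
  {A Q M : Type*} [Field A] [IsAlgClosed A] [Countable A] [Field Q] [Algebra A[X] Q]
  [IsFractionRing A[X] Q] [Field M] [IsAlgClosed M] [Algebra Q M] [Algebra A[X] M]
  [IsScalarTower A[X] Q M] [Algebra.IsAlgebraic Q M]
  {τ : A →+* A} {σQ : Q →+* Q} {σM : M →+* M} {ι : A →+* Ultraproduct 𝒰 K} {Z : ∀ i, Set (K i)}

lemma exists_embedding_of_isSeparable (h𝒰 : (𝒰 : Filter ℕ) ≤ Filter.atTop)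
    (hq : ∀ n, ∀ᶠ i in 𝒰, n ≤ p i ^ a i) (hZ : IsConegligible 𝒰 p a Z)
    (hτ : ∀ x, x ∈ periodicPts τ) (hQ : Semiconj (algebraMap A[X] Q) (mapRingHom τ) σQ)
    (hM : Semiconj (algebraMap Q M) σQ σM) (hι : Semiconj ι τ (ultraFrobenius 𝒰 K p a))
    (T : Finset M) (hT : ∀ t ∈ T, IsSeparable Q t) :
    ∃ (χ : M →+* Ultraproduct 𝒰 K) (z : ∀ i, K i),
      χ.comp (algebraMap A[X] M) = eval₂RingHom ι (Ultraproduct.mk 𝒰 z) ∧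
      (∀ᶠ i in 𝒰, z i ∈ Z i) ∧ ∀ t ∈ T, χ (σM t) = ultraFrobenius 𝒰 K p a (χ t) := by
  have := FaithfulSMul.trans A[X] Q M
  have hMX : Semiconj (algebraMap A[X] M) (mapRingHom τ) σM := by
    rw [IsScalarTower.algebraMap_eq A[X] Q M]
    exact hM.comp_left hQ
  obtain ⟨y, hint, hsep, hTy, hconj⟩ := exists_stable_generator A[X]
    (mem_periodicPts_of_isFractionRing (mem_periodicPts_mapRingHom hτ) hQ) hM T hT
  have hf := minpoly.monic hint
  obtain ⟨x, hx⟩ := exists_eq_prod_X_sub_C (hf.map (algebraMap A[X] M)) (hf.natDegree_map _)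
  have hroot (u : M) : aeval u (minpoly Q y) = 0 ↔ ∃ j, x j = u := by
    rw [minpoly.isIntegrallyClosed_eq_field_fractions' Q hint, aeval_map_algebraMap, aeval_def,
      ← eval_map, hx, eval_prod, Finset.prod_eq_zero_iff]
    simp only [Finset.mem_univ, true_and, eval_sub, eval_X, eval_C, sub_eq_zero, eq_comm]
  obtain ⟨h, hh, hspan, r, hr⟩ := exists_unramified_denominator hint hsep
    (x := fun j ↦ σM (x j)) fun j ↦ hconj _ ((hroot _).mpr ⟨j, rfl⟩)
  obtain ⟨j₀, hj₀⟩ := (hroot y).mp (minpoly.aeval Q y)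
  obtain ⟨z, hzZ, hz, hpoint⟩ := exists_isTwistedPoint_notMem_range h𝒰 hq hZ ι hf
    (minpoly.irreducible hint) hh hspan (Fintype.card_fin _).le
    (isTwistedCover_map hMX (fun _ ↦ minpoly.isIntegrallyClosed_dvd hint) hx hr hι) j₀
  have hw := hpoint.evalEval_eq_zero
  have hmul := hpoint.eval_mul_map_snd
  rw [evalEval_map_mapRingHom] at hw hmul
  obtain ⟨χ, hχ, hχy⟩ := exists_extension_apply_eq (Q := Q) (eval₂RingHom_injective hz) hint hw
  refine ⟨χ, _, hχ, hzZ, fun t ht ↦ apply_eq_of_mem_adjoin hMX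
    (semiconj_eval₂RingHom hι hpoint.map_fst) hχ ?_ (hTy t ht)⟩
  have hχr := congrArg χ (hr j₀)
  rw [map_mul, hj₀, aeval_def, hom_eval₂, hχ, ← RingHom.comp_apply, hχ, hχy, ← hmul, eval_map]
    at hχr
  rw [hχy]
  exact mul_left_cancel₀ (by simpa [eval_map] using hpoint.eval_ne_zero) hχr

lemma exists_embedding_of_finset (h𝒰 : (𝒰 : Filter ℕ) ≤ Filter.atTop)
    (hq : ∀ n, ∀ᶠ i in 𝒰, n ≤ p i ^ a i) (hZ : IsConegligible 𝒰 p a Z)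
    (hτ : ∀ x, x ∈ periodicPts τ) (hQ : Semiconj (algebraMap A[X] Q) (mapRingHom τ) σQ)
    (hM : Semiconj (algebraMap Q M) σQ σM) (hι : Semiconj ι τ (ultraFrobenius 𝒰 K p a))
    (T : Finset M) :
    ∃ (χ : M →+* Ultraproduct 𝒰 K) (z : ∀ i, K i),
      χ.comp (algebraMap A[X] M) = eval₂RingHom ι (Ultraproduct.mk 𝒰 z) ∧
      (∀ᶠ i in 𝒰, z i ∈ Z i) ∧ ∀ t ∈ T, χ (σM t) = ultraFrobenius 𝒰 K p a (χ t) := by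
  classical
  have hpow (x : M) : ∃ n : ℕ, IsSeparable Q (x ^ ringExpChar Q ^ n) := by
    have : ExpChar (separableClosure Q M) (ringExpChar Q) :=
      expChar_of_injective_algebraMap (algebraMap Q (separableClosure Q M)).injective _
    obtain ⟨n, y, hy⟩ := IsPurelyInseparable.pow_mem (separableClosure Q M) (ringExpChar Q) x
    exact ⟨n, hy ▸ mem_separableClosure_iff.mp y.2⟩
  choose n hn using hpow
  obtain ⟨χ, z, hχ, hz, hχσ⟩ := exists_embedding_of_isSeparable h𝒰 hq hZ hτ hQ hM hι
    (T.image fun x ↦ x ^ ringExpChar Q ^ n x) (Finset.forall_mem_image.mpr fun x _ ↦ hn x)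
  refine ⟨χ, z, hχ, hz, fun t ht ↦ ?_⟩
  have : ExpChar (Ultraproduct 𝒰 K) (ringExpChar Q) :=
    expChar_of_injective_ringHom (χ.comp (algebraMap Q M)).injective _
  have hpow := hχσ _ (Finset.mem_image_of_mem _ ht)
  simp only [map_pow] at hpow
  exact (iterateFrobenius (Ultraproduct 𝒰 K) (ringExpChar Q) (n t)).injective hpow

theorem exists_embedding [Countable M] (h𝒰 : (𝒰 : Filter ℕ) ≤ Filter.atTop)
    (hq : ∀ n, ∀ᶠ i in 𝒰, n ≤ p i ^ a i) (hZ : IsConegligible 𝒰 p a Z)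
    (hτ : ∀ x, x ∈ periodicPts τ) (hQ : Semiconj (algebraMap A[X] Q) (mapRingHom τ) σQ)
    (hM : Semiconj (algebraMap Q M) σQ σM) (hι : Semiconj ι τ (ultraFrobenius 𝒰 K p a)) :
    ∃ (χ : M →+* Ultraproduct 𝒰 K) (z : ∀ i, K i),
      χ.comp (algebraMap A[X] M) = eval₂RingHom ι (Ultraproduct.mk 𝒰 z) ∧
      (∀ᶠ i in 𝒰, z i ∈ Z i) ∧ Semiconj χ σM (ultraFrobenius 𝒰 K p a) := by
  classical
  choose l hl using fun x ↦ Ultraproduct.mk_surjective (ι x)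
  obtain ⟨χ, w, hw, hP⟩ := exists_ringHom_of_finset (J := M × A) (R := M) (K := K) h𝒰
    (P := fun j i v ↦ v (σM j.1) = iterateFrobenius (K i) (p i) (a i) (v j.1) ∧
      v (algebraMap A[X] M (C j.2)) = l j.2 i ∧ v (algebraMap A[X] M X) ∈ Z i) (by
    intro s
    obtain ⟨χ, z, hχ, hz, hχσ⟩ :=
      exists_embedding_of_finset h𝒰 hq hZ hτ hQ hM hι (s.image Prod.fst)
    choose w hw using fun x ↦ Ultraproduct.mk_surjective (χ x)
    refine ⟨χ, w, hw, fun j hj ↦ ?_⟩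
    have hσ := (hw (σM j.1)).trans (hχσ _ (Finset.mem_image_of_mem _ hj))
    rw [← hw j.1, ultraFrobenius, Ultraproduct.map_mk, Ultraproduct.mk_eq] at hσ
    have hC : Ultraproduct.mk 𝒰 (w (algebraMap A[X] M (C j.2))) = Ultraproduct.mk 𝒰 (l j.2) := by
      rw [hw, hl, ← RingHom.comp_apply χ, hχ, coe_eval₂RingHom, eval₂_C]
    have hX : Ultraproduct.mk 𝒰 (w (algebraMap A[X] M X)) = Ultraproduct.mk 𝒰 z := by
      rw [hw, ← RingHom.comp_apply χ, hχ, coe_eval₂RingHom, eval₂_X]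
    rw [Ultraproduct.mk_eq] at hC hX
    filter_upwards [hσ, hC, hX, hz] with i hσ hC hX hz using ⟨hσ, hC, hX ▸ hz⟩)
  refine ⟨χ, w (algebraMap A[X] M X), ?_, ?_, fun t ↦ ?_⟩
  · ext x
    · simp only [RingHom.comp_apply, coe_eval₂RingHom, eval₂_C]
      rw [← hw, ← hl, Ultraproduct.mk_eq]
      filter_upwards [hP (0, x)] with i hi using hi.2.1
    · simp [hw]
  · filter_upwards [hP (0, 0)] with i hi using hi.2.2
  · rw [← hw, ← hw, ultraFrobenius, Ultraproduct.map_mk, Ultraproduct.mk_eq]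
    filter_upwards [hP (t, 0)] with i hi using hi.1

end EmbeddingTheorem

section AlgebraicClosureInExtension

lemma countable_polynomial (R : Type*) [Semiring R] [Countable R] : Countable R[X] :=
  Cardinal.mk_le_aleph0_iff.mp <|
    Polynomial.cardinalMk_le_max.trans (max_le Cardinal.mk_le_aleph0 le_rfl)

lemma countable_of_isAlgebraic (R : Type*) {S : Type*} [CommRing R] [IsDomain R] [CommRing S]
    [IsDomain S] [Algebra R S] [Module.IsTorsionFree R S] [Algebra.IsAlgebraic R S] [Countable R] :
    Countable S := by
  rw [← Cardinal.mk_le_aleph0_iff, ← Cardinal.lift_le_aleph0]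
  exact (Algebra.IsAlgebraic.lift_cardinalMk_le_max R S).trans
    (max_le (Cardinal.lift_le_aleph0.mpr Cardinal.mk_le_aleph0) le_rfl)

lemma countable_bot_subfield (W : Type*) [Field W] : Countable (⊥ : Subfield W) := by
  rw [← Subfield.closure_empty, ← Cardinal.mk_le_aleph0_iff]
  exact (Subfield.cardinalMk_closure_le_max _).trans (by simp)

lemma semiconj_lift {R Q W : Type*} [CommRing R] [IsDomain R] [Field Q] [Algebra R Q]
    [IsFractionRing R Q] [Field W] {θ : R →+* W} (hθ : Function.Injective θ) {τ : R →+* R}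
    {σQ : Q →+* Q} (hQ : Semiconj (algebraMap R Q) τ σQ) {σ : W →+* W} (h : Semiconj θ τ σ) :
    Semiconj (IsFractionRing.lift hθ : Q →+* W) σQ σ := by
  intro x
  obtain ⟨a, b, -, rfl⟩ := IsFractionRing.div_surjective (A := R) x
  simp only [map_div₀, ← hQ.eq, IsFractionRing.lift_algebraMap, h.eq]

variable {Q W : Type*} [Field Q] [Field W] [Algebra Q W] {σQ : Q →+* Q} {σ : W →+* W}

lemma exists_restrict_algebraicClosure (h : Semiconj (algebraMap Q W) σQ σ) :
    ∃ σM : algebraicClosure Q W →+* algebraicClosure Q W,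
      Semiconj (algebraMap Q (algebraicClosure Q W)) σQ σM ∧
      Semiconj (algebraMap (algebraicClosure Q W) W) σM σ := by
  have hmem (x : algebraicClosure Q W) : σ x ∈ algebraicClosure Q W := by
    obtain ⟨P, hP, hx⟩ := mem_algebraicClosure_iff.mp x.2
    exact mem_algebraicClosure_iff.mpr ⟨P.map σQ, (Polynomial.map_ne_zero_iff σQ.injective).mpr hP,
      by rw [aeval_map_apply h, hx, map_zero]⟩
  exact ⟨(σ.comp (algebraMap (algebraicClosure Q W) W)).codRestrict (algebraicClosure Q W) hmem,
    fun x ↦ Subtype.ext (h x), fun _ ↦ rfl⟩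

end AlgebraicClosureInExtension

/-- A correspondence between two countable algebraically closed subfields of `W` that are stable
under `σ`, with `σ` locally of finite order on them. The partial isomorphism from the one to the
other is encoded symmetrically, by two embeddings of a common abstract field. -/
structure Correspondence {W : Type u} [Field W] (σ : W →+* W) where
  /-- The abstract field. -/
  Carrier : Type u
  [field : Field Carrier]
  [isAlgClosed : IsAlgClosed Carrier]
  [countable : Countable Carrier]
  /-- The endomorphism of the abstract field induced by `σ`. -/
  endo : Carrier →+* Carrier
  mem_periodicPts (x : Carrier) : x ∈ periodicPts endo
  /-- The embedding onto the domain. -/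
  left : Carrier →+* W
  /-- The embedding onto the codomain. -/
  right : Carrier →+* W
  semiconj_left : Semiconj left endo σ
  semiconj_right : Semiconj right endo σ

namespace Correspondence

attribute [instance] field isAlgClosed countable

variable {W : Type u} [Field W] {σ : W →+* W} (S : Correspondence σ) {x y x' y' : W}

/-- The graph of the partial isomorphism. -/
def graph : Subring (W × W) := (S.left.prod S.right).range

/-- The inverse correspondence. -/
def swap : Correspondence σ where
  Carrier := S.Carrier
  endo := S.endo
  mem_periodicPts := S.mem_periodicPts
  left := S.right
  right := S.left
  semiconj_left := S.semiconj_right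
  semiconj_right := S.semiconj_left

variable {S}

lemma mem_graph_iff : (x, y) ∈ S.graph ↔ ∃ m, S.left m = x ∧ S.right m = y := by
  simp [graph, RingHom.mem_range, Prod.ext_iff]

lemma mem_graph_swap_iff : (x, y) ∈ S.swap.graph ↔ (y, x) ∈ S.graph := by
  rw [mem_graph_iff, mem_graph_iff]
  exact exists_congr fun m ↦ and_comm

lemma apply_eq_self_of_mem_graph (h : (x, y) ∈ S.graph) (hx : σ x = x) : σ y = y := by
  obtain ⟨m, rfl, rfl⟩ := mem_graph_iff.mp h
  rw [← S.semiconj_left.eq] at hx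
  rw [← S.semiconj_right.eq, S.left.injective hx]

lemma eq_iff_of_mem_graph (h : (x, y) ∈ S.graph) (h' : (x', y') ∈ S.graph) :
    x = x' ↔ y = y' := by
  obtain ⟨m, rfl, rfl⟩ := mem_graph_iff.mp h
  obtain ⟨m', rfl, rfl⟩ := mem_graph_iff.mp h'
  rw [S.left.injective.eq_iff, S.right.injective.eq_iff]

lemma nonempty_of_semiconj [IsAlgClosed W] {Q : Type u} [Field Q] [Countable Q] [Algebra Q W]
    {σQ : Q →+* Q} (hper : ∀ x, x ∈ periodicPts σQ) (h : Semiconj (algebraMap Q W) σQ σ) :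
    Nonempty (Correspondence σ) := by
  obtain ⟨σM, hσM, hσ⟩ := exists_restrict_algebraicClosure h
  exact ⟨{
    Carrier := algebraicClosure Q W
    isAlgClosed := (algebraicClosure.isAlgClosure Q W).isAlgClosed
    countable := countable_of_isAlgebraic Q
    endo := σM
    mem_periodicPts := mem_periodicPts_of_isAlgebraic hper hσM
    left := algebraMap _ W
    right := algebraMap _ W
    semiconj_left := hσ
    semiconj_right := hσ }⟩

instance [IsAlgClosed W] : Nonempty (Correspondence σ) := by
  have hbot : Semiconj (algebraMap (⊥ : Subfield W) W) (RingHom.id (⊥ : Subfield W)) σ := fun x ↦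
    ((bot_le : ⊥ ≤ σ.eqLocusField (RingHom.id W)) x.2).symm
  have := countable_bot_subfield W
  exact nonempty_of_semiconj
    (fun x ↦ Function.mk_mem_periodicPts one_pos (Function.is_periodic_id 1 x)) hbot

section Ultraproduct

variable {𝒰 : Ultrafilter ℕ} {K : ℕ → Type u} [∀ i, Field (K i)] [∀ i, IsAlgClosed (K i)]
  {p a : ℕ → ℕ} [∀ i, Fact (p i).Prime] [∀ i, CharP (K i) (p i)]

theorem exists_extension_of_notMem_range (h𝒰 : (𝒰 : Filter ℕ) ≤ Filter.atTop)
    (hq : ∀ n, ∀ᶠ i in 𝒰, n ≤ p i ^ a i) (S : Correspondence (ultraFrobenius 𝒰 K p a))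
    {c : Ultraproduct 𝒰 K} (hc : ultraFrobenius 𝒰 K p a c = c) (hcS : c ∉ Set.range S.left)
    {Z : ∀ i, Set (K i)} (hZ : IsConegligible 𝒰 p a Z) :
    ∃ S' : Correspondence (ultraFrobenius 𝒰 K p a), S.graph ≤ S'.graph ∧
      ∃ z, (c, Ultraproduct.mk 𝒰 z) ∈ S'.graph ∧ ∀ᶠ i in 𝒰, z i ∈ Z i := by
  let R := S.Carrier[X]
  let Q := FractionRing R
  let W := Ultraproduct 𝒰 K
  have hθ := eval₂RingHom_injective hcS
  have : Countable R := countable_polynomial S.Carrier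
  have : Algebra.IsAlgebraic R Q := IsLocalization.isAlgebraic Q (nonZeroDivisors R)
  have : Countable Q := countable_of_isAlgebraic R
  let σQ : Q →+* Q := IsFractionRing.map (j := mapRingHom S.endo)
    (map_injective S.endo S.endo.injective)
  have hQ : Semiconj (algebraMap R Q) (mapRingHom S.endo) σQ := fun P ↦
    (IsLocalization.map_eq _ P).symm
  let _ : Algebra Q W := (IsFractionRing.lift hθ).toAlgebra
  have hQW (P : R) : algebraMap Q W (algebraMap R Q P) = eval₂RingHom S.left c P :=
    IsFractionRing.lift_algebraMap hθ P
  let M := algebraicClosure Q W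
  have : IsAlgClosed M := (algebraicClosure.isAlgClosure Q W).isAlgClosed
  have : Countable M := countable_of_isAlgebraic Q
  obtain ⟨σM, hM, hMW⟩ := exists_restrict_algebraicClosure
    (semiconj_lift hθ hQ (semiconj_eval₂RingHom S.semiconj_left hc))
  let _ : Algebra R M := ((algebraMap Q M).comp (algebraMap R Q)).toAlgebra
  have : IsScalarTower R Q M := IsScalarTower.of_algebraMap_eq fun _ ↦ rfl
  obtain ⟨χ, z, hχ, hz, hχσ⟩ :=
    exists_embedding h𝒰 hq hZ S.mem_periodicPts hQ hM S.semiconj_right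
  refine ⟨{
    Carrier := M
    endo := σM
    mem_periodicPts := mem_periodicPts_of_isAlgebraic
      (mem_periodicPts_of_isFractionRing (mem_periodicPts_mapRingHom S.mem_periodicPts) hQ) hM
    left := algebraMap M W
    right := χ
    semiconj_left := hMW
    semiconj_right := hχσ }, ?_, z, ?_, hz⟩
  · rintro _ ⟨m, rfl⟩
    exact mem_graph_iff.mpr ⟨algebraMap R M (C m), (hQW _).trans (eval₂_C ..),
      (RingHom.congr_fun hχ _).trans (eval₂_C ..)⟩
  · exact mem_graph_iff.mpr ⟨algebraMap R M X, (hQW _).trans (eval₂_X ..),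
      (RingHom.congr_fun hχ _).trans (eval₂_X ..)⟩

end Ultraproduct

end Correspondence

section BackAndForth

variable {I : Type*} {F : I → Type*} [∀ i, Ring (F i)]

/-- A back-and-forth system for the ultraproduct of the rings `F i`: a family of subrings of
pairs of sequences, each being the graph of a partial isomorphism of the ultraproduct when read
along `𝒰`, that is closed under inversion and under extension by a prescribed element. -/
structure IsBackAndForth (𝒰 : Ultrafilter I) (𝒢 : Set (Subring ((∀ i, F i) × (∀ i, F i)))) :
    Prop where
  swap_mem : ∀ G ∈ 𝒢, G.comap RingEquiv.prodComm.toRingHom ∈ 𝒢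
  eventually_eq_iff : ∀ G ∈ 𝒢, ∀ x y x' y', (x, y) ∈ G → (x', y') ∈ G →
    ((∀ᶠ i in 𝒰, x i = x' i) ↔ ∀ᶠ i in 𝒰, y i = y' i)
  exists_extension : ∀ G ∈ 𝒢, ∀ x, ∃ H ∈ 𝒢, G ≤ H ∧ ∃ y, (x, y) ∈ H

variable {𝒰 : Ultrafilter I} {𝒢 : Set (Subring ((∀ i, F i) × (∀ i, F i)))}
  {G : Subring ((∀ i, F i) × (∀ i, F i))}

lemma IsBackAndForth.exists_extension_of_finite (h : IsBackAndForth 𝒰 𝒢) (hG : G ∈ 𝒢)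
    {J : Type*} [Finite J] (x : J → ∀ i, F i) :
    ∃ H ∈ 𝒢, G ≤ H ∧ ∃ y : J → ∀ i, F i, ∀ j, (x j, y j) ∈ H := by
  classical
  have := Fintype.ofFinite J
  suffices ∀ s : Finset J, ∃ H ∈ 𝒢, G ≤ H ∧ ∀ j ∈ s, ∃ y, (x j, y) ∈ H by
    obtain ⟨H, hH, hGH, hx⟩ := this Finset.univ
    exact ⟨H, hH, hGH, Classical.axiom_of_choice fun j ↦ hx j (Finset.mem_univ j)⟩
  intro s
  induction s using Finset.induction_on with
  | empty => exact ⟨G, hG, le_rfl, by simp⟩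
  | insert j s _ ih =>
    obtain ⟨H, hH, hGH, hs⟩ := ih
    obtain ⟨H', hH', hHH', hj⟩ := h.exists_extension H hH (x j)
    refine ⟨H', hH', hGH.trans hHH', Finset.forall_mem_insert .. |>.mpr ⟨hj, fun u hu ↦ ?_⟩⟩
    exact (hs u hu).imp fun y hy ↦ hHH' hy

variable [∀ i, Ring.CompatibleRing (F i)]

lemma realize_mem {α : Type*} (t : Language.ring.Term α) {x y : ∀ i, α → F i}
    (h : ∀ u, ((x · u), (y · u)) ∈ G) :
    ((fun i ↦ t.realize (x i)), fun i ↦ t.realize (y i)) ∈ G := by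
  induction t with
  | var u => exact h u
  | func g ts ih =>
    cases g with
    | add =>
      convert G.add_mem (ih 0) (ih 1) using 2 <;> ext i
      all_goals exact Ring.CompatibleRing.funMap_add _
    | mul =>
      convert G.mul_mem (ih 0) (ih 1) using 2 <;> ext i
      all_goals exact Ring.CompatibleRing.funMap_mul _
    | neg =>
      convert G.neg_mem (ih 0) using 2 <;> ext i
      all_goals exact Ring.CompatibleRing.funMap_neg _
    | zero =>
      convert G.zero_mem using 2 <;> ext i
      all_goals exact Ring.CompatibleRing.funMap_zero _
    | one =>
      convert G.one_mem using 2 <;> ext i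
      all_goals exact Ring.CompatibleRing.funMap_one _

variable {α : Type*}

lemma IsBackAndForth.eventually_realize_all (h : IsBackAndForth 𝒰 𝒢) {n : ℕ}
    {φ : Language.ring.BoundedFormula α (n + 1)}
    (hφ : ∀ G ∈ 𝒢, ∀ (v w : ∀ i, α → F i) (x y : ∀ i, Fin (n + 1) → F i),
      (∀ u, ((v · u), (w · u)) ∈ G) → (∀ u, ((x · u), (y · u)) ∈ G) →
      (∀ᶠ i in 𝒰, φ.Realize (v i) (x i)) → ∀ᶠ i in 𝒰, φ.Realize (w i) (y i))
    (hG : G ∈ 𝒢) {v w : ∀ i, α → F i} {x y : ∀ i, Fin n → F i}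
    (hvw : ∀ u, ((v · u), (w · u)) ∈ G) (hxy : ∀ u, ((x · u), (y · u)) ∈ G)
    (hx : ∀ᶠ i in 𝒰, φ.all.Realize (v i) (x i)) : ∀ᶠ i in 𝒰, φ.all.Realize (w i) (y i) := by
  have hwitness (i : I) : ∃ b : F i,
      φ.Realize (w i) (Fin.snoc (y i) b) → φ.all.Realize (w i) (y i) := by
    by_contra! hcon
    exact (hcon 0).2 fun b ↦ (hcon b).1
  choose b hb using hwitness
  obtain ⟨H, hH, hGH, a, ha⟩ := h.exists_extension _ (h.swap_mem G hG) b
  refine (hφ _ (h.swap_mem H hH) v w (fun i ↦ Fin.snoc (x i) (a i)) (fun i ↦ Fin.snoc (y i) (b i))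
    (fun u ↦ hGH (hvw u)) (fun u ↦ ?_) (hx.mono fun i hi ↦ hi (a i))).mono hb
  induction u using Fin.lastCases with
  | last =>
    simp only [Fin.snoc_last]
    exact ha
  | cast u =>
    simp only [Fin.snoc_castSucc]
    exact hGH (hxy u)

theorem IsBackAndForth.eventually_realize_iff (h : IsBackAndForth 𝒰 𝒢) {n : ℕ}
    (φ : Language.ring.BoundedFormula α n) (hG : G ∈ 𝒢) {v w : ∀ i, α → F i}
    {x y : ∀ i, Fin n → F i} (hvw : ∀ u, ((v · u), (w · u)) ∈ G)
    (hxy : ∀ u, ((x · u), (y · u)) ∈ G) :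
    (∀ᶠ i in 𝒰, φ.Realize (v i) (x i)) ↔ ∀ᶠ i in 𝒰, φ.Realize (w i) (y i) := by
  induction φ generalizing G v w with
  | falsum => rfl
  | equal t₁ t₂ =>
    have hsum : ∀ u, ((fun i ↦ Sum.elim (v i) (x i) u), fun i ↦ Sum.elim (w i) (y i) u) ∈ G :=
      Sum.forall.mpr ⟨hvw, hxy⟩
    exact h.eventually_eq_iff G hG _ _ _ _ (realize_mem t₁ hsum) (realize_mem t₂ hsum)
  | rel R => cases R
  | imp φ ψ ihφ ihψ =>
    simp only [Language.BoundedFormula.realize_imp]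
    rw [Ultrafilter.eventually_imp, Ultrafilter.eventually_imp, ihφ hG hvw hxy, ihψ hG hvw hxy]
  | all φ ih =>
    exact ⟨h.eventually_realize_all (fun G hG v w x y hvw hxy ↦ (ih hG hvw hxy).mp) hG hvw hxy,
      h.eventually_realize_all (fun G hG v w x y hvw hxy ↦ (ih hG hvw hxy).mp) (h.swap_mem G hG)
        hvw hxy⟩

end BackAndForth

section FixedPoints

lemma pow_natCard_eq_iff_mem_range {k W : Type*} [Field k] [Finite k] [Field W] (f : k →+* W)
    {b : W} : b ^ Nat.card k = b ↔ b ∈ Set.range f := by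
  have := Fintype.ofFinite k
  have hroots : (X ^ Fintype.card k - X : W[X]).roots = Finset.univ.val.map f := by
    have hsplits : (X ^ Fintype.card k - X : k[X]).Splits := by
      rw [splits_iff_card_roots, FiniteField.roots_X_pow_card_sub_X,
        FiniteField.X_pow_card_sub_X_natDegree_eq k Fintype.one_lt_card]
      rfl
    rw [← FiniteField.roots_X_pow_card_sub_X k, ← hsplits.roots_map_of_injective f.injective]
    simp only [Polynomial.map_sub, Polynomial.map_pow, map_X]
  have hne : (X ^ Fintype.card k - X : W[X]) ≠ 0 :=
    FiniteField.X_pow_card_sub_X_ne_zero W Fintype.one_lt_card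
  have hmem : b ∈ (X ^ Fintype.card k - X : W[X]).roots ↔ b ∈ Finset.univ.val.map f := by
    rw [hroots]
  simpa only [Nat.card_eq_fintype_card, mem_roots hne, IsRoot.def, eval_sub, eval_pow, eval_X,
    sub_eq_zero, Multiset.mem_map, Finset.mem_val, Finset.mem_univ, true_and, Set.mem_range]
    using hmem

variable {I : Type*} {𝒰 : Ultrafilter I} {F K : I → Type*} [∀ i, Field (F i)] [∀ i, Field (K i)]

/-- The class, in an ultraproduct of fields `K i`, of the image of a family of elements of the
fields `F i`. -/
noncomputable def Ultraproduct.mkMap (𝒰 : Ultrafilter I) (f : ∀ i, F i →+* K i) :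
    (∀ i, F i) →+* Ultraproduct 𝒰 K :=
  (Ultraproduct.map 𝒰 f).comp (Ultraproduct.mk 𝒰)

variable {f : ∀ i, F i →+* K i}

lemma Ultraproduct.mkMap_eq_iff {x y : ∀ i, F i} :
    mkMap 𝒰 f x = mkMap 𝒰 f y ↔ ∀ᶠ i in 𝒰, x i = y i :=
  (Ultraproduct.map 𝒰 f).injective.eq_iff.trans mk_eq

lemma ultraFrobenius_eq_self_iff {p a : I → ℕ} [∀ i, Fact (p i).Prime] [∀ i, CharP (K i) (p i)]
    (hf : ∀ i b, iterateFrobenius (K i) (p i) (a i) b = b ↔ b ∈ Set.range (f i))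
    {c : Ultraproduct 𝒰 K} :
    ultraFrobenius 𝒰 K p a c = c ↔ c ∈ Set.range (Ultraproduct.mkMap 𝒰 f) := by
  obtain ⟨z, rfl⟩ := Ultraproduct.mk_surjective c
  rw [ultraFrobenius, Ultraproduct.map_mk, Ultraproduct.mk_eq]
  constructor
  · intro h
    exact ⟨fun i ↦ Function.invFun (f i) (z i),
      Ultraproduct.mk_eq.mpr (h.mono fun i hi ↦ Function.invFun_eq ((hf i _).mp hi))⟩
  · rintro ⟨y, hy⟩
    exact (Ultraproduct.mk_eq.mp hy).mono fun i hi ↦ (hf i _).mpr ⟨y i, hi⟩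

end FixedPoints

section UnboundedSets

lemma exists_mk_notMem_range {𝒰 : Ultrafilter ℕ} (h𝒰 : (𝒰 : Filter ℕ) ≤ Filter.atTop)
    {K : ℕ → Type*} [∀ i, Field (K i)] {A : Type*} [Countable A] [Nonempty A]
    (ψ : A → Ultraproduct 𝒰 K) {S : ℕ → Type*} [∀ i, Nonempty (S i)] (g : ∀ i, S i → K i)
    {D : ∀ i, Set (S i)} (hD : ∀ n, ∀ᶠ i in 𝒰, n ≤ (g i '' D i).ncard) :
    ∃ b : ∀ i, S i, (∀ᶠ i in 𝒰, b i ∈ D i) ∧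
      Ultraproduct.mk 𝒰 (fun i ↦ g i (b i)) ∉ Set.range ψ := by
  classical
  choose y hy using fun x ↦ Ultraproduct.mk_surjective (ψ x)
  obtain ⟨b, hb⟩ := exists_forall_eventually_of_finset h𝒰
    (P := fun x i b ↦ b ∈ D i ∧ g i b ≠ y x i) fun s ↦ by
      filter_upwards [hD (s.card + 1)] with i hi
      obtain ⟨_, ⟨b, hb, rfl⟩, hbs⟩ := Set.exists_mem_notMem_of_ncard_lt_ncard
        (s := (s.image fun x ↦ y x i : Finset (K i))) (t := g i '' D i)
        (by rw [Set.ncard_coe_finset]; exact Finset.card_image_le.trans_lt hi)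
      exact ⟨b, fun x hx ↦ ⟨hb, fun h ↦ hbs (Finset.mem_image.mpr ⟨x, hx, h.symm⟩)⟩⟩
  refine ⟨b, (hb (Classical.arbitrary A)).mono fun i hi ↦ hi.1, ?_⟩
  rintro ⟨x, hx⟩
  rw [← hy, Ultraproduct.mk_eq] at hx
  obtain ⟨i, hi, hxi⟩ := ((hb x).and hx).exists
  exact hi.2 hxi.symm

lemma exists_coordinate_unbounded {I : Type*} {𝒰 : Ultrafilter I} {J : Type*} [Finite J]
    {F : I → Type*} [∀ i, Finite (F i)] {D : ∀ i, Set (J → F i)}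
    (hD : ∀ n, ∀ᶠ i in 𝒰, n ≤ (D i).ncard) :
    ∃ j, ∀ n, ∀ᶠ i in 𝒰, n ≤ ((fun x ↦ x j) '' D i).ncard := by
  have := Fintype.ofFinite J
  by_contra! hcon
  choose n hn using hcon
  have hsmall : ∀ᶠ i in 𝒰, ∀ j, ((fun x ↦ x j) '' D i).ncard < n j :=
    Filter.eventually_all.mpr hn
  obtain ⟨i, hsmall_i, hD_i⟩ := (hsmall.and (hD (∏ j, n j + 1))).exists
  have hpi : (D i).ncard ≤ ∏ j, ((fun x ↦ x j) '' D i).ncard := by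
    simp only [← Nat.card_coe_set_eq, ← Nat.card_pi]
    exact Nat.card_le_card_of_injective (fun x j ↦ ⟨x.1 j, x.1, x.2, rfl⟩) fun x y hxy ↦
      Subtype.ext (funext fun j ↦ congrArg Subtype.val (congrFun hxy j))
  have := Finset.prod_le_prod' fun j (_ : j ∈ Finset.univ) ↦ (hsmall_i j).le
  lia

end UnboundedSets

section CountingDichotomy

namespace Correspondence

variable {𝒰 : Ultrafilter ℕ} {F : ℕ → Type*} {K : ℕ → Type u} [∀ i, Field (F i)]
  [∀ i, Field (K i)] {p a : ℕ → ℕ} [∀ i, Fact (p i).Prime] [∀ i, CharP (K i) (p i)]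
  {f : ∀ i, F i →+* K i}

/-- The pairs of families of elements of the fields `F i` whose classes correspond under `S`. -/
noncomputable def pullback (S : Correspondence (ultraFrobenius 𝒰 K p a)) (f : ∀ i, F i →+* K i) :
    Subring ((∀ i, F i) × (∀ i, F i)) :=
  S.graph.comap (RingHom.prodMap (Ultraproduct.mkMap 𝒰 f) (Ultraproduct.mkMap 𝒰 f))

variable [∀ i, IsAlgClosed (K i)]

lemma exists_pullback_extension (h𝒰 : (𝒰 : Filter ℕ) ≤ Filter.atTop)
    (hq : ∀ n, ∀ᶠ i in 𝒰, n ≤ p i ^ a i)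
    (hf : ∀ i b, iterateFrobenius (K i) (p i) (a i) b = b ↔ b ∈ Set.range (f i))
    (S : Correspondence (ultraFrobenius 𝒰 K p a)) {x : ∀ i, F i}
    (hx : Ultraproduct.mkMap 𝒰 f x ∉ Set.range S.left) {B : ∀ i, Set (F i)}
    (hB : ∀ n, ∀ᶠ i in 𝒰, n * (B i).ncard ≤ p i ^ a i) :
    ∃ S' : Correspondence (ultraFrobenius 𝒰 K p a), S.graph ≤ S'.graph ∧
      ∃ y, (x, y) ∈ S'.pullback f ∧ ∀ᶠ i in 𝒰, y i ∉ B i := by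
  have hZ : IsConegligible 𝒰 p a fun i ↦ f i '' (B i)ᶜ := fun n ↦ (hB n).mono fun i hi ↦ by
    have hrange : {b | iterateFrobenius (K i) (p i) (a i) b = b} = Set.range (f i) :=
      Set.ext (hf i)
    rwa [hrange, Set.range_sdiff_image (f i).injective, compl_compl,
      Set.ncard_image_of_injective _ (f i).injective]
  obtain ⟨S', hSS', z, hz, hzB⟩ := exists_extension_of_notMem_range h𝒰 hq S
    ((ultraFrobenius_eq_self_iff hf).mpr ⟨x, rfl⟩) hx hZ
  let y (i : ℕ) : F i := Function.invFunOn (f i) (B i)ᶜ (z i)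
  have hyz : Ultraproduct.mkMap 𝒰 f y = Ultraproduct.mk 𝒰 z :=
    Ultraproduct.mk_eq.mpr (hzB.mono fun i hi ↦ Function.invFunOn_eq hi)
  refine ⟨S', hSS', y, ?_, hzB.mono fun i hi ↦ Function.invFunOn_mem hi⟩
  exact (congrArg (fun c ↦ (_, c) ∈ S'.graph) hyz).mpr hz

theorem isBackAndForth_range_pullback (h𝒰 : (𝒰 : Filter ℕ) ≤ Filter.atTop)
    (hq : ∀ n, ∀ᶠ i in 𝒰, n ≤ p i ^ a i)
    (hf : ∀ i b, iterateFrobenius (K i) (p i) (a i) b = b ↔ b ∈ Set.range (f i)) :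
    IsBackAndForth 𝒰
      (Set.range fun S : Correspondence (ultraFrobenius 𝒰 K p a) ↦ S.pullback f) where
  swap_mem := by
    rintro _ ⟨S, rfl⟩
    exact ⟨S.swap, Subring.ext fun _ ↦ mem_graph_swap_iff⟩
  eventually_eq_iff := by
    rintro _ ⟨S, rfl⟩ x y x' y' h h'
    exact Ultraproduct.mkMap_eq_iff.symm.trans
      ((eq_iff_of_mem_graph h h').trans Ultraproduct.mkMap_eq_iff)
  exists_extension := by
    rintro _ ⟨S, rfl⟩ x
    by_cases hx : Ultraproduct.mkMap 𝒰 f x ∈ Set.range S.left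
    · obtain ⟨m, hm⟩ := hx
      have hgraph : (Ultraproduct.mkMap 𝒰 f x, S.right m) ∈ S.graph :=
        mem_graph_iff.mpr ⟨m, hm, rfl⟩
      obtain ⟨y, hy⟩ := (ultraFrobenius_eq_self_iff hf).mp
        (apply_eq_self_of_mem_graph hgraph ((ultraFrobenius_eq_self_iff hf).mpr ⟨x, rfl⟩))
      exact ⟨_, ⟨S, rfl⟩, le_rfl, y, show (_, _) ∈ S.graph from hy ▸ hgraph⟩
    · obtain ⟨S', hSS', y, hxy, -⟩ := exists_pullback_extension h𝒰 hq hf S hx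
        (B := fun _ ↦ ∅) (by simp)
      exact ⟨_, ⟨S', rfl⟩, fun z hz ↦ hSS' hz, y, hxy⟩

variable [∀ i, Ring.CompatibleRing (F i)] {J : Type*} [Finite J]

lemma exists_lt_mul_ncard_image (h𝒰 : (𝒰 : Filter ℕ) ≤ Filter.atTop)
    (hq : ∀ n, ∀ᶠ i in 𝒰, n ≤ p i ^ a i)
    (hf : ∀ i b, iterateFrobenius (K i) (p i) (a i) b = b ↔ b ∈ Set.range (f i))
    (φ : Language.ring.Formula J)
    (S : Correspondence (ultraFrobenius 𝒰 K p a)) {b : ∀ i, J → F i}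
    (hb : ∀ᶠ i in 𝒰, φ.Realize (b i)) {j : J}
    (hbS : Ultraproduct.mkMap 𝒰 f (fun i ↦ b i j) ∉ Set.range S.left) :
    ∃ n, ∀ᶠ i in 𝒰, p i ^ a i < n * ((fun x ↦ x j) '' {x : J → F i | φ.Realize x}).ncard := by
  by_contra! hsmall
  have hsystem := isBackAndForth_range_pullback h𝒰 hq hf
  obtain ⟨S', -, y, hy, hyφ⟩ := exists_pullback_extension h𝒰 hq hf S hbS hsmall
  obtain ⟨_, hH, hle, w, hw⟩ := hsystem.exists_extension_of_finite ⟨S', rfl⟩ fun u i ↦ b i u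
  have hwy := (hsystem.eventually_eq_iff _ hH _ _ _ _ (hw j) (hle hy)).mp (.of_forall fun _ ↦ rfl)
  have hwφ := (hsystem.eventually_realize_iff φ hH (w := fun i u ↦ w u i) (x := fun _ ↦ default)
    (y := fun _ ↦ default) hw nofun).mp hb
  obtain ⟨i, hwy_i, hwφ_i, hyφ_i⟩ := (hwy.and (hwφ.and hyφ)).exists
  exact hyφ_i ⟨_, hwφ_i, hwy_i⟩

end Correspondence

theorem exists_natCard_lt_mul_ncard {𝒰 : Ultrafilter ℕ} (h𝒰 : (𝒰 : Filter ℕ) ≤ Filter.atTop)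
    {F : ℕ → Type u} [∀ i, Field (F i)] [∀ i, Finite (F i)] [∀ i, Ring.CompatibleRing (F i)]
    {J : Type*} [Finite J] (φ : Language.ring.Formula J)
    (hφ : ∀ n, ∀ᶠ i in 𝒰, n ≤ {x : J → F i | φ.Realize x}.ncard) :
    ∃ n, ∀ᶠ i in 𝒰, Nat.card (F i) < n * {x : J → F i | φ.Realize x}.ncard := by
  by_contra! hsmall
  have hcard (i) : ∃ p a, p.Prime ∧ CharP (F i) p ∧ Nat.card (F i) = p ^ a := by
    have := Fintype.ofFinite (F i)
    obtain ⟨p, hp, n, hprime, hn⟩ := FiniteField.card' (F i)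
    exact ⟨p, n, hprime, hp, Nat.card_eq_fintype_card.trans hn⟩
  choose p a hp hchar hpa using hcard
  have hfact (i) : Fact (p i).Prime := ⟨hp i⟩
  let K (i : ℕ) := AlgebraicClosure (F i)
  let f (i : ℕ) : F i →+* K i := algebraMap (F i) (K i)
  have hcharK (i) : CharP (K i) (p i) := charP_of_injective_algebraMap (f i).injective (p i)
  have hf (i) (b : K i) : iterateFrobenius (K i) (p i) (a i) b = b ↔ b ∈ Set.range (f i) := by
    rw [iterateFrobenius_def, ← hpa, pow_natCard_eq_iff_mem_range]
  have hq (n : ℕ) : ∀ᶠ i in 𝒰, n ≤ p i ^ a i := by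
    filter_upwards [hsmall n, hφ 1] with i hi hi'
    exact hpa i ▸ (Nat.le_mul_of_pos_right n hi').trans hi
  obtain ⟨j, hj⟩ := exists_coordinate_unbounded hφ
  obtain ⟨S⟩ : Nonempty (Correspondence (ultraFrobenius 𝒰 K p a)) := inferInstance
  obtain ⟨b, hb, hbS⟩ := exists_mk_notMem_range h𝒰 S.left (fun i x ↦ f i (x j))
    (D := fun i ↦ {x | φ.Realize x}) fun n ↦ (hj n).mono fun i hi ↦ by
      rwa [← Set.image_image (f i), Set.ncard_image_of_injective _ (f i).injective]
  obtain ⟨n, hn⟩ := S.exists_lt_mul_ncard_image h𝒰 hq hf φ hb hbS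
  obtain ⟨i, hi, hi'⟩ := (hn.and (hsmall n)).exists
  have := Set.ncard_image_le (f := fun x : J → F i ↦ x j) (Set.toFinite {x | φ.Realize x})
  rw [hpa] at hi'
  exact hi.not_ge ((Nat.mul_le_mul_left n this).trans hi')

end CountingDichotomy

end Felgner

theorem definable_count_dichotomy_general {m : ℕ} (φ : Language.ring.Formula (Fin m)) :
    ∃ C : ℝ, 0 < C ∧ ∀ (F : Type u) [Field F] [Finite F],
      (ringFormulaCount φ F : ℝ) ≤ C ∨ (Nat.card F : ℝ) / C ≤ ringFormulaCount φ F := by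
  by_contra! hcon
  choose F hfield hfinite hlarge hsmall using fun i : ℕ ↦ hcon (i + 1) (by positivity)
  let _ (i : ℕ) : Ring.CompatibleRing (F i) := Ring.compatibleRingOfRing (F i)
  have hcount (i : ℕ) : {x : Fin m → F i | φ.Realize x}.ncard = ringFormulaCount φ (F i) :=
    (Nat.card_coe_set_eq _).symm
  have hge := Nat.hyperfilter_le_atTop
  obtain ⟨n, hn⟩ := Felgner.exists_natCard_lt_mul_ncard hge φ fun n ↦ by
    filter_upwards [hge (Filter.eventually_ge_atTop n)] with i hi
    rw [hcount]
    exact_mod_cast (Nat.cast_le.mpr hi).trans ((lt_add_one _).trans (hlarge i)).le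
  obtain ⟨i, hcard, hi⟩ := (hn.and (hge (Filter.eventually_ge_atTop n))).exists
  rw [hcount] at hcard
  have hcard_lt : Nat.card (F i) < (i + 1) * ringFormulaCount φ (F i) :=
    hcard.trans_le (Nat.mul_le_mul_right _ (hi.trans i.le_succ))
  exact ((lt_div_iff₀' (by positivity)).mp (hsmall i)).not_gt (by exact_mod_cast hcard_lt)

/-- Dichotomy for definable sets over finite fields: for each formula `φ` with `m` free
variables there is `C > 0` so that over the field with `Q = p^k` elements the number `N` of
satisfying `m`-tuples is either at most `C`, or at least `Q / C`. -/
theorem definable_count_dichotomy (m : ℕ) (φ : Language.ring.Formula (Fin m)) :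
    ∃ C : ℝ, 0 < C ∧
      ∀ (p : ℕ) [Fact p.Prime], ∀ k : ℕ, 1 ≤ k →
        (ringFormulaCount φ (GaloisField p k) : ℝ) ≤ C ∨
        ((p : ℝ) ^ k) / C ≤ (ringFormulaCount φ (GaloisField p k) : ℝ) := by
  obtain ⟨C, hC, h⟩ := definable_count_dichotomy_general φ
  exact ⟨C, hC, fun p _ k hk ↦ by
    simpa [GaloisField.card p k (Nat.one_le_iff_ne_zero.mp hk)] using h (GaloisField p k)⟩
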